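/- Let X = L ∪ J ∪ R be a continuum in the class 𝒞 such that L and R are nondegenerate, L ∩ R = ∅, and L and R are local dendrites. Then: (1) if M ∈ 𝓜(X), then exactly one of the following holds: (a) M ⊆ J and M is either a nonempty finite set or a Cantor set; (b) M ⊆ L or M ⊆ R, and M is either a nonempty finite set or a cantoroid or a union of finitely many pairwise disjoint circles; (c) M ⊆ L ∪ R, M intersects both L and R, the sets M ∩ L and M ∩ R have the same cardinality, and M is either a finite set or a cantoroid or a union of finitely many pairwise disjoint circles. (2) Conversely, if M ⊆ X satisfies condition (a) or condition (b), then M ∈ 𝓜(X). -/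

import Mathlib

/-!
Let `J` be identified with `(0, 1)` by a coordinate `τ : X → [0, 1]` with `L = τ⁻¹(0)` and
`R = τ⁻¹(1)` (`ClassC.exists_coordinate`).

**Necessity.** As `J` accumulates on every point of the nondegenerate sets `L` and `R`, a connected
locally connected space can only be mapped into one of the three pieces `L`, `J`, `R`
(`IsCoordinate.range_subset`). Hence a selfmap `f` of `X` sends each piece into a piece, and a
minimal set of `f` lies in `J`, in `L`, in `R`, or is exchanged by `f` between `L` and `R`
(`IsCoordinate.minimal_subset`, `IsCoordinate.minimal_in_ends`). Its type comes from
`minimal_trichotomy`: in a compact locally path connected space with finitely many circles, an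
infinite minimal set `M` in which the degenerate components are not dense has, by Baire's theorem,
a component with interior, since there are only countably many nondegenerate components. Finitely
many components then fill `M` and are permuted cyclically, and the return map to each of them is
minimal. Each is a nondegenerate Peano continuum with finitely many circles, because disjoint
continua of diameter bounded from below are finite in number (`finite_of_disjoint_continua`), and
such a continuum with a minimal map is a circle (`isCircleSet_univ_of_minimalMap`). For the last
fact, call a point line-like if it has a neighbourhood that injects into the line. As minimal maps
are irreducible, the set of points which are not line-like is invariant, so it is empty or
everything. If all points are line-like, every circle is open, hence everything; and there is a
circle, as dendrites have the fixed point property. If no point is line-like, all circles lie in a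
nowhere dense path-connected set, and a complementary component of it is a dendrite touching that
set in one point; composed with the retraction onto that dendrite, an iterate of the map has a
fixed point, which is impossible. In `J`, where there are no circles and a cantoroid is a Cantor
set, the trichotomy gives (a).

**Sufficiency.** By the Hahn-Mazurkiewicz theorem there is a curve `γ : ℝ → X` filling `L` (and
another one passing through any compact part of `J`). If a minimal map of `M` has the form `γ ∘ t`
with `t : M → ℝ` continuous, then Tietze's theorem applied to `t` extends it to `X`
(`mem_MSpace_of_curve`). Finite sets are clear. For a cantoroid `M`, parametrise the curve by the
Cantor set and restrict to a closed set `Z` of parameters which is mapped irreducibly onto `M` by a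
map `q`. A symbolic construction by locally constant approximations, `exists_minimal_factor`,
yields a continuous `σ : M → Z` for which `q ∘ σ` is minimal. Finally, given disjoint circles in
`L`, each of them is a retract by a map which is constant away from a neighbourhood of the circle
(`exists_angle`); these maps extend to `X`, and combined with `γ` they give a selfmap of `X` that
permutes the circles cyclically and restricts to an irrational rotation of the appropriate angle
(`circles_mem_MSpace`). -/

open Set Topology

/-- A topological space has no isolated points if no singleton is open. -/
def NoIsolatedPoints (Y : Type*) [TopologicalSpace Y] : Prop :=
  ∀ y : Y, ¬ IsOpen ({y} : Set Y)

/-- `(M, f|_M)` is a minimal dynamical system with `f(M) = M`: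
`M` is nonempty, `f(M) = M`, and `M` has no nonempty proper closed subset
invariant under `f|_M`. -/
def MinimalSystemOn {Y : Type*} [TopologicalSpace Y] (f : Y → Y) (M : Set Y) : Prop :=
  M.Nonempty ∧ f '' M = M ∧
    ∀ N, N ⊆ M → N.Nonempty → IsClosed N → f '' N ⊆ N → N = M

/-- The system `𝓜(Y)` of all compact sets `M ⊆ Y` such that there is a continuous
`f : Y → Y` with `f(M) = M` and `(M, f|_M)` a minimal dynamical system. -/
def MSpace (Y : Type*) [TopologicalSpace Y] : Set (Set Y) :=
  {M | IsCompact M ∧ ∃ f : Y → Y, Continuous f ∧ MinimalSystemOn f M}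

/-- `𝓜(Z)` for a subspace `Z ⊆ X` (carrying the subspace topology),
viewed as a system of subsets of `X`. -/
def MSetIn {X : Type*} [TopologicalSpace X] (Z : Set X) : Set (Set X) :=
  {M | ∃ M' ∈ MSpace (↥Z), M = Subtype.val '' M'}

/-- `𝓜*(L; R)`: members of `𝓜(L ∪ R)` (`= 𝓜(L ⊔ R)` for disjoint `L, R`) such that
`M ∩ L` and `M ∩ R` have the same cardinality. -/
def MStarIn {X : Type*} [TopologicalSpace X] (L R : Set X) : Set (Set X) :=
  {M | M ∈ MSetIn (L ∪ R) ∧ Cardinal.mk ↥(M ∩ L) = Cardinal.mk ↥(M ∩ R)}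

/-- An arc: a set homeomorphic to `[0,1]`. -/
def IsArc {X : Type*} [TopologicalSpace X] (A : Set X) : Prop :=
  Nonempty (↥A ≃ₜ ↥(Set.Icc (0:ℝ) 1))

/-- A ray: a set homeomorphic to `[0,∞)`. -/
def IsRaySet {X : Type*} [TopologicalSpace X] (A : Set X) : Prop :=
  Nonempty (↥A ≃ₜ ↥(Set.Ici (0:ℝ)))

/-- A Cantor set: nonempty, compact, totally disconnected, without isolated points
(metrizability is inherited from the ambient space). -/
def IsCantorSet {X : Type*} [TopologicalSpace X] (M : Set X) : Prop :=
  M.Nonempty ∧ IsCompact M ∧ IsTotallyDisconnected M ∧ NoIsolatedPoints ↥M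

/-- A circle: a set homeomorphic to the unit circle `S¹ ⊆ ℂ`. -/
def IsCircleSet {X : Type*} [TopologicalSpace X] (C : Set X) : Prop :=
  Nonempty (↥C ≃ₜ ↥(Metric.sphere (0:ℂ) 1))

/-- A cantoroid: a nonempty compact (metrizable) set without isolated points in which
the union of the degenerate (singleton) connected components is dense. -/
def IsCantoroid {X : Type*} [TopologicalSpace X] (M : Set X) : Prop :=
  M.Nonempty ∧ IsCompact M ∧ NoIsolatedPoints ↥M ∧
    Dense {x : ↥M | connectedComponent x = {x}}

/-- A union of finitely many (at least one) pairwise disjoint circles. -/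
def FinUnionDisjCircles {X : Type*} [TopologicalSpace X] (M : Set X) : Prop :=
  ∃ (n : ℕ) (C : Fin n → Set X), 0 < n ∧ (∀ i, IsCircleSet (C i)) ∧
    Pairwise (Function.onFun Disjoint C) ∧ M = ⋃ i, C i

/-- A local dendrite: a locally connected continuum containing only finitely many circles. -/
def IsLocalDendrite {X : Type*} [TopologicalSpace X] (L : Set X) : Prop :=
  IsCompact L ∧ IsConnected L ∧ LocallyConnectedSpace ↥L ∧
    {C : Set X | C ⊆ L ∧ IsCircleSet C}.Finite

/-- The decomposition `X = L ∪ J ∪ R` witnessing that the continuum `X` belongs to the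
class `𝒞`: `J` is a free interval dense in `X`; `L` and `R` are locally connected
subcontinua of `X` disjoint from `J`; and there are rays `J_L, J_R` with
`J = J_L ∪ J_R` such that `L ∪ J_L` is a compactification of `J_L` and `R ∪ J_R` is a
compactification of `J_R`. -/
structure ClassC {X : Type*} [TopologicalSpace X] (L J R : Set X) : Prop where
  union_eq : L ∪ J ∪ R = Set.univ
  openJ : IsOpen J
  freeJ : Nonempty (↥J ≃ₜ ↥(Set.Ioo (0:ℝ) 1))
  denseJ : Dense J
  compactL : IsCompact L
  connL : IsConnected L
  locConnL : LocallyConnectedSpace ↥L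
  compactR : IsCompact R
  connR : IsConnected R
  locConnR : LocallyConnectedSpace ↥R
  disjLJ : Disjoint L J
  disjRJ : Disjoint R J
  rays : ∃ JL JR : Set X, JL ∪ JR = J ∧ IsRaySet JL ∧ IsRaySet JR ∧
    IsCompact (L ∪ JL) ∧ L ∪ JL ⊆ closure JL ∧
    IsCompact (R ∪ JR) ∧ R ∪ JR ⊆ closure JR

/-! ### Walks along a relation -/

/-- Two points joined by a chain are joined by a walk, indexed by an initial segment of `ℕ`. -/
lemma exists_walk {α : Type*} {r : α → α → Prop} {x y : α} (h : Relation.ReflTransGen r x y) :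
    ∃ (l : ℕ) (c : ℕ → α), c 0 = x ∧ c l = y ∧ ∀ i < l, r (c i) (c (i + 1)) := by
  induction h with
  | refl => exact ⟨0, fun _ => x, rfl, rfl, by simp⟩
  | @tail b z _ hbz ih =>
    obtain ⟨l, c, h0, hl, hc⟩ := ih
    refine ⟨l + 1, fun i => if i ≤ l then c i else z, by simp [h0], by simp, fun i hi => ?_⟩
    rcases Nat.lt_succ_iff_lt_or_eq.1 hi with h | rfl
    · simpa [h.le, Nat.succ_le_iff.2 h] using hc i h
    · simpa [hl] using hbz

lemma walk_append {α : Type*} {r : α → α → Prop} {l₁ l₂ : ℕ} {c₁ c₂ : ℕ → α}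
    (h₁ : ∀ i < l₁, r (c₁ i) (c₁ (i + 1))) (h₂ : ∀ i < l₂, r (c₂ i) (c₂ (i + 1)))
    (h : c₁ l₁ = c₂ 0) :
    ∃ c : ℕ → α, (∀ i ≤ l₁, c i = c₁ i) ∧ (∀ i, c (l₁ + i) = c₂ i) ∧
      ∀ i < l₁ + l₂, r (c i) (c (i + 1)) := by
  refine ⟨fun i => if i ≤ l₁ then c₁ i else c₂ (i - l₁), fun i hi => by simp [hi], fun i => ?_,
    fun i hi => ?_⟩
  · rcases Nat.eq_zero_or_pos i with rfl | hi
    · simp [h]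
    · have : ¬ (l₁ + i ≤ l₁) := by omega
      simp [this]
  · rcases lt_trichotomy i l₁ with hlt | rfl | hgt
    · simpa [hlt.le, Nat.succ_le_iff.2 hlt] using h₁ i hlt
    · have := h₂ 0 (by omega)
      simpa [h] using this
    · have e1 : ¬ i ≤ l₁ := by omega
      have e2 : ¬ i + 1 ≤ l₁ := by omega
      have := h₂ (i - l₁) (by omega)
      rw [show i - l₁ + 1 = i + 1 - l₁ by omega] at this
      simpa only [e1, e2, if_false] using this

/-- A walk with prescribed ends passing through a prescribed finite set. -/
lemma exists_walk_through {α : Type*} {r : α → α → Prop} (P : Set α) (hP : P.Finite) {x y : α}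
    (hxP : ∀ p ∈ P, Relation.ReflTransGen r x p) (hPx : ∀ p ∈ P, Relation.ReflTransGen r p x)
    (hxy : Relation.ReflTransGen r x y) :
    ∃ (l : ℕ) (c : ℕ → α), c 0 = x ∧ c l = y ∧ (∀ i < l, r (c i) (c (i + 1))) ∧
      ∀ p ∈ P, ∃ i ≤ l, c i = p := by
  induction P, hP using Set.Finite.induction_on with
  | empty =>
    obtain ⟨l, c, h0, hl, hc⟩ := exists_walk hxy
    exact ⟨l, c, h0, hl, hc, by simp⟩
  | @insert a s _ _ ih =>
    obtain ⟨l, c, h0, hl, hc, hs⟩ := ih (fun p hp => hxP p (mem_insert_of_mem _ hp))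
      (fun p hp => hPx p (mem_insert_of_mem _ hp))
    obtain ⟨l₁, c₁, h0₁, hl₁, hc₁⟩ := exists_walk (hxP a (mem_insert _ _))
    obtain ⟨l₂, c₂, h0₂, hl₂, hc₂⟩ := exists_walk (hPx a (mem_insert _ _))
    obtain ⟨d, hd1, hd2, hd⟩ := walk_append hc₁ hc₂ (by rw [hl₁, h0₂])
    have hdl : d (l₁ + l₂) = x := by rw [hd2, hl₂]
    obtain ⟨e, he1, he2, he⟩ := walk_append hd hc (by rw [hdl, h0])
    refine ⟨l₁ + l₂ + l, e, ?_, by rw [he2, hl], he, ?_⟩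
    · rw [he1 0 (by omega), hd1 0 (by omega), h0₁]
    · rintro p (rfl | hp)
      · exact ⟨l₁, by omega, by rw [he1 _ (by omega), hd1 _ le_rfl, hl₁]⟩
      · obtain ⟨i, hi, rfl⟩ := hs p hp
        exact ⟨l₁ + l₂ + i, by omega, he2 i⟩

/-! ### Peano continua are continuous images of the interval -/

/-- Compact locally connected metric spaces are uniformly locally connected. -/
lemma uniformly_locally_connected {Y : Type*} [MetricSpace Y] [CompactSpace Y]
    [LocallyConnectedSpace Y] {ε : ℝ} (hε : 0 < ε) :
    ∃ δ > 0, ∀ x y : Y, dist x y < δ →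
      ∃ E : Set Y, IsPreconnected E ∧ x ∈ E ∧ y ∈ E ∧ E ⊆ Metric.ball x ε := by
  have hU : ∀ z : Y, ∃ U : Set Y, U ⊆ Metric.ball z (ε / 2) ∧ IsOpen U ∧ z ∈ U ∧ IsConnected U :=
    fun z => locallyConnectedSpace_iff_subsets_isOpen_isConnected.1 inferInstance z _
      (Metric.ball_mem_nhds z (half_pos hε))
  choose U hUb hUo hzU hUc using hU
  obtain ⟨δ, hδ, h⟩ := lebesgue_number_lemma_of_metric (isCompact_univ (X := Y)) hUo
    (fun z _ => mem_iUnion.2 ⟨z, hzU z⟩)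
  refine ⟨δ, hδ, fun x y hxy => ?_⟩
  obtain ⟨z, hz⟩ := h x (mem_univ _)
  have hx := hz (Metric.mem_ball_self hδ)
  refine ⟨U z, (hUc z).isPreconnected, hx, hz (by rwa [Metric.mem_ball, dist_comm]), fun w hw => ?_⟩
  have h1 := Metric.mem_ball.1 (hUb z hw)
  have h2 := Metric.mem_ball.1 (hUb z hx)
  have := dist_triangle_right w x z
  exact Metric.mem_ball.2 (by linarith)

lemma reflTransGen_of_isPreconnected {Y : Type*} [MetricSpace Y] {E : Set Y}
    (hE : IsPreconnected E) {δ : ℝ} (hδ : 0 < δ) {x y : Y} (hx : x ∈ E) (hy : y ∈ E) :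
    Relation.ReflTransGen (fun a b => dist a b < δ ∧ a ∈ E ∧ b ∈ E) x y := by
  refine hE.induction₂' _ (fun a ha => ?_) (fun _ _ _ _ _ _ h h' => h.trans h') hx hy
  filter_upwards [mem_nhdsWithin_of_mem_nhds (Metric.ball_mem_nhds a hδ), self_mem_nhdsWithin]
    with b hb hbE
  exact ⟨.single ⟨by rw [dist_comm]; exact hb, ha, hbE⟩, .single ⟨hb, hbE, ha⟩⟩

/-- One refinement step in the construction of a curve filling a Peano continuum: a
`δ`-chain forming a `δ`-net is refined to a `δ'`-chain forming a `δ'`-net, each of the first `m`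
links being replaced by `N` links that stay `ε`-close to it. -/
lemma chain_refine {Y : Type*} [MetricSpace Y] [CompactSpace Y] {ε δ δ' : ℝ} (hδ : 0 < δ)
    (hδ' : 0 < δ')
    (hD : ∀ x y : Y, dist x y < δ →
      ∃ E : Set Y, IsPreconnected E ∧ x ∈ E ∧ y ∈ E ∧ E ⊆ Metric.ball x ε)
    (m : ℕ) (g : ℕ → Y) (hm : 0 < m) (hg : ∀ k, dist (g k) (g (k + 1)) < δ)
    (hnet : ∀ y, ∃ k < m, dist (g k) y < δ) (hconst : ∀ k, m ≤ k → g k = g m) :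
    ∃ (N : ℕ) (g' : ℕ → Y), 0 < N ∧ (∀ k, dist (g' k) (g' (k + 1)) < δ') ∧
      (∀ y, ∃ k < m * N, dist (g' k) y < δ') ∧ (∀ k, m * N ≤ k → g' k = g' (m * N)) ∧
      ∀ i, dist (g' i) (g (i / N)) < ε := by
  have key : ∀ k, ∃ (l : ℕ) (c : ℕ → Y), c 0 = g k ∧ c l = g (k + 1) ∧
      (∀ i < l, dist (c i) (c (i + 1)) < δ') ∧ (∀ i ≤ l, dist (c i) (g k) < ε) ∧
      ∀ y, dist (g k) y < δ → ∃ i ≤ l, dist (c i) y < δ' := by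
    intro k
    obtain ⟨F, hFs, hFfin, hF⟩ := TotallyBounded.exists_subset
      ((isCompact_univ (X := Y)).totallyBounded.subset (subset_univ (Metric.ball (g k) δ)))
      (Metric.dist_mem_uniformity hδ')
    have hr : ∀ p, dist (g k) p < δ → Relation.ReflTransGen
        (fun a b => dist a b < δ' ∧ a ∈ Metric.ball (g k) ε ∧ b ∈ Metric.ball (g k) ε) (g k) p ∧
        Relation.ReflTransGen
        (fun a b => dist a b < δ' ∧ a ∈ Metric.ball (g k) ε ∧ b ∈ Metric.ball (g k) ε) p (g k) ∧
        p ∈ Metric.ball (g k) ε := by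
      intro p hp
      obtain ⟨E, hE, h1, h2, h3⟩ := hD _ _ hp
      exact ⟨Relation.ReflTransGen.mono (fun a b h => ⟨h.1, h3 h.2.1, h3 h.2.2⟩) _ _
          (reflTransGen_of_isPreconnected hE hδ' h1 h2),
        Relation.ReflTransGen.mono (fun a b h => ⟨h.1, h3 h.2.1, h3 h.2.2⟩) _ _
          (reflTransGen_of_isPreconnected hE hδ' h2 h1), h3 h2⟩
    have hFd : ∀ p ∈ F, dist (g k) p < δ := fun p hp => by
      rw [dist_comm]; exact Metric.mem_ball.1 (hFs hp)
    obtain ⟨l, c, h0, hl, hc, hP⟩ := exists_walk_through F hFfin (fun p hp => (hr p (hFd p hp)).1)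
      (fun p hp => (hr p (hFd p hp)).2.1) (hr _ (hg k)).1
    refine ⟨l, c, h0, hl, fun i hi => (hc i hi).1, fun i hi => ?_, fun y hy => ?_⟩
    · rcases hi.lt_or_eq with h | rfl
      · exact (hc i h).2.1
      · rw [hl]; exact (hr _ (hg k)).2.2
    · have := hF (show y ∈ Metric.ball (g k) δ by rwa [Metric.mem_ball, dist_comm])
      simp only [mem_iUnion] at this
      obtain ⟨p, hp, hpy⟩ := this
      obtain ⟨i, hi, rfl⟩ := hP p hp
      exact ⟨i, hi, by rw [dist_comm]; exact hpy⟩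
  choose l c h0 hl hc hcε hcn using key
  obtain ⟨B, hB⟩ : ∃ B, ∀ k < m, l k < B := by
    refine ⟨(Finset.range m).sup l + 1, fun k hk => Nat.lt_succ_of_le ?_⟩
    exact Finset.le_sup (f := l) (Finset.mem_range.2 hk)
  have hN : 0 < B + 1 := Nat.succ_pos _
  -- `g'` runs through the refined link `c k` on the block `[(B + 1) k, (B + 1) (k + 1))` and
  -- waits at its end.
  let g' : ℕ → Y := fun i =>
    if i / (B + 1) < m then c (i / (B + 1)) (min (i % (B + 1)) (l (i / (B + 1)))) else g m
  have hg'out : ∀ i, m * (B + 1) ≤ i → g' i = g m := fun i hi => by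
    have : ¬ i / (B + 1) < m := by
      rw [not_lt]; exact (Nat.le_div_iff_mul_le hN).2 hi
    simp only [g', if_neg this]
  have hg'in : ∀ k < m, ∀ j < B + 1, g' (j + (B + 1) * k) = c k (min j (l k)) := fun k hk j hj => by
    have e1 : (j + (B + 1) * k) / (B + 1) = k := by
      rw [Nat.add_mul_div_left _ _ hN, Nat.div_eq_of_lt hj, zero_add]
    have e2 : (j + (B + 1) * k) % (B + 1) = j := by
      rw [Nat.add_mul_mod_self_left, Nat.mod_eq_of_lt hj]
    simp only [g', e1, e2, if_pos hk]
  have hdm : ∀ i, i = i % (B + 1) + (B + 1) * (i / (B + 1)) := fun i => (Nat.mod_add_div _ _).symm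
  have hg'start : ∀ k ≤ m, g' ((B + 1) * k) = g k := fun k hk => by
    rcases hk.lt_or_eq with h | rfl
    · have := hg'in k h 0 hN
      rw [zero_add] at this
      rw [this, Nat.zero_min, h0]
    · exact hg'out _ (by rw [mul_comm])
  refine ⟨B + 1, g', hN, fun i => ?_, fun y => ?_, fun k hk => ?_, fun i => ?_⟩
  · by_cases hi : i / (B + 1) < m
    · set k := i / (B + 1) with hk
      have hj : i % (B + 1) < B + 1 := Nat.mod_lt _ hN
      set j := i % (B + 1) with hjd
      have hi' : i = j + (B + 1) * k := hdm i
      rw [hi', hg'in k hi j hj]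
      by_cases hj' : j + 1 < B + 1
      · rw [show j + (B + 1) * k + 1 = (j + 1) + (B + 1) * k by ring, hg'in k hi _ hj']
        by_cases hjl : j < l k
        · rw [min_eq_left hjl.le, min_eq_left (Nat.succ_le_iff.2 hjl)]; exact hc k j hjl
        · rw [min_eq_right (by omega), min_eq_right (by omega), dist_self]; exact hδ'
      · have hjB : j = B := by omega
        rw [show j + (B + 1) * k + 1 = (B + 1) * (k + 1) by rw [hjB]; ring, hg'start _ hi,
          min_eq_right (by have := hB k hi; omega), hl, dist_self]
        exact hδ'
    · have h1 : m * (B + 1) ≤ i := (Nat.le_div_iff_mul_le hN).1 (not_lt.1 hi)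
      rw [hg'out _ h1, hg'out _ (by omega), dist_self]; exact hδ'
  · obtain ⟨k, hk, hky⟩ := hnet y
    obtain ⟨i, hi, hiy⟩ := hcn k y hky
    have hiB : i < B + 1 := by have := hB k hk; omega
    refine ⟨i + (B + 1) * k, ?_, by rwa [hg'in k hk i hiB, min_eq_left hi]⟩
    calc i + (B + 1) * k < (B + 1) + (B + 1) * k := by omega
      _ = (k + 1) * (B + 1) := by ring
      _ ≤ m * (B + 1) := Nat.mul_le_mul_right _ hk
  · rw [hg'out _ hk, hg'out _ le_rfl]
  · by_cases hi : i / (B + 1) < m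
    · simp only [g', if_pos hi]
      exact hcε _ _ (min_le_right _ _)
    · simp only [g', if_neg hi]
      rw [hconst _ (not_lt.1 hi), dist_self]
      obtain ⟨E, -, h1, -, h3⟩ := hD (g 0) (g 0) (by rwa [dist_self])
      exact Metric.pos_of_mem_ball (h3 h1)

/-- The Hahn-Mazurkiewicz theorem (the nontrivial direction). -/
theorem hahn_mazurkiewicz (Y : Type*) [MetricSpace Y] [CompactSpace Y] [ConnectedSpace Y]
    [LocallyConnectedSpace Y] :
    ∃ γ : ℝ → Y, Continuous γ ∧ γ '' Icc 0 1 = univ := by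
  have hD : ∀ n : ℕ, ∃ δ > 0, δ ≤ (1 / 2 : ℝ) ^ n ∧ ∀ x y : Y, dist x y < δ →
      ∃ E : Set Y, IsPreconnected E ∧ x ∈ E ∧ y ∈ E ∧ E ⊆ Metric.ball x ((1 / 2 : ℝ) ^ n) := by
    intro n
    have hp : (0 : ℝ) < (1 / 2 : ℝ) ^ n := by positivity
    obtain ⟨δ, hδ, h⟩ := uniformly_locally_connected (Y := Y) hp
    exact ⟨min δ _, lt_min hδ hp, min_le_right _ _, fun x y hxy =>
      h x y (hxy.trans_le (min_le_left _ _))⟩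
  -- A stage `P n` is a `D n`-dense, eventually constant chain with steps shorter than `D n`.
  choose D hD0 hDle hD using hD
  let P : ℕ → ℕ × (ℕ → Y) → Prop := fun n p => 0 < p.1 ∧
    (∀ k, dist (p.2 k) (p.2 (k + 1)) < D n) ∧ (∀ y, ∃ k < p.1, dist (p.2 k) y < D n) ∧
    ∀ k, p.1 ≤ k → p.2 k = p.2 p.1
  have hP0 : ∃ p, P 0 p := by
    obtain ⟨F, -, hFfin, hF⟩ := TotallyBounded.exists_subset
      ((isCompact_univ (X := Y)).totallyBounded) (Metric.dist_mem_uniformity (hD0 0))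
    have hr : ∀ x y : Y, Relation.ReflTransGen (fun a b => dist a b < D 0) x y := fun x y =>
      Relation.ReflTransGen.mono (fun a b h => h.1) _ _
        (reflTransGen_of_isPreconnected isPreconnected_univ (hD0 0) (mem_univ x) (mem_univ y))
    obtain ⟨x₀⟩ : Nonempty Y := inferInstance
    obtain ⟨l, c, -, -, hc, hcF⟩ := exists_walk_through F hFfin (fun p _ => hr x₀ p)
      (fun p _ => hr p x₀) (hr x₀ x₀)
    refine ⟨(l + 1, fun i => c (min i l)), Nat.succ_pos _, fun k => ?_, fun y => ?_, fun k hk => ?_⟩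
    · by_cases hk : k < l
      · simpa [min_eq_left hk.le, min_eq_left (Nat.succ_le_iff.2 hk)] using hc k hk
      · have h1 : min k l = l := by omega
        have h2 : min (k + 1) l = l := by omega
        simp only [h1, h2, dist_self]; exact hD0 0
    · have := hF (mem_univ y)
      simp only [mem_iUnion] at this
      obtain ⟨p, hp, hpy⟩ := this
      obtain ⟨i, hi, rfl⟩ := hcF p hp
      refine ⟨i, Nat.lt_succ_of_le hi, ?_⟩
      simp only [min_eq_left hi]
      rw [dist_comm]; exact hpy
    · have h1 : min k l = l := by simp only at hk; omega
      simp only [h1]; simp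
  have hstep : ∀ n (p : {p // P n p}), ∃ q : {q // P (n + 1) q}, ∃ N, 0 < N ∧
      q.1.1 = p.1.1 * N ∧ ∀ i, dist (q.1.2 i) (p.1.2 (i / N)) < (1 / 2 : ℝ) ^ n := by
    rintro n ⟨⟨m, g⟩, hm, hg, hnet, hconst⟩
    obtain ⟨N, g', hN, h1, h2, h3, h4⟩ :=
      chain_refine (hD0 n) (hD0 (n + 1)) (hD n) m g hm hg hnet hconst
    exact ⟨⟨(m * N, g'), Nat.mul_pos hm hN, h1, h2, h3⟩, N, hN, rfl, h4⟩
  choose nxt N hN hmul hdist using hstep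
  obtain ⟨p0, hp0⟩ := hP0
  let S : ∀ n, {p // P n p} := fun n => Nat.rec ⟨p0, hp0⟩ (fun n s => nxt n s) n
  have hS : ∀ n, S (n + 1) = nxt n (S n) := fun n => rfl
  let m : ℕ → ℕ := fun n => (S n).1.1
  let g : ℕ → ℕ → Y := fun n => (S n).1.2
  have hm0 : ∀ n, 0 < m n := fun n => (S n).2.1
  have hgc : ∀ n k, dist (g n k) (g n (k + 1)) < D n := fun n => (S n).2.2.1
  have hgn : ∀ n y, ∃ k < m n, dist (g n k) y < D n := fun n => (S n).2.2.2.1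
  -- The step functions of the successive stages converge uniformly to the curve.
  let G : ℕ → ℝ → Y := fun n t => g n ⌊t * m n⌋₊
  have hG : ∀ t n, dist (G n t) (G (n + 1) t) ≤ 1 * (1 / 2 : ℝ) ^ n := by
    intro t n
    have h1 : m (n + 1) = m n * N n (S n) := hmul n (S n)
    have h2 := hdist n (S n) ⌊t * m (n + 1)⌋₊
    have h3 : ⌊t * m (n + 1)⌋₊ / N n (S n) = ⌊t * m n⌋₊ := by
      rw [← Nat.floor_div_natCast, h1]
      congr 1
      have : ((N n (S n) : ℕ) : ℝ) ≠ 0 := Nat.cast_ne_zero.2 (hN n (S n)).ne'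
      push_cast
      field_simp
    rw [h3] at h2
    rw [dist_comm, one_mul]
    exact h2.le
  have hlim : ∀ t, ∃ a, Filter.Tendsto (fun n => G n t) Filter.atTop (𝓝 a) := fun t =>
    cauchySeq_tendsto_of_complete (cauchySeq_of_le_geometric (1 / 2 : ℝ) 1 (by norm_num) (hG t))
  choose γ hγ using hlim
  have hγd : ∀ t n, dist (G n t) (γ t) ≤ 2 * (1 / 2 : ℝ) ^ n := fun t n => by
    have := dist_le_of_le_geometric_of_tendsto (1 / 2 : ℝ) 1 (by norm_num) (hG t) (hγ t) n
    refine this.trans (le_of_eq ?_)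
    ring
  have hpow : ∀ ε > (0 : ℝ), ∃ n : ℕ, 5 * (1 / 2 : ℝ) ^ n < ε := fun ε hε => by
    obtain ⟨n, hn⟩ := exists_pow_lt_of_lt_one (show (0 : ℝ) < ε / 5 by positivity)
      (show (1 / 2 : ℝ) < 1 by norm_num)
    exact ⟨n, by linarith⟩
  have hcont : Continuous γ := by
    rw [Metric.continuous_iff]
    intro s ε hε
    obtain ⟨n, hn⟩ := hpow ε hε
    have hmr : (0 : ℝ) < m n := Nat.cast_pos.2 (hm0 n)
    refine ⟨1 / m n, by positivity, fun t ht => ?_⟩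
    have hts : |t * m n - s * m n| < 1 := by
      rw [← sub_mul, abs_mul, abs_of_pos hmr]
      rw [Real.dist_eq] at ht
      calc |t - s| * m n < 1 / m n * m n := by gcongr
        _ = 1 := by field_simp
    have hcl : ∀ a b : ℝ, a ≤ b → b < a + 1 → dist (g n ⌊a⌋₊) (g n ⌊b⌋₊) < D n := by
      intro a b hab hba
      have h1 : ⌊a⌋₊ ≤ ⌊b⌋₊ := Nat.floor_mono hab
      have h2 : ⌊b⌋₊ ≤ ⌊a⌋₊ + 1 := by
        rcases lt_or_ge a 0 with ha | ha
        · have : ⌊b⌋₊ = 0 := Nat.floor_eq_zero.2 (by linarith)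
          omega
        · rw [← Nat.floor_add_one ha]; exact Nat.floor_mono hba.le
      rcases Nat.eq_or_lt_of_le h1 with h | h
      · rw [h, dist_self]; exact hD0 n
      · rw [show ⌊b⌋₊ = ⌊a⌋₊ + 1 by omega]; exact hgc n _
    have hd : dist (G n t) (G n s) < D n := by
      rw [abs_lt] at hts
      rcases le_total (t * m n) (s * m n) with h | h
      · exact hcl _ _ h (by linarith)
      · rw [dist_comm]; exact hcl _ _ h (by linarith)
    have h1 := hγd t n
    have h2 := hγd s n
    have h3 := hDle n
    have := dist_triangle4 (γ t) (G n t) (G n s) (γ s)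
    rw [dist_comm (γ t) (G n t)] at this
    linarith
  refine ⟨γ, hcont, ?_⟩
  refine eq_univ_of_forall fun y => ?_
  have hcl : IsClosed (γ '' Icc 0 1) := (isCompact_Icc.image hcont).isClosed
  rw [← hcl.closure_eq, Metric.mem_closure_iff]
  intro ε hε
  obtain ⟨n, hn⟩ := hpow ε hε
  obtain ⟨k, hk, hky⟩ := hgn n y
  have hmr : (0 : ℝ) < m n := Nat.cast_pos.2 (hm0 n)
  have hkm : (k : ℝ) ≤ m n := Nat.cast_le.2 hk.le
  refine ⟨γ (k / m n), ⟨k / m n, ⟨by positivity, (div_le_one hmr).2 hkm⟩, rfl⟩, ?_⟩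
  have h1 : G n (k / m n) = g n k := by
    simp only [G]
    rw [div_mul_cancel₀ _ hmr.ne', Nat.floor_natCast]
  have h2 := hγd (k / m n) n
  have h3 := hDle n
  rw [h1] at h2
  have := dist_triangle y (g n k) (γ (k / m n))
  rw [dist_comm y (g n k)] at this
  linarith

lemma locallyPathConnectedSpace_of_peano (Y : Type*) [MetricSpace Y] [CompactSpace Y]
    [ConnectedSpace Y] [LocallyConnectedSpace Y] : LocallyPathConnectedSpace Y := by
  obtain ⟨γ, hγ, hs⟩ := hahn_mazurkiewicz Y
  have hc : Continuous (fun t : Icc (0 : ℝ) 1 => γ t) := hγ.comp continuous_subtype_val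
  have hsurj : Function.Surjective (fun t : Icc (0 : ℝ) 1 => γ t) := fun y => by
    obtain ⟨t, ht, rfl⟩ : y ∈ γ '' Icc 0 1 := hs ▸ mem_univ y
    exact ⟨⟨t, ht⟩, rfl⟩
  have : LocallyPathConnectedSpace (Icc (0 : ℝ) 1) := (convex_Icc 0 1).locallyPathConnectedSpace
  exact (hc.isClosedMap.isQuotientMap hc hsurj).locallyPathConnectedSpace

/-! ### From paths to arcs -/

/-- A reparametrisation `c`, constant on the intervals where the path is constant, and increasing
between times at which the path has different values. -/
lemma exists_monotone_reparam {Y : Type*} [MetricSpace Y] {γ : ℝ → Y}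
    (hγ : UniformContinuous γ) {B : ℝ} (hB : ∀ s t, dist (γ s) (γ t) ≤ B) :
    ∃ c : ℝ → ℝ, Continuous c ∧ Monotone c ∧
      (∀ t t', t ≤ t' → (∀ u ∈ Icc t t', γ u = γ t) → c t = c t') ∧
      ∀ t t', t ≤ t' → γ t ≠ γ t' → c t < c t' := by
  -- `f q t` is the largest distance from `γ q` attained on `[q, t]`; the function `c` is a
  -- weighted sum of the `f q` over rational `q`.
  let f : ℝ → ℝ → ℝ := fun q t => sSup ((fun u => dist (γ u) (γ q)) '' Icc q (max q t))
  have hbdd : ∀ q t, BddAbove ((fun u => dist (γ u) (γ q)) '' Icc q (max q t)) := fun q t =>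
    ⟨B, by rintro _ ⟨u, -, rfl⟩; exact hB _ _⟩
  have hne : ∀ q t, ((fun u => dist (γ u) (γ q)) '' Icc q (max q t)).Nonempty := fun q t =>
    ⟨_, q, ⟨le_rfl, le_max_left _ _⟩, rfl⟩
  have hle : ∀ q t u, q ≤ u → u ≤ t → dist (γ u) (γ q) ≤ f q t := fun q t u h1 h2 =>
    le_csSup (hbdd q t) ⟨u, ⟨h1, h2.trans (le_max_right _ _)⟩, rfl⟩
  have hub : ∀ q t b, (∀ u ∈ Icc q (max q t), dist (γ u) (γ q) ≤ b) → f q t ≤ b := fun q t b h =>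
    csSup_le (hne q t) (by rintro _ ⟨u, hu, rfl⟩; exact h u hu)
  have hf0 : ∀ q t, 0 ≤ f q t := fun q t =>
    le_csSup (hbdd q t) ⟨q, ⟨le_rfl, le_max_left _ _⟩, by simp⟩
  have hfB : ∀ q t, f q t ≤ B := fun q t => hub q t B fun u _ => hB _ _
  have hmono : ∀ q, Monotone (f q) := fun q t t' h =>
    csSup_le_csSup (hbdd q t') (hne q t)
      (image_mono (Icc_subset_Icc le_rfl (max_le_max le_rfl h)))
  have hosc : ∀ q t t' ε, t ≤ t' → 0 ≤ ε →
      (∀ u ∈ Icc t t', ∀ v ∈ Icc t t', dist (γ u) (γ v) ≤ ε) → f q t' ≤ f q t + ε := by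
    intro q t t' ε htt' hε h
    refine hub _ _ _ fun u hu => ?_
    rcases le_or_gt u (max q t) with h1 | h1
    · have : dist (γ u) (γ q) ≤ f q t := le_csSup (hbdd q t) ⟨u, ⟨hu.1, h1⟩, rfl⟩
      linarith
    · have hqt : q ≤ t' := by
        by_contra hcon
        rw [max_eq_left (not_le.1 hcon).le] at hu
        exact absurd hu.2 (not_le.2 ((le_max_left q t).trans_lt h1))
      rw [max_eq_right hqt] at hu
      have h2 : dist (γ (max q t)) (γ q) ≤ f q t :=
        le_csSup (hbdd q t) ⟨max q t, ⟨le_max_left _ _, le_rfl⟩, rfl⟩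
      have h3 := h u ⟨(le_max_right q t).trans h1.le, hu.2⟩ (max q t)
        ⟨le_max_right _ _, max_le hqt htt'⟩
      have := dist_triangle (γ u) (γ (max q t)) (γ q)
      linarith
  have hcont : ∀ q, Continuous (f q) := by
    intro q
    rw [Metric.continuous_iff]
    intro t ε hε
    obtain ⟨δ, hδ, h⟩ := Metric.uniformContinuous_iff.1 hγ (ε / 2) (half_pos hε)
    have key : ∀ a b, a ≤ b → b - a < δ → dist (f q a) (f q b) < ε := by
      intro a b hab hd
      have h1 := hosc q a b (ε / 2) hab (half_pos hε).le fun u hu v hv => (h (by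
        rw [Real.dist_eq, abs_lt]; constructor <;> linarith [hu.1, hu.2, hv.1, hv.2])).le
      have h2 := hmono q hab
      rw [Real.dist_eq, abs_lt]
      constructor <;> linarith
    refine ⟨δ, hδ, fun s hs => ?_⟩
    rw [Real.dist_eq, abs_lt] at hs
    rcases le_total s t with h1 | h1
    · exact key s t h1 (by linarith)
    · rw [dist_comm]; exact key t s h1 (by linarith)
  have hB0 : 0 ≤ B := dist_nonneg.trans (hB 0 0)
  obtain ⟨e, he⟩ := exists_surjective_nat ℚ
  let c : ℝ → ℝ := fun t => ∑' k : ℕ, (1 / 2 : ℝ) ^ k * f (e k) t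
  have hgeo : Summable fun k : ℕ => (1 / 2 : ℝ) ^ k * B :=
    (summable_geometric_of_lt_one (by norm_num) (by norm_num)).mul_right _
  have hsum : ∀ t, Summable fun k : ℕ => (1 / 2 : ℝ) ^ k * f (e k) t := fun t =>
    Summable.of_nonneg_of_le (fun k => mul_nonneg (by positivity) (hf0 _ _))
      (fun k => mul_le_mul_of_nonneg_left (hfB _ _) (by positivity)) hgeo
  refine ⟨c, ?_, ?_, ?_, ?_⟩
  · refine continuous_tsum (fun k => continuous_const.mul (hcont _)) hgeo fun k t => ?_
    rw [Real.norm_of_nonneg (mul_nonneg (by positivity) (hf0 _ _))]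
    exact mul_le_mul_of_nonneg_left (hfB _ _) (by positivity)
  · exact fun t t' h => (hsum t).tsum_le_tsum
      (fun k => mul_le_mul_of_nonneg_left (hmono _ h) (by positivity)) (hsum t')
  · intro t t' htt' h
    refine tsum_congr fun k => ?_
    congr 1
    refine le_antisymm (hmono _ htt') ?_
    have := hosc (e k) t t' 0 htt' le_rfl fun u hu v hv => by rw [h u hu, h v hv, dist_self]
    linarith
  · intro t t' htt' hne'
    have hd : 0 < dist (γ t) (γ t') := dist_pos.2 hne'
    obtain ⟨δ, hδ, h⟩ := Metric.uniformContinuous_iff.1 hγ (dist (γ t) (γ t') / 4) (by positivity)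
    obtain ⟨q, hq1, hq2⟩ := exists_rat_btwn (show t - δ / 2 < t by linarith)
    obtain ⟨k, hk⟩ := he q
    refine (hsum t).tsum_lt_tsum (i := k)
      (fun k => mul_le_mul_of_nonneg_left (hmono _ htt') (by positivity)) ?_ (hsum t')
    refine mul_lt_mul_of_pos_left ?_ (by positivity)
    rw [hk]
    have h1 : f q t ≤ dist (γ t) (γ t') / 4 := hub _ _ _ fun u hu => by
      rw [max_eq_right hq2.le] at hu
      exact (h (by rw [Real.dist_eq, abs_lt]; constructor <;> linarith [hu.1, hu.2])).le
    have h2 := hle q t' t' (hq2.le.trans htt') le_rfl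
    have h3 : dist (γ t) (γ q) < dist (γ t) (γ t') / 4 :=
      h (by rw [Real.dist_eq, abs_lt]; constructor <;> linarith)
    have := dist_triangle (γ t) (γ q) (γ t')
    rw [dist_comm (γ q) (γ t')] at this
    linarith

/-- A path whose fibres are intervals can be reparametrised to an arc. -/
lemma exists_arc_of_interval_fibers {Y : Type*} [MetricSpace Y] {γ : ℝ → Y}
    (hγ : UniformContinuous γ) {B : ℝ} (hB : ∀ s t, dist (γ s) (γ t) ≤ B)
    (hfib : ∀ t t', t ≤ t' → γ t = γ t' → ∀ u ∈ Icc t t', γ u = γ t) (h01 : γ 0 ≠ γ 1) :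
    ∃ α : ℝ → Y, Continuous α ∧ InjOn α (Icc 0 1) ∧ α 0 = γ 0 ∧ α 1 = γ 1 ∧
      α '' Icc 0 1 ⊆ γ '' Icc 0 1 := by
  obtain ⟨c, hc, hmono, hconst, hstrict⟩ := exists_monotone_reparam hγ hB
  have h01' : c 0 < c 1 := hstrict 0 1 zero_le_one h01
  have hcinj : ∀ s t, c s = c t → γ s = γ t := by
    intro s t h
    by_contra hne
    rcases le_total s t with h' | h'
    · exact (hstrict s t h' hne).ne h
    · exact (hstrict t s h' (Ne.symm hne)).ne h.symm
  let C : ℝ → ℝ := fun t => (c t - c 0) / (c 1 - c 0)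
  have hd : 0 < c 1 - c 0 := sub_pos.2 h01'
  have hC : Continuous C := (hc.sub continuous_const).div_const _
  have hC0 : C 0 = 0 := by simp [C]
  have hC1 : C 1 = 1 := by simp only [C]; exact div_self hd.ne'
  have hCinj : ∀ s t, C s = C t → γ s = γ t := fun s t h => hcinj s t (by
    simp only [C] at h
    have := (div_left_inj' hd.ne').1 h
    linarith)
  have hCmem : ∀ t ∈ Icc (0 : ℝ) 1, C t ∈ Icc (0 : ℝ) 1 := fun t ht =>
    ⟨div_nonneg (sub_nonneg.2 (hmono ht.1)) hd.le,
      (div_le_one hd).2 (sub_le_sub_right (hmono ht.2) _)⟩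
  have hγC : ∀ s t, γ s = γ t → C s = C t := by
    have key : ∀ s t, s ≤ t → γ s = γ t → C s = C t := fun s t hst h => by
      simp only [C, hconst s t hst (hfib s t hst h)]
    intro s t h
    rcases le_total s t with h' | h'
    · exact key s t h' h
    · exact (key t s h' h.symm).symm
  have hsurj : ∀ s ∈ Icc (0 : ℝ) 1, ∃ t ∈ Icc (0 : ℝ) 1, C t = s := by
    intro s hs
    have := intermediate_value_Icc (zero_le_one (α := ℝ)) hC.continuousOn
    rw [hC0, hC1] at this
    exact this hs
  choose! T hT hCT using hsurj
  -- The path factors through the quotient map `Q`, and injectively so.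
  let Q : Icc (0 : ℝ) 1 → Icc (0 : ℝ) 1 := fun t => ⟨C t, hCmem t t.2⟩
  have hQc : Continuous Q := (hC.comp continuous_subtype_val).subtype_mk _
  have hQs : Function.Surjective Q := fun s => ⟨⟨T s, hT s s.2⟩, Subtype.ext (hCT s s.2)⟩
  have hQ := hQc.isClosedMap.isQuotientMap hQc hQs
  let a : Icc (0 : ℝ) 1 → Y := fun s => γ (T s)
  have ha : Continuous a := by
    rw [hQ.continuous_iff]
    have : a ∘ Q = fun t : Icc (0 : ℝ) 1 => γ t := funext fun t =>
      hCinj _ _ (hCT _ (hCmem t t.2))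
    rw [this]
    exact hγ.continuous.comp continuous_subtype_val
  have hproj : ∀ s ∈ Icc (0 : ℝ) 1, IccExtend zero_le_one a s = γ (T s) := fun s hs => by
    rw [IccExtend_of_mem _ _ hs]
  refine ⟨IccExtend zero_le_one a, ha.Icc_extend', ?_, ?_, ?_, ?_⟩
  · intro s hs s' hs' h
    rw [hproj s hs, hproj s' hs'] at h
    rw [← hCT s hs, ← hCT s' hs']
    exact hγC _ _ h
  · rw [hproj 0 ⟨le_rfl, zero_le_one⟩]
    exact hCinj _ _ (by rw [hCT 0 ⟨le_rfl, zero_le_one⟩, hC0])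
  · rw [hproj 1 ⟨zero_le_one, le_rfl⟩]
    exact hCinj _ _ (by rw [hCT 1 ⟨zero_le_one, le_rfl⟩, hC1])
  · rintro _ ⟨s, hs, rfl⟩
    rw [hproj s hs]
    exact ⟨T s, hT s hs, rfl⟩

/-- Two distinct points joined by a path are joined by an arc inside that path: cut out of the
parameter interval a minimal closed set of times in such a way that loops are removed. -/
lemma exists_arc_of_path {Y : Type*} [MetricSpace Y] {β : ℝ → Y} (hβ : Continuous β)
    (h01 : β 0 ≠ β 1) :
    ∃ α : ℝ → Y, Continuous α ∧ InjOn α (Icc 0 1) ∧ α 0 = β 0 ∧ α 1 = β 1 ∧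
      α '' Icc 0 1 ⊆ β '' Icc 0 1 := by
  -- The members of `S` are the closed sets of times on whose gaps the path is a loop.
  let S : Set (Set ℝ) := {E | IsClosed E ∧ E ⊆ Icc 0 1 ∧ 0 ∈ E ∧ 1 ∈ E ∧
    ∀ s ∈ E, ∀ t ∈ E, s < t → (∀ q ∈ E, ¬ (s < q ∧ q < t)) → β s = β t}
  obtain ⟨E, hE⟩ : ∃ E, Minimal (· ∈ S) E := by
    refine zorn_superset S fun c hcS hc => ?_
    rcases c.eq_empty_or_nonempty with rfl | hcne
    · refine ⟨Icc 0 1, ⟨isClosed_Icc, le_rfl, by simp, by simp, fun s hs t ht hst h => ?_⟩, by simp⟩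
      exact absurd ⟨by linarith, by linarith⟩
        (h ((s + t) / 2) ⟨by linarith [hs.1, ht.1], by linarith [hs.2, ht.2]⟩)
    obtain ⟨E₀, hE₀⟩ := hcne
    refine ⟨⋂₀ c, ⟨isClosed_sInter fun E hE => (hcS hE).1, (sInter_subset_of_mem hE₀).trans
      (hcS hE₀).2.1, fun E hE => (hcS hE).2.2.1, fun E hE => (hcS hE).2.2.2.1,
      fun s hs t ht hst hgap => ?_⟩, fun E hE => sInter_subset_of_mem hE⟩
    -- A gap of the intersection of a chain is approximated by gaps of its members, so the values at
    -- its ends agree.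
    by_contra hne
    have hnear : ∀ᶠ p : ℝ × ℝ in 𝓝 (s, t), β p.1 ≠ β p.2 :=
      (isOpen_ne_fun (hβ.comp continuous_fst) (hβ.comp continuous_snd)).mem_nhds hne
    obtain ⟨ε, hε, hball⟩ := Metric.eventually_nhds_iff.1 hnear
    set δ := min (ε / 2) ((t - s) / 2) with hδdef
    have hδ : 0 < δ := lt_min (half_pos hε) (by linarith)
    have hδ1 : δ < ε := (min_le_left _ _).trans_lt (by linarith)
    have hδ2 : δ ≤ (t - s) / 2 := min_le_right _ _
    obtain ⟨E, hEc, hEK⟩ : ∃ E ∈ c, ∀ q ∈ E, ¬ (s + δ ≤ q ∧ q ≤ t - δ) := by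
      by_contra! hcon
      have hne' : Nonempty ↥((fun E => E ∩ Icc (s + δ) (t - δ)) '' c) :=
        ⟨_, mem_image_of_mem _ hE₀⟩
      have := IsCompact.nonempty_sInter_of_directed_nonempty_isCompact_isClosed
        (S := (fun E => E ∩ Icc (s + δ) (t - δ)) '' c) ?_ ?_ ?_ ?_
      · obtain ⟨q, hq⟩ := this
        have h1 := hq _ (mem_image_of_mem _ hE₀)
        refine hgap q (fun E hE => (hq _ (mem_image_of_mem _ hE)).1)
          ⟨by linarith [h1.2.1], by linarith [h1.2.2]⟩
      · rintro _ ⟨E, hE, rfl⟩ _ ⟨F, hF, rfl⟩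
        rcases hc.total hE hF with h | h
        · exact ⟨_, mem_image_of_mem _ hE, le_rfl, inter_subset_inter_left _ h⟩
        · exact ⟨_, mem_image_of_mem _ hF, inter_subset_inter_left _ h, le_rfl⟩
      · rintro _ ⟨E, hE, rfl⟩
        obtain ⟨q, hq, h1, h2⟩ := hcon E hE
        exact ⟨q, hq, h1, h2⟩
      · rintro _ ⟨E, hE, rfl⟩
        exact isCompact_Icc.inter_left (hcS hE).1
      · rintro _ ⟨E, hE, rfl⟩
        exact (hcS hE).1.inter isClosed_Icc
    obtain ⟨hEcl, hE01, hE0, hE1, hEgap⟩ := hcS hEc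
    obtain ⟨s', ⟨hs'E, hs'le⟩, hs'⟩ := (IsCompact.inter_right (isCompact_Icc.of_isClosed_subset
      hEcl hE01) (isClosed_Iic (a := s + δ))).exists_isGreatest ⟨s, hs E hEc, by simp [hδ.le]⟩
    obtain ⟨t', ⟨ht'E, ht'le⟩, ht'⟩ := (IsCompact.inter_right (isCompact_Icc.of_isClosed_subset
      hEcl hE01) (isClosed_Ici (a := t - δ))).exists_isLeast ⟨t, ht E hEc, by simp [hδ.le]⟩
    have h1 : s ≤ s' := hs' ⟨hs E hEc, by simp [hδ.le]⟩
    have h2 : t' ≤ t := ht' ⟨ht E hEc, by simp [hδ.le]⟩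
    simp only [mem_Iic] at hs'le
    simp only [mem_Ici] at ht'le
    have h3 : s' ≠ t' := fun h => hEK s' hs'E (by
      rcases lt_or_ge s' (t - δ) with h' | h' <;> constructor <;> linarith)
    refine hball (y := (s', t')) ?_ (hEgap s' hs'E t' ht'E (lt_of_le_of_ne (by linarith) h3) ?_)
    · rw [Prod.dist_eq, max_lt_iff, Real.dist_eq, Real.dist_eq, abs_lt, abs_lt]
      refine ⟨⟨?_, ?_⟩, ?_, ?_⟩ <;> simp only <;> linarith
    · rintro q hq ⟨hq1, hq2⟩
      refine hEK q hq ⟨?_, ?_⟩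
      · by_contra hcon
        exact absurd (hs' ⟨hq, (not_le.1 hcon).le⟩) (not_le.2 hq1)
      · by_contra hcon
        exact absurd (ht' ⟨hq, (not_le.1 hcon).le⟩) (not_le.2 hq2)
  obtain ⟨⟨hEcl, hE01, hE0, hE1, hEgap⟩, hmin⟩ := hE
  have hEco : IsCompact E := isCompact_Icc.of_isClosed_subset hEcl hE01
  -- In a minimal set, equal values occur only at the two ends of a gap.
  have hfibE : ∀ s ∈ E, ∀ t ∈ E, s < t → β s = β t → ∀ q ∈ E, ¬ (s < q ∧ q < t) := by
    intro s hs t ht hst heq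
    have hmem : E \ Ioo s t ∈ S := by
      refine ⟨hEcl.sdiff isOpen_Ioo, sdiff_subset.trans hE01,
        ⟨hE0, fun h => absurd (hE01 hs).1 (not_le.2 h.1)⟩,
        ⟨hE1, fun h => absurd (hE01 ht).2 (not_le.2 h.2)⟩, fun a ha b hb hab hgap => ?_⟩
      by_cases hq : ∃ q ∈ E, a < q ∧ q < b
      · obtain ⟨q, hqE, hq1, hq2⟩ := hq
        have hqst : q ∈ Ioo s t := by
          by_contra hcon
          exact hgap q ⟨hqE, hcon⟩ ⟨hq1, hq2⟩
        have has : a ≤ s := by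
          by_contra hcon
          exact ha.2 ⟨not_le.1 hcon, hq1.trans hqst.2⟩
        have hbt : t ≤ b := by
          by_contra hcon
          exact hb.2 ⟨hqst.1.trans hq2, not_le.1 hcon⟩
        have hsa : s ≤ a := by
          by_contra hcon
          exact hgap s ⟨hs, fun h => lt_irrefl _ h.1⟩ ⟨not_le.1 hcon, hqst.1.trans hq2⟩
        have htb : b ≤ t := by
          by_contra hcon
          exact hgap t ⟨ht, fun h => lt_irrefl _ h.2⟩ ⟨hq1.trans hqst.2, not_le.1 hcon⟩
        rw [le_antisymm has hsa, le_antisymm htb hbt, heq]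
      · push Not at hq
        exact hEgap a ha.1 b hb.1 hab fun q hqE h => absurd h.2 (not_lt.2 (hq q hqE h.1))
    intro q hq hqst
    exact (hmin hmem sdiff_subset hq).2 hqst
  let p : ℝ → ℝ := fun u => max 0 (min u 1)
  have hp : ∀ u, p u ∈ Icc (0 : ℝ) 1 := fun u =>
    ⟨le_max_left _ _, max_le zero_le_one (min_le_right _ _)⟩
  have hpm : Monotone p := fun u v h => max_le_max le_rfl (min_le_min h le_rfl)
  have hpl : ∀ u v, u ≤ v → p v - p u ≤ v - u := by
    intro u v h
    simp only [p, max_def, min_def]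
    split_ifs <;> linarith
  have hr : ∀ u, ∃ r, IsGreatest (E ∩ Iic (p u)) r := fun u =>
    (hEco.inter_right isClosed_Iic).exists_isGreatest ⟨0, hE0, (hp u).1⟩
  choose r hr using hr
  have hrm : Monotone r := fun u v h => (hr v).2 ⟨(hr u).1.1, (hr u).1.2.trans (hpm h)⟩
  have hgapr : ∀ u v, u ≤ v → β (r u) = β (r v) ∨
      ∃ a b, a ∈ Icc (0 : ℝ) 1 ∧ b ∈ Icc (0 : ℝ) 1 ∧ |a - b| ≤ v - u ∧
        β (r u) = β a ∧ β (r v) = β b := by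
    intro u v huv
    rcases (hrm huv).eq_or_lt with h | h
    · exact .inl (by rw [h])
    have hlt : p u < r v := by
      by_contra hcon
      exact absurd ((hr u).2 ⟨(hr v).1.1, not_lt.1 hcon⟩) (not_le.2 h)
    obtain ⟨a, ⟨haE, hap⟩, ha⟩ := (hEco.inter_right (isClosed_Ici (a := p u))).exists_isLeast
      ⟨r v, (hr v).1.1, hlt.le⟩
    have har : a ≤ r v := ha ⟨(hr v).1.1, hlt.le⟩
    have hrp : r v ≤ p v := (hr v).1.2
    have hru : r u ≤ p u := (hr u).1.2
    simp only [mem_Ici] at hap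
    refine .inr ⟨a, r v, hE01 haE, hE01 (hr v).1.1, ?_, ?_, rfl⟩
    · rw [abs_sub_comm, abs_of_nonneg (by linarith)]
      linarith [hpl u v huv]
    · rcases (hru.trans hap).eq_or_lt with h' | h'
      · rw [h']
      · refine hEgap _ (hr u).1.1 _ haE h' fun q hq hq' => ?_
        rcases le_total q (p u) with h'' | h''
        · exact absurd ((hr u).2 ⟨hq, h''⟩) (not_le.2 hq'.1)
        · exact absurd (ha ⟨hq, h''⟩) (not_le.2 hq'.2)
  have hr0 : r 0 = 0 := le_antisymm ((hr 0).1.2.trans (by simp [p])) (hE01 (hr 0).1.1).1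
  have hr1 : r 1 = 1 := le_antisymm (hE01 (hr 1).1.1).2 ((hr 1).2 ⟨hE1, by simp [p]⟩)
  have hγ : UniformContinuous (fun u => β (r u)) := by
    have hβu := isCompact_Icc.uniformContinuousOn_of_continuous (hβ.continuousOn (s := Icc 0 1))
    rw [Metric.uniformContinuous_iff]
    intro ε hε
    obtain ⟨δ, hδ, h⟩ := Metric.uniformContinuousOn_iff.1 hβu ε hε
    have key : ∀ u v, u ≤ v → v - u < δ → dist (β (r u)) (β (r v)) < ε := by
      intro u v huv hd
      rcases hgapr u v huv with h' | ⟨a, b, ha, hb, hab, h1, h2⟩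
      · rw [h', dist_self]; exact hε
      · rw [h1, h2]
        exact h a ha b hb (by rw [Real.dist_eq]; linarith)
    refine ⟨δ, hδ, fun {u v} huv => ?_⟩
    rw [Real.dist_eq, abs_lt] at huv
    rcases le_total u v with h' | h'
    · exact key u v h' (by linarith)
    · rw [dist_comm]; exact key v u h' (by linarith)
  have hbd : ∀ s t, dist (β (r s)) (β (r t)) ≤ Metric.diam (β '' Icc 0 1) := fun s t =>
    Metric.dist_le_diam_of_mem (isCompact_Icc.image hβ).isBounded
      (mem_image_of_mem _ (hE01 (hr s).1.1)) (mem_image_of_mem _ (hE01 (hr t).1.1))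
  have hfib : ∀ t t', t ≤ t' → β (r t) = β (r t') → ∀ u ∈ Icc t t', β (r u) = β (r t) := by
    intro t t' htt' heq u hu
    have hm1 := hrm hu.1
    have hm2 := hrm hu.2
    rcases hm1.eq_or_lt with h | h
    · rw [h]
    rcases hm2.eq_or_lt with h' | h'
    · rw [h', heq]
    · exact absurd ⟨h, h'⟩ (hfibE _ (hr t).1.1 _ (hr t').1.1 (h.trans h') heq _ (hr u).1.1)
  obtain ⟨α, h1, h2, h3, h4, h5⟩ := exists_arc_of_interval_fibers hγ hbd hfib
    (by simpa only [hr0, hr1] using h01)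
  refine ⟨α, h1, h2, by rw [h3, hr0], by rw [h4, hr1], h5.trans ?_⟩
  rintro _ ⟨u, -, rfl⟩
  exact mem_image_of_mem _ (hE01 (hr u).1.1)

/-! ### Circles and theta-curves -/

/-- The unit circle in the plane, parametrised by `ℝ / ℤ`. -/
noncomputable def addCircleHomeoSphere : AddCircle (1 : ℝ) ≃ₜ Metric.sphere (0 : ℂ) 1 :=
  (AddCircle.homeomorphCircle one_ne_zero).trans
    { toFun := fun z => ⟨(z : ℂ), z.2⟩
      invFun := fun z => ⟨z.1, z.2⟩
      left_inv := fun _ => rfl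
      right_inv := fun _ => rfl
      continuous_toFun := by fun_prop
      continuous_invFun := continuous_induced_rng.2 continuous_subtype_val }

/-- In a Hausdorff space, a circle is the range of a continuous injection of `ℝ / ℤ`. -/
lemma isCircleSet_iff {X : Type*} [TopologicalSpace X] [T2Space X] {C : Set X} :
    IsCircleSet C ↔ ∃ p : AddCircle (1 : ℝ) → X, Continuous p ∧ Function.Injective p ∧
      range p = C := by
  constructor
  · rintro ⟨e⟩
    refine ⟨fun s => (e.symm (addCircleHomeoSphere s) : X), by fun_prop,
      Subtype.val_injective.comp (e.symm.injective.comp addCircleHomeoSphere.injective), ?_⟩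
    have : (fun s => (e.symm (addCircleHomeoSphere s) : X)) =
        Subtype.val ∘ (addCircleHomeoSphere.trans e.symm) := rfl
    rw [this, range_comp, (Homeomorph.surjective _).range_eq, image_univ, Subtype.range_val]
  · rintro ⟨p, hp, hi, rfl⟩
    have : IsEmbedding p := (hp.isClosedEmbedding hi).isEmbedding
    exact ⟨this.toHomeomorph.symm.trans addCircleHomeoSphere⟩

lemma isCircleSet_of_loop {X : Type*} [TopologicalSpace X] [T2Space X] {l : ℝ → X}
    (hl : Continuous l) (hi : InjOn l (Ico 0 1)) (h01 : l 0 = l 1) :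
    IsCircleSet (l '' Icc 0 1) := by
  rw [isCircleSet_iff]
  have hr : range (AddCircle.liftIco 1 0 l) = l '' Ico 0 1 := by
    unfold AddCircle.liftIco
    rw [range_comp, (Equiv.surjective _).range_eq, image_univ, Set.range_domRestrict, zero_add]
  refine ⟨AddCircle.liftIco 1 0 l, AddCircle.liftIco_continuous (by simpa using h01)
    hl.continuousOn, ?_, ?_⟩
  · unfold AddCircle.liftIco
    refine Function.Injective.comp ?_ (Equiv.injective _)
    rw [← injOn_iff_injective, zero_add]
    exact hi
  · rw [hr]
    refine subset_antisymm (image_mono Ico_subset_Icc_self) ?_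
    rintro _ ⟨t, ht, rfl⟩
    rcases ht.2.eq_or_lt with rfl | h
    · exact ⟨0, by simp, h01⟩
    · exact ⟨t, ⟨ht.1, h⟩, rfl⟩

/-- Two arcs with common ends and no other common points form a circle. -/
lemma isCircleSet_of_two_arcs {X : Type*} [TopologicalSpace X] [T2Space X] {a b : ℝ → X}
    (ha : Continuous a) (hb : Continuous b) (hai : InjOn a (Icc 0 1)) (hbi : InjOn b (Icc 0 1))
    (h0 : a 0 = b 0) (h1 : a 1 = b 1)
    (hab : ∀ s ∈ Icc (0 : ℝ) 1, ∀ t ∈ Icc (0 : ℝ) 1, a s = b t →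
      (s = 0 ∧ t = 0) ∨ (s = 1 ∧ t = 1)) :
    IsCircleSet (a '' Icc 0 1 ∪ b '' Icc 0 1) := by
  let l : ℝ → X := fun t => if t ≤ 1 / 2 then a (2 * t) else b (2 - 2 * t)
  have hl : Continuous l := by
    refine Continuous.if_le (by fun_prop) (by fun_prop) continuous_id continuous_const ?_
    rintro t rfl
    norm_num [h1]
  have hcirc := isCircleSet_of_loop hl ?_ (by simp only [l]; norm_num [h0])
  · convert hcirc using 1
    ext x
    constructor
    · rintro (⟨t, ht, rfl⟩ | ⟨t, ht, rfl⟩)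
      · refine ⟨t / 2, ⟨by linarith [ht.1], by linarith [ht.2]⟩, ?_⟩
        have : t / 2 ≤ 1 / 2 := by linarith [ht.2]
        simp only [l, if_pos this]
        congr 1; ring
      · rcases ht.2.eq_or_lt with rfl | h
        · refine ⟨1 / 2, by norm_num, ?_⟩
          simp only [l, if_pos le_rfl]
          norm_num [h1]
        · refine ⟨1 - t / 2, ⟨by linarith [ht.1], by linarith [ht.1]⟩, ?_⟩
          have : ¬ 1 - t / 2 ≤ 1 / 2 := by linarith
          simp only [l, if_neg this]
          congr 1; ring
    · rintro ⟨t, ht, rfl⟩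
      by_cases h : t ≤ 1 / 2
      · simp only [l, if_pos h]
        exact .inl ⟨2 * t, ⟨by linarith [ht.1], by linarith⟩, rfl⟩
      · simp only [l, if_neg h]
        exact .inr ⟨2 - 2 * t, ⟨by linarith [ht.2], by linarith⟩, rfl⟩
  · intro s hs t ht hst
    by_cases h : s ≤ 1 / 2 <;> by_cases h' : t ≤ 1 / 2 <;> simp only [l, h, h', if_true, if_false]
      at hst
    · have := hai ⟨by linarith [hs.1], by linarith⟩ ⟨by linarith [ht.1], by linarith⟩ hst
      linarith
    · rcases hab _ ⟨by linarith [hs.1], by linarith⟩ _ ⟨by linarith [ht.2], by linarith⟩ hst with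
        h2 | h2 <;> linarith [ht.2]
    · rcases hab _ ⟨by linarith [ht.1], by linarith⟩ _ ⟨by linarith [hs.2], by linarith⟩
        hst.symm with h2 | h2 <;> linarith [hs.2]
    · have := hbi ⟨by linarith [hs.2], by linarith⟩ ⟨by linarith [ht.2], by linarith⟩ hst
      linarith

/-- If the ends of an arc can be joined by a path missing an inner point `α c` of the arc, then
some circle in the union of the arc and the path passes through `α c`. -/
lemma exists_circle_meeting {Y : Type*} [MetricSpace Y] {α β : ℝ → Y} (hα : Continuous α)
    (hαi : InjOn α (Icc 0 1)) (hβ : Continuous β) (h0 : α 0 = β 0) (h1 : α 1 = β 1) {c : ℝ}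
    (hc : c ∈ Ioo (0 : ℝ) 1) (hcβ : α c ∉ β '' Icc 0 1) :
    ∃ C, IsCircleSet C ∧ C ⊆ α '' Icc 0 1 ∪ β '' Icc 0 1 ∧ α c ∈ C ∧
      (C ∩ β '' Icc 0 1).Nonempty := by
  have hc01 : c ∈ Icc (0 : ℝ) 1 := ⟨hc.1.le, hc.2.le⟩
  have hcl1 : IsClosed (β ⁻¹' (α '' Icc 0 c)) :=
    ((isCompact_Icc.image hα).isClosed).preimage hβ
  have hcl2 : IsClosed (β ⁻¹' (α '' Icc c 1)) :=
    ((isCompact_Icc.image hα).isClosed).preimage hβ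
  obtain ⟨s₁, ⟨hs₁, a, ha, haβ⟩, hs₁max⟩ :=
    ((isCompact_Icc (a := (0 : ℝ)) (b := 1)).inter_right hcl1).exists_isGreatest
      ⟨0, ⟨le_rfl, zero_le_one⟩, 0, ⟨le_rfl, hc.1.le⟩, h0⟩
  obtain ⟨s₂, ⟨hs₂, b, hb, hbβ⟩, hs₂min⟩ :=
    ((isCompact_Icc (a := s₁) (b := 1)).inter_right hcl2).exists_isLeast
      ⟨1, ⟨hs₁.2, le_rfl⟩, 1, ⟨hc.2.le, le_rfl⟩, h1⟩
  have ha01 : a ∈ Icc (0 : ℝ) 1 := ⟨ha.1, ha.2.trans hc.2.le⟩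
  have hb01 : b ∈ Icc (0 : ℝ) 1 := ⟨hc.1.le.trans hb.1, hb.2⟩
  have hac : a < c := lt_of_le_of_ne ha.2 (by rintro rfl; exact hcβ ⟨s₁, hs₁, haβ.symm⟩)
  have hs₂01 : s₂ ∈ Icc (0 : ℝ) 1 := ⟨hs₁.1.trans hs₂.1, hs₂.2⟩
  have hcb : c < b := lt_of_le_of_ne hb.1 (by rintro rfl; exact hcβ ⟨s₂, hs₂01, hbβ.symm⟩)
  have hab : α a ≠ α b := fun h => (hac.trans hcb).ne (hαi ha01 hb01 h)
  have hmid : ∀ u, s₁ < u → u < s₂ → β u ∉ α '' Icc 0 1 := by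
    rintro u hu1 hu2 ⟨t, ht, htu⟩
    rcases le_total t c with h | h
    · exact absurd (hs₁max ⟨⟨hs₁.1.trans hu1.le, hu2.le.trans hs₂.2⟩, t, ⟨ht.1, h⟩, htu⟩)
        (not_le.2 hu1)
    · exact absurd (hs₂min ⟨⟨hu1.le, hu2.le.trans hs₂.2⟩, t, ⟨h, ht.2⟩, htu⟩) (not_le.2 hu2)
  obtain ⟨δ, hδ, hδi, hδ0, hδ1, hδsub⟩ := exists_arc_of_path
    (β := fun t => β (s₁ + t * (s₂ - s₁))) (by fun_prop) (by simpa [← haβ, ← hbβ] using hab)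
  simp only [zero_mul, add_zero, one_mul, add_sub_cancel] at hδ0 hδ1
  have hδβ : ∀ t ∈ Icc (0 : ℝ) 1, ∃ u ∈ Icc s₁ s₂, δ t = β u := by
    intro t ht
    obtain ⟨u, hu, hut⟩ := hδsub (mem_image_of_mem δ ht)
    refine ⟨_, ⟨?_, ?_⟩, hut.symm⟩ <;> nlinarith [hu.1, hu.2, hs₂.1]
  have hseg : ∀ t ∈ Icc (0 : ℝ) 1, a + t * (b - a) ∈ Icc (0 : ℝ) 1 := by
    intro t ht
    constructor <;> nlinarith [ht.1, ht.2, ha01.1, hb01.2]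
  refine ⟨(fun t => α (a + t * (b - a))) '' Icc 0 1 ∪ δ '' Icc 0 1, isCircleSet_of_two_arcs
    (by fun_prop) hδ ?_ hδi (by simp [hδ0, haβ]) (by simp [hδ1, hbβ]) ?_, ?_, ?_,
    β s₁, .inr ⟨0, by simp, hδ0⟩, s₁, hs₁, rfl⟩
  · intro s hs t ht hst
    have := hαi (hseg s hs) (hseg t ht) hst
    have hba : b - a ≠ 0 := by linarith
    exact mul_right_cancel₀ hba (by linarith)
  · intro s hs t ht hst
    obtain ⟨u, hu, hut⟩ := hδβ t ht
    have hmem : β u ∈ α '' Icc 0 1 := ⟨_, hseg s hs, hst.trans hut⟩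
    rcases hu.1.eq_or_lt with rfl | hu1
    · left
      have h2 : a + s * (b - a) = a := hαi (hseg s hs) ha01 (by rw [hst, hut, haβ])
      have h3 : s = 0 := by
        have : s * (b - a) = 0 := by linarith
        rcases mul_eq_zero.1 this with h | h
        · exact h
        · linarith
      exact ⟨h3, hδi ht ⟨le_rfl, zero_le_one⟩ (by rw [hut, hδ0])⟩
    rcases hu.2.eq_or_lt with rfl | hu2
    · right
      have h2 : a + s * (b - a) = b := hαi (hseg s hs) hb01 (by rw [hst, hut, hbβ])
      have h3 : s = 1 := by
        have : (s - 1) * (b - a) = 0 := by linarith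
        rcases mul_eq_zero.1 this with h | h
        · linarith
        · linarith
      exact ⟨h3, hδi ht ⟨zero_le_one, le_rfl⟩ (by rw [hut, hδ1])⟩
    · exact absurd hmem (hmid u hu1 hu2)
  · rintro _ (⟨t, ht, rfl⟩ | ⟨t, ht, rfl⟩)
    · exact .inl ⟨_, hseg t ht, rfl⟩
    · obtain ⟨u, hu, hut⟩ := hδβ t ht
      exact .inr ⟨u, ⟨hs₁.1.trans hu.1, hu.2.trans hs₂.2⟩, hut.symm⟩
  · refine .inl ⟨(c - a) / (b - a), ⟨?_, ?_⟩, ?_⟩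
    · exact div_nonneg (by linarith) (by linarith)
    · rw [div_le_one (by linarith)]; linarith
    · have : b - a ≠ 0 := by linarith
      have h : a + (c - a) / (b - a) * (b - a) = c := by rw [div_mul_cancel₀ _ this]; ring
      exact congrArg α h

lemma exists_circle {Y : Type*} [MetricSpace Y] {α β : ℝ → Y} (hα : Continuous α)
    (hαi : InjOn α (Icc 0 1)) (hβ : Continuous β) (h0 : α 0 = β 0) (h1 : α 1 = β 1) {c : ℝ}
    (hc : c ∈ Ioo (0 : ℝ) 1) (hcβ : α c ∉ β '' Icc 0 1) :
    ∃ C, IsCircleSet C ∧ C ⊆ α '' Icc 0 1 ∪ β '' Icc 0 1 ∧ α c ∈ C := by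
  obtain ⟨C, hC, hsub, hcC, -⟩ := exists_circle_meeting hα hαi hβ h0 h1 hc hcβ
  exact ⟨C, hC, hsub, hcC⟩

/-! ### Spaces with finitely many circles -/

lemma isCircleSet_image {X Z : Type*} [TopologicalSpace X] [T2Space X] [TopologicalSpace Z]
    [T2Space Z] {f : Z → X} (hf : Continuous f) (hi : Function.Injective f) {C : Set Z}
    (hC : IsCircleSet C) : IsCircleSet (f '' C) := by
  obtain ⟨p, hp, hpi, rfl⟩ := isCircleSet_iff.1 hC
  exact isCircleSet_iff.2 ⟨f ∘ p, hf.comp hp, hi.comp hpi, range_comp _ _⟩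

lemma IsCircleSet.isConnected {X : Type*} [TopologicalSpace X] [T2Space X] {C : Set X}
    (hC : IsCircleSet C) : IsConnected C := by
  obtain ⟨p, hp, hpi, rfl⟩ := isCircleSet_iff.1 hC
  exact isConnected_range hp

lemma IsCircleSet.isCompact {X : Type*} [TopologicalSpace X] [T2Space X] {C : Set X}
    (hC : IsCircleSet C) : IsCompact C := by
  obtain ⟨p, hp, hpi, rfl⟩ := isCircleSet_iff.1 hC
  exact isCompact_range hp

lemma finite_circles_of_injective {X Z : Type*} [TopologicalSpace X] [T2Space X]
    [TopologicalSpace Z] [T2Space Z] {f : Z → X} (hf : Continuous f) (hi : Function.Injective f)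
    (hX : {C : Set X | IsCircleSet C}.Finite) : {C : Set Z | IsCircleSet C}.Finite :=
  Set.Finite.of_injOn (f := fun C => f '' C) (fun _ hC => isCircleSet_image hf hi hC)
    (image_injective.2 hi).injOn hX

lemma exists_open_connected {Y : Type*} [TopologicalSpace Y] [LocallyConnectedSpace Y] {x : Y}
    {U : Set Y} (hU : U ∈ 𝓝 x) : ∃ V ⊆ U, IsOpen V ∧ x ∈ V ∧ IsConnected V :=
  locallyConnectedSpace_iff_subsets_isOpen_isConnected.1 inferInstance x U hU

lemma exists_path_in {Y : Type*} [TopologicalSpace Y] [LocallyPathConnectedSpace Y] {U : Set Y}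
    (hU : IsOpen U) (hc : IsPreconnected U) {x y : Y} (hx : x ∈ U) (hy : y ∈ U) :
    ∃ β : ℝ → Y, Continuous β ∧ β 0 = x ∧ β 1 = y ∧ ∀ t, β t ∈ U := by
  have h := (hU.isConnected_iff_isPathConnected).1 ⟨⟨x, hx⟩, hc⟩
  obtain ⟨p, hp⟩ := h.joinedIn x hx y hy
  exact ⟨p.extend, p.continuous_extend, p.extend_zero, p.extend_one, fun t => hp _⟩

lemma exists_arc_in {Y : Type*} [MetricSpace Y] [LocallyPathConnectedSpace Y] {U : Set Y}
    (hU : IsOpen U) (hc : IsPreconnected U) {x y : Y} (hx : x ∈ U) (hy : y ∈ U) (hxy : x ≠ y) :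
    ∃ α : ℝ → Y, Continuous α ∧ InjOn α (Icc 0 1) ∧ α 0 = x ∧ α 1 = y ∧
      α '' Icc 0 1 ⊆ U := by
  obtain ⟨β, hβ, rfl, rfl, hβU⟩ := exists_path_in hU hc hx hy
  obtain ⟨α, h1, h2, h3, h4, h5⟩ := exists_arc_of_path hβ hxy
  refine ⟨α, h1, h2, h3, h4, h5.trans ?_⟩
  rintro _ ⟨t, -, rfl⟩
  exact hβU t

/-- Two disjoint connected open sets, each meeting two fixed disjoint connected open sets, produce
a circle through a point of the first one. -/
lemma exists_circle_of_two_bridges {Y : Type*} [MetricSpace Y] [LocallyPathConnectedSpace Y]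
    {N₁ N₂ O O' : Set Y} (hN₁ : IsOpen N₁) (hN₁c : IsPreconnected N₁) (hN₂ : IsOpen N₂)
    (hN₂c : IsPreconnected N₂) (hN : Disjoint N₁ N₂) (hO : IsOpen O) (hOc : IsPreconnected O)
    (hO' : IsOpen O') (hO'c : IsPreconnected O') (hOO' : Disjoint O O')
    (h1 : (N₁ ∩ O).Nonempty) (h2 : (N₂ ∩ O).Nonempty) (h1' : (N₁ ∩ O').Nonempty)
    (h2' : (N₂ ∩ O').Nonempty) :
    ∃ C t, IsCircleSet C ∧ C ⊆ N₁ ∪ N₂ ∪ O ∪ O' ∧ t ∈ C ∧ t ∈ O ∧ t ∉ N₁ ∧ t ∉ N₂ := by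
  obtain ⟨x, hx1, hxO⟩ := h1'
  obtain ⟨y, hy2, hyO⟩ := h2'
  have hxy : x ≠ y := by rintro rfl; exact disjoint_left.1 hN hx1 hy2
  have hU : IsPreconnected (N₁ ∪ O ∪ N₂) := by
    obtain ⟨u, hu1, hu2⟩ := h1
    obtain ⟨v, hv1, hv2⟩ := h2
    exact (hN₁c.union u hu1 hu2 hOc).union v (.inr hv2) hv1 hN₂c
  obtain ⟨α, hα, hαi, hα0, hα1, hαU⟩ := exists_arc_in ((hN₁.union hO).union hN₂) hU
    (.inl (.inl hx1)) (.inr hy2) hxy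
  obtain ⟨β, hβ, hβ0, hβ1, hβU⟩ := exists_path_in hO' hO'c hxO hyO
  obtain ⟨c, hc, hcN⟩ : ∃ c ∈ Icc (0 : ℝ) 1, α c ∉ N₁ ∪ N₂ := by
    by_contra! hcon
    have hpre : IsPreconnected (α '' Icc 0 1) := isPreconnected_Icc.image _ hα.continuousOn
    have hsub : α '' Icc 0 1 ⊆ N₁ ∪ N₂ := by rintro _ ⟨c, hc, rfl⟩; exact hcon c hc
    obtain ⟨z, -, hz⟩ := hpre N₁ N₂ hN₁ hN₂ hsub ⟨α 0, ⟨0, by simp, rfl⟩, hα0 ▸ hx1⟩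
      ⟨α 1, ⟨1, by simp, rfl⟩, hα1 ▸ hy2⟩
    exact disjoint_left.1 hN hz.1 hz.2
  rw [mem_union, not_or] at hcN
  have hcO : α c ∈ O := by
    rcases hαU (mem_image_of_mem α hc) with (h | h) | h
    · exact absurd h hcN.1
    · exact h
    · exact absurd h hcN.2
  have hc0 : c ≠ 0 := by rintro rfl; exact hcN.1 (hα0 ▸ hx1)
  have hc1 : c ≠ 1 := by rintro rfl; exact hcN.2 (hα1 ▸ hy2)
  obtain ⟨C, hC, hCsub, hcC⟩ := exists_circle hα hαi hβ (hα0.trans hβ0.symm) (hα1.trans hβ1.symm)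
    ⟨lt_of_le_of_ne hc.1 hc0.symm, lt_of_le_of_ne hc.2 hc1⟩ (by
      rintro ⟨t, -, ht⟩
      exact disjoint_left.1 hOO' hcO (ht ▸ hβU t))
  refine ⟨C, α c, hC, hCsub.trans (union_subset (hαU.trans ?_) ?_), hcC, hcO, hcN⟩
  · intro z hz
    rcases hz with (h | h) | h
    · exact .inl (.inl (.inl h))
    · exact .inl (.inr h)
    · exact .inl (.inl (.inr h))
  · rintro _ ⟨t, -, rfl⟩
    exact .inr (hβU t)

/-- If there are only finitely many circles, then a disjoint family of continua of diameter
bounded from below is finite. -/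
lemma finite_of_disjoint_continua {Y : Type*} [MetricSpace Y] [CompactSpace Y]
    [LocallyPathConnectedSpace Y] (hfin : {C : Set Y | IsCircleSet C}.Finite) {δ : ℝ} (hδ : 0 < δ)
    {𝒦 : Set (Set Y)} (hcl : ∀ K ∈ 𝒦, IsClosed K) (hpre : ∀ K ∈ 𝒦, IsPreconnected K)
    (hdisj : 𝒦.PairwiseDisjoint id) (hbig : ∀ K ∈ 𝒦, ∃ x ∈ K, ∃ y ∈ K, δ ≤ dist x y) :
    𝒦.Finite := by
  by_contra hinf
  have hinf : 𝒦.Infinite := hinf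
  obtain ⟨K, hK𝒦, hKinj⟩ : ∃ K : ℕ → Set Y, (∀ n, K n ∈ 𝒦) ∧ Function.Injective K :=
    ⟨fun n => hinf.natEmbedding _ n, fun n => (hinf.natEmbedding _ n).2,
      Subtype.val_injective.comp (hinf.natEmbedding _).injective⟩
  have hKd : ∀ i j, i ≠ j → Disjoint (K i) (K j) := fun i j hij =>
    hdisj (hK𝒦 i) (hK𝒦 j) (hKinj.ne hij)
  choose p hp q hq hpq using fun n => hbig (K n) (hK𝒦 n)
  obtain ⟨⟨a, b⟩, -, φ, hφ, hlim⟩ := (isCompact_univ (X := Y × Y)).tendsto_subseq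
    (x := fun n => (p n, q n)) (fun _ => mem_univ _)
  have hlim' := hlim
  rw [nhds_prod_eq, Filter.tendsto_prod_iff'] at hlim
  have hpa : Filter.Tendsto (fun n => p (φ n)) Filter.atTop (𝓝 a) := hlim.1
  have hqb : Filter.Tendsto (fun n => q (φ n)) Filter.atTop (𝓝 b) := hlim.2
  have hab : δ ≤ dist a b := ge_of_tendsto' (hpa.dist hqb) fun n => hpq _
  have hab' : a ≠ b := by rintro rfl; rw [dist_self] at hab; linarith
  obtain ⟨U, V, hU, hV, haU, hbV, hUV⟩ := t2_separation hab'
  obtain ⟨N₁, hN₁U, hN₁, haN₁, hN₁c⟩ := exists_open_connected (hU.mem_nhds haU)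
  obtain ⟨N₂, hN₂V, hN₂, hbN₂, hN₂c⟩ := exists_open_connected (hV.mem_nhds hbV)
  have hN : Disjoint N₁ N₂ := hUV.mono hN₁U hN₂V
  obtain ⟨n₀, hn₀⟩ := Filter.eventually_atTop.1
    ((hpa.eventually (hN₁.mem_nhds haN₁)).and (hqb.eventually (hN₂.mem_nhds hbN₂)))
  -- More bridges than there are circles.
  let m := Nat.card {C : Set Y | IsCircleSet C} + 1
  let k : Fin (m + 1) → ℕ := fun i => φ (n₀ + i)
  have hkinj : Function.Injective k := fun i j hij => Fin.ext (by
    have := hφ.injective hij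
    omega)
  let O : Fin (m + 1) → Set Y := fun i =>
    ⋂ j : {j // j ≠ i}, {z | Metric.infDist z (K (k i)) < Metric.infDist z (K (k j))}
  have hOo : ∀ i, IsOpen (O i) := fun i => isOpen_iInter_of_finite fun j =>
    isOpen_lt (Metric.continuous_infDist_pt _) (Metric.continuous_infDist_pt _)
  have hOd : ∀ i j, i ≠ j → Disjoint (O i) (O j) := fun i j hij => disjoint_left.2 fun z hi hj => by
    have h1 : Metric.infDist z (K (k i)) < Metric.infDist z (K (k j)) :=
      mem_iInter.1 hi ⟨j, hij.symm⟩
    have h2 : Metric.infDist z (K (k j)) < Metric.infDist z (K (k i)) :=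
      mem_iInter.1 hj ⟨i, hij⟩
    exact lt_asymm h1 h2
  have hKO : ∀ i, K (k i) ⊆ O i := fun i z hz => mem_iInter.2 fun j => by
    change Metric.infDist z (K (k i)) < Metric.infDist z (K (k j))
    rw [Metric.infDist_zero_of_mem hz]
    refine ((hcl _ (hK𝒦 _)).notMem_iff_infDist_pos ⟨_, hp _⟩).1 fun hzj => ?_
    exact disjoint_left.1 (hKd _ _ (hkinj.ne j.2)) hzj hz
  let W : Fin (m + 1) → Set Y := fun i => connectedComponentIn (O i) (p (k i))
  have hWo : ∀ i, IsOpen (W i) := fun i => (hOo i).connectedComponentIn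
  have hWO : ∀ i, W i ⊆ O i := fun i => connectedComponentIn_subset _ _
  have hKW : ∀ i, K (k i) ⊆ W i := fun i =>
    (hpre _ (hK𝒦 _)).subset_connectedComponentIn (hp _) (hKO i)
  have hbr : ∀ i : Fin m, ∃ C t, IsCircleSet C ∧ C ⊆ N₁ ∪ N₂ ∪ W i.succ ∪ W 0 ∧ t ∈ C ∧
      t ∈ W i.succ ∧ t ∉ N₁ ∧ t ∉ N₂ := fun i =>
    exists_circle_of_two_bridges hN₁ hN₁c.isPreconnected hN₂ hN₂c.isPreconnected hN (hWo _)
      isPreconnected_connectedComponentIn (hWo _) isPreconnected_connectedComponentIn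
      ((hOd _ _ (Fin.succ_ne_zero i)).mono (hWO _) (hWO _))
      ⟨_, (hn₀ _ (by omega)).1, hKW _ (hp _)⟩ ⟨_, (hn₀ _ (by omega)).2, hKW _ (hq _)⟩
      ⟨_, (hn₀ _ (by omega)).1, hKW _ (hp _)⟩ ⟨_, (hn₀ _ (by omega)).2, hKW _ (hq _)⟩
  choose C t hC hCsub htC htW ht1 ht2 using hbr
  have hCinj : Function.Injective (fun i => (⟨C i, hC i⟩ : {C : Set Y | IsCircleSet C})) := by
    intro i j hij
    by_contra hne
    have hCij : C i = C j := congrArg Subtype.val hij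
    have h := hCsub j (hCij ▸ htC i)
    rcases h with ((h | h) | h) | h
    · exact ht1 i h
    · exact ht2 i h
    · exact disjoint_left.1 (hOd _ _ (fun h' => hne (Fin.succ_injective _ h')))
        (hWO _ (htW i)) (hWO _ h)
    · exact disjoint_left.1 (hOd _ _ (Fin.succ_ne_zero i)) (hWO _ (htW i)) (hWO _ h)
  have : Finite {C : Set Y | IsCircleSet C} := hfin.to_subtype
  have hcard : Nat.card (Fin m) ≤ Nat.card {C : Set Y | IsCircleSet C} :=
    Nat.card_le_card_of_injective _ hCinj
  rw [Nat.card_eq_fintype_card (α := Fin m), Fintype.card_fin] at hcard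
  omega

/-! ### Subcontinua of spaces with finitely many circles -/

/-- Boundary bumping: a component of a proper closed subset of a continuum is not contained in an
open set lying inside that closed set. -/
lemma not_connectedComponentIn_subset {Z : Type*} [TopologicalSpace Z] [CompactSpace Z]
    [ConnectedSpace Z] [T2Space Z] {B O : Set Z} (hB : IsClosed B) (hBu : B ≠ univ) {y : Z}
    (hy : y ∈ B) (hO : IsOpen O) (hOB : O ⊆ B) : ¬ connectedComponentIn B y ⊆ O := by
  intro hsub
  have : CompactSpace B := isCompact_iff_compactSpace.1 hB.isCompact
  rw [connectedComponentIn_eq_image hy, connectedComponent_eq_iInter_isClopen] at hsub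
  have : Nonempty {s : Set B // IsClopen s ∧ (⟨y, hy⟩ : B) ∈ s} := ⟨⟨univ, isClopen_univ, trivial⟩⟩
  obtain ⟨⟨A, hA, hyA⟩, hAO⟩ := exists_subset_nhds_of_compactSpace
    (V := fun s : {s : Set B // IsClopen s ∧ (⟨y, hy⟩ : B) ∈ s} => s.1) (U := Subtype.val ⁻¹' O)
    (fun s t => ⟨⟨s.1 ∩ t.1, s.2.1.inter t.2.1, s.2.2, t.2.2⟩, inter_subset_left,
      inter_subset_right⟩) (fun s => s.2.1.1)
    (fun z hz => (hO.preimage continuous_subtype_val).mem_nhds (hsub ⟨z, hz, rfl⟩))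
  have hcl : IsClosed (Subtype.val '' A) := hB.isClosedMap_subtype_val _ hA.1
  obtain ⟨G, hG, hGA⟩ := isOpen_induced_iff.1 hA.2
  have hop : IsOpen (Subtype.val '' A) := by
    have : Subtype.val '' A = G ∩ O := by
      ext z
      constructor
      · rintro ⟨z, hz, rfl⟩
        exact ⟨by rw [← hGA] at hz; exact hz, hAO hz⟩
      · rintro ⟨hzG, hzO⟩
        exact ⟨⟨z, hOB hzO⟩, by rw [← hGA]; exact hzG, rfl⟩
    rw [this]
    exact hG.inter hO
  rcases isClopen_iff.1 ⟨hcl, hop⟩ with h | h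
  · exact (h ▸ mem_image_of_mem _ hyA : y ∈ (∅ : Set Z))
  · refine hBu (univ_subset_iff.1 ?_)
    rw [← h]
    rintro _ ⟨z, -, rfl⟩
    exact z.2

/-- A continuum in which disjoint families of subcontinua of diameter bounded from below are finite
is locally connected. -/
lemma locallyConnectedSpace_of_finite_families {Z : Type*} [MetricSpace Z] [CompactSpace Z]
    [ConnectedSpace Z]
    (hfin : ∀ δ > 0, ∀ 𝒦 : Set (Set Z), (∀ K ∈ 𝒦, IsClosed K) → (∀ K ∈ 𝒦, IsPreconnected K) →
      𝒦.PairwiseDisjoint id → (∀ K ∈ 𝒦, ∃ x ∈ K, ∃ y ∈ K, δ ≤ dist x y) → 𝒦.Finite) :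
    LocallyConnectedSpace Z := by
  refine locallyConnectedSpace_iff_connected_subsets.2 fun x U hU => ?_
  obtain ⟨ε, hε, hεU⟩ := Metric.nhds_basis_closedBall.mem_iff.1 hU
  set B := Metric.closedBall x ε with hB
  by_cases hBu : B = univ
  · exact ⟨univ, Filter.univ_mem, isPreconnected_univ, hBu ▸ hεU⟩
  have hBcl : IsClosed B := Metric.isClosed_closedBall
  let 𝒦 : Set (Set Z) := (fun y => connectedComponentIn B y) '' Metric.closedBall x (ε / 2)
  have hmem : ∀ y ∈ Metric.closedBall x (ε / 2), y ∈ B := fun y hy =>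
    Metric.closedBall_subset_closedBall (by linarith) hy
  have hclosed : ∀ K ∈ 𝒦, IsClosed K := by
    rintro _ ⟨y, hy, rfl⟩
    change IsClosed (connectedComponentIn B y)
    rw [connectedComponentIn_eq_image (hmem y hy)]
    exact hBcl.isClosedMap_subtype_val _ isClosed_connectedComponent
  have h𝒦 : 𝒦.Finite := by
    refine hfin (ε / 2) (by linarith) 𝒦 hclosed ?_ ?_ ?_
    · rintro _ ⟨y, hy, rfl⟩
      exact isPreconnected_connectedComponentIn
    · rintro _ ⟨y, hy, rfl⟩ _ ⟨z, hz, rfl⟩ hne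
      rw [Function.onFun, id, id]
      by_contra hd
      obtain ⟨w, hw1, hw2⟩ := not_disjoint_iff.1 hd
      exact hne ((connectedComponentIn_eq hw1).trans (connectedComponentIn_eq hw2).symm)
    · rintro _ ⟨y, hy, rfl⟩
      obtain ⟨z, hz, hzx⟩ := not_subset.1 (not_connectedComponentIn_subset hBcl hBu (hmem y hy)
        Metric.isOpen_ball Metric.ball_subset_closedBall)
      refine ⟨y, mem_connectedComponentIn (hmem y hy), z, hz, ?_⟩
      rw [Metric.mem_ball, not_lt] at hzx
      rw [Metric.mem_closedBall] at hy
      have := dist_triangle z y x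
      rw [dist_comm z y] at this
      linarith
  have hxB : x ∈ Metric.closedBall x (ε / 2) := Metric.mem_closedBall_self (by linarith)
  refine ⟨connectedComponentIn B x, ?_, isPreconnected_connectedComponentIn,
    (connectedComponentIn_subset _ _).trans hεU⟩
  -- Off the finitely many other components, a small ball lies in the component of `x`.
  have hrest : IsClosed (⋃ K ∈ 𝒦 \ {connectedComponentIn B x}, K) :=
    (h𝒦.subset sdiff_subset).isClosed_biUnion fun K hK => hclosed K hK.1
  have hxrest : x ∉ ⋃ K ∈ 𝒦 \ {connectedComponentIn B x}, K := by
    simp only [mem_iUnion, not_exists]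
    rintro _ ⟨⟨y, hy, rfl⟩, hne⟩ hx
    exact hne (connectedComponentIn_eq hx)
  filter_upwards [hrest.isOpen_compl.mem_nhds hxrest,
    Metric.closedBall_mem_nhds x (half_pos hε)] with z hz1 hz2
  by_contra hz
  refine hz1 (mem_iUnion₂.2 ⟨connectedComponentIn B z, ⟨⟨z, hz2, rfl⟩, fun h => hz ?_⟩,
    mem_connectedComponentIn (hmem z hz2)⟩)
  rw [← (h : connectedComponentIn B z = connectedComponentIn B x)]
  exact mem_connectedComponentIn (hmem z hz2)

/-- A subcontinuum of a Peano continuum with finitely many circles is itself locally connected. -/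
lemma locallyPathConnectedSpace_of_subcontinuum {Y : Type*} [MetricSpace Y] [CompactSpace Y]
    [LocallyPathConnectedSpace Y] (hfin : {C : Set Y | IsCircleSet C}.Finite) {K : Set Y}
    (hK : IsClosed K) (hKc : IsConnected K) : LocallyPathConnectedSpace K := by
  have : CompactSpace K := isCompact_iff_compactSpace.1 hK.isCompact
  have : ConnectedSpace K := isConnected_iff_connectedSpace.1 hKc
  have : LocallyConnectedSpace K := by
    refine locallyConnectedSpace_of_finite_families fun δ hδ 𝒦 hcl hpre hdisj hbig => ?_
    have hinj : Function.Injective (fun s : Set K => (Subtype.val '' s : Set Y)) :=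
      image_injective.2 Subtype.val_injective
    refine Set.Finite.of_finite_image (f := fun s : Set K => (Subtype.val '' s : Set Y)) ?_
      hinj.injOn
    refine finite_of_disjoint_continua hfin hδ ?_ ?_ ?_ ?_
    · rintro _ ⟨s, hs, rfl⟩
      exact hK.isClosedMap_subtype_val _ (hcl s hs)
    · rintro _ ⟨s, hs, rfl⟩
      exact (hpre s hs).image _ continuous_subtype_val.continuousOn
    · rintro _ ⟨s, hs, rfl⟩ _ ⟨t, ht, rfl⟩ hne
      exact disjoint_image_of_injective Subtype.val_injective
        (hdisj hs ht fun h => hne (by rw [h]))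
    · rintro _ ⟨s, hs, rfl⟩
      obtain ⟨x, hx, y, hy, h⟩ := hbig s hs
      exact ⟨x, ⟨x, hx, rfl⟩, y, ⟨y, hy, rfl⟩, h⟩
  exact locallyPathConnectedSpace_of_peano K

/-! ### The fixed point property of dendrites -/

/-- A connected open set whose closure touches a disjoint path-connected set `T` in two points gives
rise to a circle that meets both sets and avoids a prescribed closed set disjoint from them. -/
lemma exists_circle_of_touching_avoiding {Y : Type*} [MetricSpace Y] [LocallyPathConnectedSpace Y]
    {T W F : Set Y} (hW : IsOpen W) (hWc : IsPreconnected W) (hWT : Disjoint W T) {p q : Y}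
    (hpq : p ≠ q) (hp : p ∈ closure W) (hq : q ∈ closure W) (hj : JoinedIn T p q) (hF : IsClosed F)
    (hFW : Disjoint F W) (hFT : Disjoint F T) :
    ∃ C, IsCircleSet C ∧ (C ∩ W).Nonempty ∧ (C ∩ T).Nonempty ∧ Disjoint F C := by
  have hpF : p ∉ F := fun h => disjoint_left.1 hFT h hj.source_mem
  have hqF : q ∉ F := fun h => disjoint_left.1 hFT h hj.target_mem
  obtain ⟨U, V, hU, hV, haU, hbV, hUV⟩ := t2_separation hpq
  obtain ⟨N₁, hN₁U, hN₁, haN₁, hN₁c⟩ := exists_open_connected ((hU.sdiff hF).mem_nhds ⟨haU, hpF⟩)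
  obtain ⟨N₂, hN₂V, hN₂, hbN₂, hN₂c⟩ := exists_open_connected ((hV.sdiff hF).mem_nhds ⟨hbV, hqF⟩)
  have hN : Disjoint N₁ N₂ := hUV.mono (hN₁U.trans sdiff_subset) (hN₂V.trans sdiff_subset)
  obtain ⟨u, hu1, hu2⟩ := mem_closure_iff.1 hp N₁ hN₁ haN₁
  obtain ⟨v, hv1, hv2⟩ := mem_closure_iff.1 hq N₂ hN₂ hbN₂
  have hc : IsPreconnected (N₁ ∪ W ∪ N₂) :=
    (hN₁c.isPreconnected.union u hu1 hu2 hWc).union v (.inr hv2) hv1 hN₂c.isPreconnected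
  obtain ⟨α, hα, hαi, hα0, hα1, hαU⟩ := exists_arc_in ((hN₁.union hW).union hN₂) hc
    (.inl (.inl haN₁)) (.inr hbN₂) hpq
  obtain ⟨c, hc, hcN⟩ : ∃ c ∈ Icc (0 : ℝ) 1, α c ∉ N₁ ∪ N₂ := by
    by_contra! hcon
    have hpre : IsPreconnected (α '' Icc 0 1) := isPreconnected_Icc.image _ hα.continuousOn
    have hsub : α '' Icc 0 1 ⊆ N₁ ∪ N₂ := by rintro _ ⟨c, hc, rfl⟩; exact hcon c hc
    obtain ⟨z, -, hz⟩ := hpre N₁ N₂ hN₁ hN₂ hsub ⟨α 0, ⟨0, by simp, rfl⟩, hα0 ▸ haN₁⟩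
      ⟨α 1, ⟨1, by simp, rfl⟩, hα1 ▸ hbN₂⟩
    exact disjoint_left.1 hN hz.1 hz.2
  rw [mem_union, not_or] at hcN
  have hcW : α c ∈ W := by
    rcases hαU (mem_image_of_mem α hc) with (h | h) | h
    · exact absurd h hcN.1
    · exact h
    · exact absurd h hcN.2
  have hc0 : c ≠ 0 := by rintro rfl; exact hcN.1 (hα0 ▸ haN₁)
  have hc1 : c ≠ 1 := by rintro rfl; exact hcN.2 (hα1 ▸ hbN₂)
  obtain ⟨β, hβ⟩ := hj
  obtain ⟨C, hC, hCsub, hcC, hCT⟩ := exists_circle_meeting (β := β.extend) hα hαi β.continuous_extend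
    (hα0.trans β.extend_zero.symm) (hα1.trans β.extend_one.symm)
    ⟨lt_of_le_of_ne hc.1 hc0.symm, lt_of_le_of_ne hc.2 hc1⟩ (by
      rintro ⟨t, -, ht⟩
      exact disjoint_left.1 hWT hcW (ht ▸ hβ _))
  have hβT : β.extend '' Icc 0 1 ⊆ T := by
    rintro _ ⟨t, ht, rfl⟩
    rw [Path.extend_apply _ ht]
    exact hβ _
  refine ⟨C, hC, ⟨α c, hcC, hcW⟩, hCT.mono (inter_subset_inter_right _ hβT),
    disjoint_left.2 fun z hzF hzC => ?_⟩
  rcases hCsub hzC with h | h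
  · rcases hαU h with (h | h) | h
    · exact (hN₁U h).2 hzF
    · exact disjoint_left.1 hFW hzF h
    · exact (hN₂V h).2 hzF
  · exact disjoint_left.1 hFT hzF (hβT h)

lemma exists_circle_of_touching {Y : Type*} [MetricSpace Y] [LocallyPathConnectedSpace Y]
    {T W : Set Y} (hW : IsOpen W) (hWc : IsPreconnected W) (hWT : Disjoint W T) {p q : Y}
    (hpq : p ≠ q) (hp : p ∈ closure W) (hq : q ∈ closure W) (hj : JoinedIn T p q) :
    ∃ C, IsCircleSet C ∧ ∃ z ∈ C, z ∉ T := by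
  obtain ⟨C, hC, ⟨z, hzC, hzW⟩, -⟩ := exists_circle_of_touching_avoiding hW hWc hWT hpq hp hq hj
    isClosed_empty (empty_disjoint _) (empty_disjoint _)
  exact ⟨C, hC, z, hzC, disjoint_left.1 hWT hzW⟩

/-- Without circles, the interior points of an arc separate its end points. -/
lemma mem_of_isPreconnected_of_no_circle {Y : Type*} [MetricSpace Y] [LocallyPathConnectedSpace Y]
    (hno : ∀ C : Set Y, ¬ IsCircleSet C) {α : ℝ → Y} (hα : Continuous α)
    (hαi : InjOn α (Icc 0 1)) {t : ℝ} (ht : t ∈ Ioo (0 : ℝ) 1) {C : Set Y} (hC : IsPreconnected C)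
    (h0 : α 0 ∈ C) (h1 : α 1 ∈ C) : α t ∈ C := by
  by_contra htC
  have hsub : C ⊆ {α t}ᶜ := fun z hz h => htC (h ▸ hz)
  have hsub' := hC.subset_connectedComponentIn h0 hsub
  have hop : IsOpen (connectedComponentIn {α t}ᶜ (α 0)) :=
    isOpen_compl_singleton.connectedComponentIn
  obtain ⟨β, hβ, hβ0, hβ1, hβU⟩ := exists_path_in hop isPreconnected_connectedComponentIn
    (hsub' h0) (hsub' h1)
  obtain ⟨C, hC, -⟩ := exists_circle hα hαi hβ hβ0.symm hβ1.symm ht (by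
    rintro ⟨s, -, hs⟩
    exact connectedComponentIn_subset _ _ (hβU s) hs)
  exact hno C hC

/-- A Peano continuum without circles (a dendrite) has the fixed point property. -/
theorem exists_fixedPoint_of_no_circle {D : Type*} [MetricSpace D] [CompactSpace D]
    [ConnectedSpace D] [LocallyPathConnectedSpace D] (hno : ∀ C : Set D, ¬ IsCircleSet C)
    {f : D → D} (hf : Continuous f) : ∃ x, f x = x := by
  obtain ⟨x₀⟩ : Nonempty D := inferInstance
  -- The order induced by the base point: `x ≤ y` if `x` lies on the arc from `x₀` to `y`.
  let r : D → D → Prop := fun x y => ∀ C : Set D, IsPreconnected C → x₀ ∈ C → y ∈ C → x ∈ C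
  have hrefl : ∀ x, r x x := fun x C _ _ h => h
  have htrans : ∀ x y z, r x y → r y z → r x z := fun x y z h1 h2 C hC h0 hz =>
    h1 C hC h0 (h2 C hC h0 hz)
  have hup : ∀ a, {y | r a y} = (connectedComponentIn {a}ᶜ x₀)ᶜ := by
    intro a
    ext y
    constructor
    · intro h hy
      have hx₀ : x₀ ∈ ({a}ᶜ : Set D) := by
        by_contra hx
        rw [connectedComponentIn_eq_empty hx] at hy
        exact hy
      exact connectedComponentIn_subset _ _ (h _ isPreconnected_connectedComponentIn
        (mem_connectedComponentIn hx₀) hy) rfl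
    · intro h C hC h0 hy
      by_contra ha
      exact h (hC.subset_connectedComponentIn h0 (fun z hz (hza : z = a) => ha (hza ▸ hz)) hy)
  have hupc : ∀ a, IsClosed {y | r a y} := fun a => by
    rw [hup]
    exact isOpen_compl_singleton.connectedComponentIn.isClosed_compl
  obtain ⟨⟨m, hm⟩, hmax⟩ := exists_maximal_of_chains_bounded
    (α := {x // r x (f x)}) (r := fun a b => r a.1 b.1) (by
      intro c hc
      rcases c.eq_empty_or_nonempty with rfl | ⟨a₀, ha₀⟩
      · exact ⟨⟨x₀, fun C _ h _ => h⟩, by simp⟩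
      have : Nonempty c := ⟨⟨a₀, ha₀⟩⟩
      obtain ⟨z, hz⟩ := IsCompact.nonempty_iInter_of_directed_nonempty_isCompact_isClosed
        (fun a : c => {y | r a.1.1 y} ∩ closure (Subtype.val '' c)) (by
          intro a b
          have : Std.Refl fun a b : {x // r x (f x)} => r a.1 b.1 := ⟨fun a => hrefl _⟩
          rcases hc.total a.2 b.2 with h | h
          · exact ⟨b, inter_subset_inter_left _ fun y hy => htrans _ _ _ h hy, subset_rfl⟩
          · exact ⟨a, subset_rfl, inter_subset_inter_left _ fun y hy => htrans _ _ _ h hy⟩)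
        (fun a => ⟨a.1.1, hrefl _, subset_closure ⟨a.1, a.2, rfl⟩⟩)
        (fun a => ((hupc _).inter isClosed_closure).isCompact)
        (fun a => (hupc _).inter isClosed_closure)
      rw [mem_iInter] at hz
      refine ⟨⟨z, ?_⟩, fun a ha => (hz ⟨a, ha⟩).1⟩
      have hzc : z ∈ closure (Subtype.val '' c) := (hz ⟨a₀, ha₀⟩).2
      by_contra hzS
      have hfz : f z ∈ connectedComponentIn {z}ᶜ x₀ := by
        by_contra h
        have : f z ∈ {y | r z y} := by rw [hup]; exact h
        exact hzS this
      have hop : IsOpen (connectedComponentIn {z}ᶜ x₀) :=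
        isOpen_compl_singleton.connectedComponentIn
      have hx₀ : x₀ ∈ connectedComponentIn {z}ᶜ x₀ :=
        mem_connectedComponentIn (connectedComponentIn_nonempty_iff.1 ⟨_, hfz⟩)
      obtain ⟨β, hβ, hβ0, hβ1, hβU⟩ := exists_path_in hop isPreconnected_connectedComponentIn
        hx₀ hfz
      obtain ⟨ε, hε, hεU⟩ := Metric.nhds_basis_closedBall.mem_iff.1 (hop.mem_nhds hfz)
      obtain ⟨V, hVε, hV, hzV, hVc⟩ := exists_open_connected (Metric.closedBall_mem_nhds (f z) hε)
      have hVcl : closure V ⊆ connectedComponentIn {z}ᶜ x₀ :=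
        (closure_minimal hVε Metric.isClosed_closedBall).trans hεU
      have hβcl : IsClosed (β '' Icc 0 1) := (isCompact_Icc.image hβ).isClosed
      have hzE : z ∉ β '' Icc 0 1 ∪ closure V := by
        rintro (⟨t, -, ht⟩ | h)
        · exact connectedComponentIn_subset _ _ (hβU t) ht
        · exact connectedComponentIn_subset _ _ (hVcl h) rfl
      have hE : IsPreconnected (β '' Icc 0 1 ∪ V) :=
        (isPreconnected_Icc.image _ hβ.continuousOn).union (f z) ⟨1, by simp, hβ1⟩ hzV
          hVc.isPreconnected
      obtain ⟨_, ⟨ha1, ha2⟩, ⟨a, hac, rfl⟩⟩ := mem_closure_iff.1 hzc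
        ((β '' Icc 0 1 ∪ closure V)ᶜ ∩ f ⁻¹' V)
        ((hβcl.union isClosed_closure).isOpen_compl.inter (hV.preimage hf)) ⟨hzE, hzV⟩
      exact ha1 (union_subset_union_right _ subset_closure
        (a.2 _ hE (.inl ⟨0, by simp, hβ0⟩) (.inr ha2)))) (fun h1 h2 => htrans _ _ _ h1 h2)
  refine ⟨m, ?_⟩
  by_contra hne
  obtain ⟨α, hα, hαi, hα0, hα1, -⟩ := exists_arc_in (Y := D) isOpen_univ isPreconnected_univ
    (mem_univ m) (mem_univ (f m)) (Ne.symm hne)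
  obtain ⟨U, V', hU, hV', hmU, hfV', hUV⟩ := t2_separation (Ne.symm hne)
  obtain ⟨V, hVV', hV, hfV, hVc⟩ := exists_open_connected (hV'.mem_nhds hfV')
  have hev : ∀ᶠ t in 𝓝[>] (0 : ℝ), α t ∈ U ∧ f (α t) ∈ V ∧ t < 1 := by
    refine Filter.Eventually.filter_mono nhdsWithin_le_nhds ?_
    refine (hα.continuousAt.eventually (hU.mem_nhds (hα0.symm ▸ hmU))).and
      (((hf.comp hα).continuousAt.eventually (hV.mem_nhds ?_)).and
        (gt_mem_nhds one_pos))
    simpa [hα0] using hfV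
  obtain ⟨t, ⟨htU, htV, ht1⟩, ht0⟩ := (hev.and self_mem_nhdsWithin).exists
  have ht0 : 0 < t := ht0
  have hmt : r m (α t) := by
    intro C hC h0 ht
    have hE : IsPreconnected (C ∪ α '' Icc t 1) :=
      hC.union (α t) ht ⟨t, ⟨le_rfl, ht1.le⟩, rfl⟩ (isPreconnected_Icc.image _ hα.continuousOn)
    rcases hm _ hE (.inl h0) (.inr ⟨1, ⟨ht1.le, le_rfl⟩, hα1⟩) with h | ⟨s, hs, hsm⟩
    · exact h
    · have := hαi ⟨ht0.le.trans hs.1, hs.2⟩ ⟨le_rfl, zero_le_one⟩ (hsm.trans hα0.symm)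
      linarith [hs.1]
  have htS : r (α t) (f (α t)) := by
    intro C hC h0 ht
    have hE : IsPreconnected (C ∪ V) := hC.union _ ht htV hVc.isPreconnected
    have hmE : m ∈ C ∪ V := hm _ hE (.inl h0) (.inr hfV)
    rcases mem_of_isPreconnected_of_no_circle hno hα hαi ⟨ht0, ht1⟩ hE (hα0.symm ▸ hmE)
      (hα1.symm ▸ .inr hfV) with h | h
    · exact h
    · exact absurd (hVV' h) (disjoint_left.1 hUV htU)
  have htm : r (α t) m := hmax ⟨α t, htS⟩ hmt
  have hne' : m ≠ α t := fun h => by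
    have := hαi ⟨le_rfl, zero_le_one⟩ ⟨ht0.le, ht1.le⟩ (hα0.trans h)
    linarith
  have hx₀m : x₀ ≠ m := by
    rintro rfl
    exact hne' (htm {x₀} isPreconnected_singleton rfl rfl).symm
  obtain ⟨δ, hδ, hδi, hδ0, hδ1, -⟩ := exists_arc_in (Y := D) isOpen_univ isPreconnected_univ
    (mem_univ x₀) (mem_univ m) hx₀m
  obtain ⟨s, hs, hst⟩ := htm (δ '' Icc 0 1) (isPreconnected_Icc.image _ hδ.continuousOn)
    ⟨0, by simp, hδ0⟩ ⟨1, by simp, hδ1⟩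
  obtain ⟨u, hu, hum⟩ := hmt (δ '' Icc 0 s) (isPreconnected_Icc.image _ hδ.continuousOn)
    ⟨0, ⟨le_rfl, hs.1⟩, hδ0⟩ ⟨s, ⟨hs.1, le_rfl⟩, hst⟩
  have hu1 := hδi ⟨hu.1, hu.2.trans hs.2⟩ ⟨zero_le_one, le_rfl⟩ (hum.trans hδ1.symm)
  have hs1 : s = 1 := le_antisymm hs.2 (hu1 ▸ hu.2)
  exact hne' (by rw [← hst, hs1, hδ1])

/-! ### Minimal maps -/

/-- Minimality of a self-map of a whole space: no nonempty proper closed invariant subsets. -/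
def MinimalMap {K : Type*} [TopologicalSpace K] (g : K → K) : Prop :=
  ∀ N : Set K, IsClosed N → N.Nonempty → MapsTo g N N → N = univ

lemma MinimalMap.exists_iterate_mem {K : Type*} [TopologicalSpace K] {g : K → K}
    (hg : MinimalMap g) (hc : Continuous g) {U : Set K} (hU : IsOpen U) (hne : U.Nonempty)
    (x : K) : ∃ n, 0 < n ∧ g^[n] x ∈ U := by
  have h : closure (range fun n => g^[n + 1] x) = univ := by
    refine hg _ isClosed_closure ⟨_, subset_closure ⟨0, rfl⟩⟩ (MapsTo.closure ?_ hc)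
    rintro _ ⟨n, rfl⟩
    exact ⟨n + 1, by simp only [Function.iterate_succ_apply']⟩
  obtain ⟨y, hy⟩ := hne
  obtain ⟨_, hz, ⟨n, rfl⟩⟩ := mem_closure_iff.1 (h ▸ mem_univ y) U hU hy
  exact ⟨n + 1, n.succ_pos, hz⟩

lemma minimalMap_of_exists_iterate_mem {K : Type*} [TopologicalSpace K] {g : K → K}
    (h : ∀ U : Set K, IsOpen U → U.Nonempty → ∀ x, ∃ n, g^[n] x ∈ U) : MinimalMap g := by
  intro N hN ⟨x, hx⟩ hm
  by_contra hne
  obtain ⟨n, hn⟩ := h Nᶜ hN.isOpen_compl (nonempty_compl.2 hne) x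
  exact hn (hm.iterate n hx)

lemma MinimalMap.surjective {K : Type*} [TopologicalSpace K] [CompactSpace K] [T2Space K]
    [Nonempty K] {g : K → K} (hg : MinimalMap g) (hc : Continuous g) : Function.Surjective g :=
  range_eq_univ.1 (hg _ (isCompact_range hc).isClosed (range_nonempty g) fun _ _ => ⟨_, rfl⟩)

lemma MinimalMap.finite_of_periodic {K : Type*} [TopologicalSpace K] [T1Space K] {g : K → K}
    (hg : MinimalMap g) {x : K} {n : ℕ} (hn : 0 < n) (hx : g^[n] x = x) : Finite K := by
  have hfin : (range fun i : Fin n => g^[i] x).Finite := finite_range _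
  have := hg (range fun i : Fin n => g^[i] x) hfin.isClosed ⟨x, ⟨0, hn⟩, rfl⟩ (by
    rintro _ ⟨i, rfl⟩
    refine ⟨⟨(i + 1) % n, Nat.mod_lt _ hn⟩, ?_⟩
    have h1 : Function.IsPeriodicPt g n x := hx
    simp only [h1.iterate_mod_apply, Function.iterate_succ_apply'])
  rw [this] at hfin
  exact finite_univ_iff.1 hfin

lemma MinimalMap.finite_of_isolated {K : Type*} [TopologicalSpace K] [T1Space K] {g : K → K}
    (hg : MinimalMap g) (hc : Continuous g) {x : K} (hx : IsOpen {x}) : Finite K := by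
  obtain ⟨n, hn, h⟩ := hg.exists_iterate_mem hc hx (singleton_nonempty x) x
  exact hg.finite_of_periodic hn h

/-- Minimal maps of compact spaces are irreducible. -/
lemma MinimalMap.irreducible {K : Type*} [TopologicalSpace K] [CompactSpace K] [Nonempty K]
    {g : K → K} (hg : MinimalMap g) (hc : Continuous g) {A : Set K} (hA : IsClosed A)
    (hAs : ∀ y, ∃ x ∈ A, g x = y) : A = univ := by
  by_contra hne
  -- By surjectivity on `A` there are arbitrarily long, hence infinite, orbits inside `A`.
  have hlong : ∀ n, ∀ y, ∃ x, g^[n + 1] x = y ∧ ∀ i ≤ n, g^[i] x ∈ A := by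
    intro n
    induction n with
    | zero =>
      intro y
      obtain ⟨x, hx, rfl⟩ := hAs y
      exact ⟨x, rfl, fun i hi => by rwa [Nat.le_zero.1 hi]⟩
    | succ n ih =>
      intro y
      obtain ⟨x, hx, hxA⟩ := ih y
      obtain ⟨z, hz, hzx⟩ := hAs x
      refine ⟨z, by rw [Function.iterate_succ_apply, hzx, hx], fun i hi => ?_⟩
      cases i with
      | zero => exact hz
      | succ i => rw [Function.iterate_succ_apply, hzx]; exact hxA i (by omega)
  obtain ⟨x, hx⟩ := IsCompact.nonempty_iInter_of_sequence_nonempty_isCompact_isClosed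
    (fun n => ⋂ i ∈ Iic n, g^[i] ⁻¹' A)
    (fun n => biInter_subset_biInter_left fun i hi => le_trans (mem_Iic.1 hi) n.le_succ)
    (fun n => by
      obtain ⟨x, -, hx⟩ := hlong n (Classical.arbitrary K)
      exact ⟨x, mem_iInter₂.2 hx⟩)
    (isClosed_biInter fun i _ => hA.preimage (hc.iterate i)).isCompact
    (fun n => isClosed_biInter fun i _ => hA.preimage (hc.iterate i))
  obtain ⟨n, -, hn⟩ := hg.exists_iterate_mem hc hA.isOpen_compl (nonempty_compl.2 hne) x
  exact hn (mem_iInter₂.1 (mem_iInter.1 hx n) n (mem_Iic.2 le_rfl))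

/-! ### Minimal maps of continua with finitely many circles -/

/-- Two points of the same fibre cannot both be accumulated by larger values if no open set can
be dropped without losing values. -/
lemma false_of_two_up {K : Type*} [TopologicalSpace K] [T2Space K] [LocallyConnectedSpace K]
    {N : Set K} (hN : IsOpen N) {h : K → ℝ} (hh : ContinuousOn h N)
    (hir : ∀ A ⊆ N, IsOpen A → A.Nonempty → ¬ ∀ z ∈ A, ∃ z' ∈ N \ A, h z' = h z) {x y : K}
    (hx : x ∈ N) (hy : y ∈ N) (hxy : x ≠ y) (hv : h x = h y) (hxu : ∃ᶠ z in 𝓝 x, h x < h z)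
    (hyu : ∃ᶠ z in 𝓝 y, h x < h z) : False := by
  obtain ⟨U, V, hU, hV, hxU, hyV, hUV⟩ := t2_separation hxy
  obtain ⟨N₁, hN₁U, hN₁, hxN₁, hN₁c⟩ := exists_open_connected
    (Filter.inter_mem (hU.mem_nhds hxU) (hN.mem_nhds hx))
  obtain ⟨N₂, hN₂V, hN₂, hyN₂, hN₂c⟩ := exists_open_connected
    (Filter.inter_mem (hV.mem_nhds hyV) (hN.mem_nhds hy))
  obtain ⟨u, hu, hu1⟩ := (hxu.and_eventually (hN₁.mem_nhds hxN₁)).exists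
  obtain ⟨w, hw, hw2⟩ := (hyu.and_eventually (hN₂.mem_nhds hyN₂)).exists
  have h1 : Icc (h x) (h u) ⊆ h '' N₁ := (hN₁c.isPreconnected.image h
    (hh.mono fun z hz => (hN₁U hz).2)).Icc_subset ⟨x, hxN₁, rfl⟩ ⟨u, hu1, rfl⟩
  have h2 : Icc (h x) (h w) ⊆ h '' N₂ := (hN₂c.isPreconnected.image h
    (hh.mono fun z hz => (hN₂V hz).2)).Icc_subset ⟨y, hyN₂, hv.symm⟩ ⟨w, hw2, rfl⟩
  -- The values slightly above `h x` taken near `x` are taken near `y` as well.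
  have hA : IsOpen (N₁ ∩ h ⁻¹' Ioo (h x) (min (h u) (h w))) :=
    (hh.mono fun z hz => (hN₁U hz).2).isOpen_inter_preimage hN₁ isOpen_Ioo
  refine hir _ (fun z hz => (hN₁U hz.1).2) hA ?_ ?_
  · obtain ⟨c, hc⟩ := nonempty_Ioo.2 (lt_min hu hw)
    obtain ⟨z, hz, rfl⟩ := h1 ⟨hc.1.le, hc.2.le.trans (min_le_left _ _)⟩
    exact ⟨z, hz, hc⟩
  · rintro z ⟨hz1, hz2⟩
    obtain ⟨z', hz', hzz'⟩ := h2 ⟨hz2.1.le, hz2.2.le.trans (min_le_right _ _)⟩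
    exact ⟨z', ⟨(hN₂V hz').2, fun h' => disjoint_left.1 hUV (hN₁U h'.1).1 (hN₂V hz').1⟩, hzz'⟩

/-- A real function from which no nonempty open set can be dropped without losing values is
injective on a connected open set: a point at which only larger values accumulate and one at which
only smaller values accumulate would separate it. -/
lemma injOn_of_irreducible {K : Type*} [TopologicalSpace K] [T2Space K] [LocallyConnectedSpace K]
    (hK : ∀ x : K, ¬ IsOpen {x}) {N : Set K} (hN : IsOpen N) (hNc : IsPreconnected N) {h : K → ℝ}
    (hh : ContinuousOn h N)
    (hir : ∀ A ⊆ N, IsOpen A → A.Nonempty → ¬ ∀ z ∈ A, ∃ z' ∈ N \ A, h z' = h z) :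
    InjOn h N := by
  have hup : ∀ x ∈ N, ∀ y ∈ N, x ≠ y → h x = h y → (∃ᶠ z in 𝓝 x, h x < h z) →
      ¬ ∃ᶠ z in 𝓝 y, h y < h z := fun x hx y hy hxy hv h1 h2 =>
    false_of_two_up hN hh hir hx hy hxy hv h1 (hv ▸ h2)
  have hdown : ∀ x ∈ N, ∀ y ∈ N, x ≠ y → h x = h y → (∃ᶠ z in 𝓝 x, h z < h x) →
      ¬ ∃ᶠ z in 𝓝 y, h z < h y := by
    intro x hx y hy hxy hv h1 h2
    refine false_of_two_up (h := fun z => - h z) hN hh.neg ?_ hx hy hxy (by simp [hv])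
      (by simpa using h1) (by simpa [hv] using h2)
    simpa using hir
  have hor : ∀ x ∈ N, (∃ᶠ z in 𝓝 x, h x < h z) ∨ (∃ᶠ z in 𝓝 x, h z < h x) := by
    intro x hx
    by_contra! hcon
    obtain ⟨A, hA, hAo, hxA⟩ := eventually_nhds_iff.1
      ((hcon.1.and hcon.2).and (hN.eventually_mem hx))
    refine hir (A \ {x}) (fun z hz => (hA z hz.1).2) (hAo.sdiff isClosed_singleton) ?_ ?_
    · by_contra hemp
      refine hK x ?_
      have : A = {x} := by
        refine subset_antisymm (fun z hz => ?_) (singleton_subset_iff.2 hxA)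
        by_contra hzx
        exact hemp ⟨z, hz, hzx⟩
      rwa [← this]
    · intro z hz
      refine ⟨x, ⟨hx, fun h' => h'.2 rfl⟩, ?_⟩
      have := hA z hz.1
      linarith [this.1.1, this.1.2]
  have key : ∀ x ∈ N, ∀ y ∈ N, h x = h y → x ≠ y → (∃ᶠ z in 𝓝 x, h x < h z) → False := by
    intro x hx y hy hv hxy hxu
    have hyu := hup x hx y hy hxy hv hxu
    have hyd := (hor y hy).resolve_left hyu
    have hxd := hdown y hy x hx hxy.symm hv.symm hyd
    have hthird : ∀ z ∈ N, h z = h x → z = x ∨ z = y := by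
      intro z hz hzv
      by_contra! hne
      rcases hor z hz with h1 | h1
      · exact hup x hx z hz hne.1.symm hzv.symm hxu h1
      · exact hdown y hy z hz hne.2.symm (hv.symm.trans hzv.symm) hyd h1
    rw [Filter.not_frequently] at hyu hxd
    obtain ⟨U, V, hU, hV, hxU, hyV, hUV⟩ := t2_separation hxy
    obtain ⟨A, hA, hAo, hxA⟩ := eventually_nhds_iff.1
      (hxd.and ((hU.eventually_mem hxU).and (hN.eventually_mem hx)))
    obtain ⟨B, hB, hBo, hyB⟩ := eventually_nhds_iff.1
      (hyu.and ((hV.eventually_mem hyV).and (hN.eventually_mem hy)))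
    -- No other point of `N` has the value `h x`, and near `x` the values are at least `h x`, near
    -- `y` at most `h x`, so these two open sets split `N`.
    have hP : IsOpen ((N ∩ h ⁻¹' Ioi (h x)) ∪ A) :=
      (hh.isOpen_inter_preimage hN isOpen_Ioi).union hAo
    have hQ : IsOpen ((N ∩ h ⁻¹' Iio (h x)) ∪ B) :=
      (hh.isOpen_inter_preimage hN isOpen_Iio).union hBo
    obtain ⟨z, hzN, hz1, hz2⟩ := hNc _ _ hP hQ (by
      intro z hz
      rcases lt_trichotomy (h z) (h x) with h1 | h1 | h1
      · exact .inr (.inl ⟨hz, h1⟩)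
      · rcases hthird z hz h1 with rfl | rfl
        · exact .inl (.inr hxA)
        · exact .inr (.inr hyB)
      · exact .inl (.inl ⟨hz, h1⟩)) ⟨x, hx, .inr hxA⟩ ⟨y, hy, .inr hyB⟩
    have hge : ∀ z, z ∈ N ∩ h ⁻¹' Ioi (h x) ∪ A → h x ≤ h z ∧ (h x = h z → z = x) := by
      rintro z (hz | hz)
      · exact ⟨(mem_Ioi.1 hz.2).le, fun h' => absurd h' (mem_Ioi.1 hz.2).ne⟩
      · refine ⟨not_lt.1 (hA z hz).1, fun h' => (hthird z (hA z hz).2.2 h'.symm).resolve_right ?_⟩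
        rintro rfl
        exact disjoint_left.1 hUV (hA _ hz).2.1 hyV
    have hle : ∀ z, z ∈ N ∩ h ⁻¹' Iio (h x) ∪ B → h z ≤ h x ∧ (h x = h z → z = y) := by
      rintro z (hz | hz)
      · exact ⟨(mem_Iio.1 hz.2).le, fun h' => absurd h'.symm (mem_Iio.1 hz.2).ne⟩
      · refine ⟨hv ▸ not_lt.1 (hB z hz).1,
          fun h' => (hthird z (hB z hz).2.2 h'.symm).resolve_left ?_⟩
        rintro rfl
        exact disjoint_left.1 hUV hxU (hB _ hz).2.1
    have he : h x = h z := le_antisymm (hge z hz1).1 (hle z hz2).1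
    exact hxy (((hge z hz1).2 he).symm.trans ((hle z hz2).2 he))
  intro x hx y hy hv
  by_contra hxy
  rcases hor x hx with h1 | h1
  · exact key x hx y hy hv hxy h1
  · refine key y hy x hx hv.symm (Ne.symm hxy) ((hor y hy).resolve_right ?_)
    exact hdown x hx y hy hxy hv h1

/-- The points having a neighbourhood that injects continuously into the line. -/
def lineLike (K : Type*) [TopologicalSpace K] : Set K :=
  {x | ∃ U : Set K, IsOpen U ∧ x ∈ U ∧ ∃ j : K → ℝ, ContinuousOn j U ∧ InjOn j U}

lemma isOpen_lineLike {K : Type*} [TopologicalSpace K] : IsOpen (lineLike K) := by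
  refine isOpen_iff_forall_mem_open.2 ?_
  rintro x ⟨U, hU, hx, j, hj, hi⟩
  exact ⟨U, fun y hy => ⟨U, hU, hy, j, hj, hi⟩, hU, hx⟩

/-- A minimal map, being irreducible, maps points which are not line-like to such points. -/
lemma mem_lineLike_of_map {K : Type*} [TopologicalSpace K] [CompactSpace K] [T2Space K]
    [LocallyConnectedSpace K] (hK : ∀ x : K, ¬ IsOpen {x}) {g : K → K} (hg : MinimalMap g)
    (hc : Continuous g) {b : K} (hb : g b ∈ lineLike K) : b ∈ lineLike K := by
  have : Nonempty K := ⟨b⟩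
  obtain ⟨U, hU, hbU, j, hj, hji⟩ := hb
  obtain ⟨N, hNU, hN, hbN, hNc⟩ := exists_open_connected ((hU.preimage hc).mem_nhds hbU)
  have hcont : ContinuousOn (j ∘ g) N := hj.comp hc.continuousOn hNU
  refine ⟨N, hN, hbN, j ∘ g, hcont, injOn_of_irreducible hK hN hNc.isPreconnected hcont ?_⟩
  intro A hAN hA hAne h
  have : Aᶜ = univ := by
    refine hg.irreducible hc hA.isClosed_compl fun y => ?_
    obtain ⟨x, rfl⟩ := hg.surjective hc y
    by_cases hx : x ∈ A
    · obtain ⟨x', hx', he⟩ := h x hx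
      exact ⟨x', hx'.2, hji (hNU hx'.1) (hNU (hAN hx)) he⟩
    · exact ⟨x, hx, rfl⟩
  obtain ⟨x, hx⟩ := hAne
  exact (this ▸ mem_univ x : x ∈ Aᶜ) hx

lemma exists_Ioo_subset_image {h : ℝ → ℝ} {a b s : ℝ} (hs : s ∈ Ioo a b)
    (hc : ContinuousOn h (Icc a b)) (hi : InjOn h (Icc a b)) :
    ∃ c d, h s ∈ Ioo c d ∧ Ioo c d ⊆ h '' Icc a b := by
  have hab := hs.1.trans hs.2
  rcases hc.strictMonoOn_of_injOn_Icc' hab.le hi with hm | hm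
  · exact ⟨h a, h b, ⟨hm ⟨le_rfl, hab.le⟩ ⟨hs.1.le, hs.2.le⟩ hs.1,
      hm ⟨hs.1.le, hs.2.le⟩ ⟨hab.le, le_rfl⟩ hs.2⟩,
      Ioo_subset_Icc_self.trans (intermediate_value_Icc hab.le hc)⟩
  · exact ⟨h b, h a, ⟨hm ⟨hs.1.le, hs.2.le⟩ ⟨hab.le, le_rfl⟩ hs.2,
      hm ⟨le_rfl, hab.le⟩ ⟨hs.1.le, hs.2.le⟩ hs.1⟩,
      Ioo_subset_Icc_self.trans (intermediate_value_Icc' hab.le hc)⟩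

lemma injOn_coe_addCircle {a b : ℝ} (hab : b - a < 1) :
    InjOn (fun t : ℝ => (t : AddCircle (1 : ℝ))) (Icc a b) := by
  intro s hs t ht h
  obtain ⟨n, hn⟩ := AddSubgroup.mem_zmultiples_iff.1 (QuotientAddGroup.eq_iff_sub_mem.1 h)
  rw [zsmul_one] at hn
  have h1 : n < 1 := by
    have : (n : ℝ) < 1 := by linarith [hs.2, ht.1]
    exact_mod_cast this
  have h2 : -1 < n := by
    have : (-1 : ℝ) < n := by linarith [hs.1, ht.2]
    exact_mod_cast this
  have h0 : n = 0 := by omega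
  rw [h0, Int.cast_zero] at hn
  linarith

/-- A circle consisting of line-like points is open. -/
lemma isOpen_circle_of_lineLike {K : Type*} [TopologicalSpace K] [T2Space K] {C : Set K}
    (hC : IsCircleSet C) (hCl : C ⊆ lineLike K) : IsOpen C := by
  obtain ⟨p, hp, hpi, rfl⟩ := isCircleSet_iff.1 hC
  refine isOpen_iff_mem_nhds.2 ?_
  rintro _ ⟨s, rfl⟩
  obtain ⟨s, rfl⟩ := QuotientAddGroup.mk_surjective s
  obtain ⟨U, hU, hsU, j, hj, hji⟩ := hCl (mem_range_self (s : AddCircle (1 : ℝ)))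
  let P : ℝ → K := fun t => p t
  have hP : Continuous P := hp.comp (AddCircle.continuous_mk' 1)
  obtain ⟨ε, hε, hεU⟩ := Metric.isOpen_iff.1 (hU.preimage hP) s hsU
  set δ := min (ε / 2) (1 / 4) with hδ
  have hδ0 : 0 < δ := lt_min (half_pos hε) (by norm_num)
  have hsub : Icc (s - δ) (s + δ) ⊆ P ⁻¹' U := fun t ht => hεU (by
    rw [Metric.mem_ball, Real.dist_eq, abs_lt]
    have : δ ≤ ε / 2 := min_le_left _ _
    constructor <;> linarith [ht.1, ht.2])
  have hPi : InjOn P (Icc (s - δ) (s + δ)) := fun x hx y hy h =>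
    injOn_coe_addCircle (by linarith [min_le_right (ε / 2) (1 / 4 : ℝ)]) hx hy (hpi h)
  obtain ⟨c, d, hcd, himg⟩ := exists_Ioo_subset_image (h := j ∘ P)
    (⟨by linarith, by linarith⟩ : s ∈ Ioo (s - δ) (s + δ)) (hj.comp hP.continuousOn hsub)
    (hji.comp hPi hsub)
  filter_upwards [(hj.isOpen_inter_preimage hU isOpen_Ioo).mem_nhds ⟨hsU, hcd⟩] with z hz
  obtain ⟨t, ht, htz⟩ := himg hz.2
  exact ⟨t, hji (hsub ht) hz.1 htz⟩

lemma interior_arc_eq_empty {K : Type*} [TopologicalSpace K] [T2Space K]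
    (hO : lineLike K = ∅) {α : ℝ → K} {a b : ℝ} (hα : Continuous α) (hi : InjOn α (Icc a b)) :
    interior (α '' Icc a b) = ∅ := by
  by_contra hne
  obtain ⟨x, hx⟩ := nonempty_iff_ne_empty.2 hne
  have : x ∈ lineLike K := by
    refine ⟨_, isOpen_interior, hx, Function.invFunOn α (Icc a b), ?_, ?_⟩
    · refine ContinuousOn.mono ?_ interior_subset
      refine continuousOn_iff_isClosed.2 fun t ht => ⟨α '' (Icc a b ∩ t),
        ((isCompact_Icc.inter_right ht).image hα).isClosed, ?_⟩
      ext y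
      constructor
      · rintro ⟨h, hy⟩
        exact ⟨⟨_, ⟨Function.invFunOn_mem hy, h⟩, Function.invFunOn_eq hy⟩, hy⟩
      · rintro ⟨⟨s, ⟨hs, hst⟩, rfl⟩, hy⟩
        refine ⟨?_, hy⟩
        have : Function.invFunOn α (Icc a b) (α s) = s :=
          hi (Function.invFunOn_mem hy) hs (Function.invFunOn_eq hy)
        rwa [mem_preimage, this]
    · intro y hy z hz h
      have h1 : α (Function.invFunOn α (Icc a b) y) = y :=
        Function.invFunOn_eq (interior_subset hy : y ∈ α '' Icc a b)
      have h2 : α (Function.invFunOn α (Icc a b) z) = z :=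
        Function.invFunOn_eq (interior_subset hz : z ∈ α '' Icc a b)
      rw [← h1, h, h2]
  rw [hO] at this
  exact this

lemma interior_circle_eq_empty {K : Type*} [TopologicalSpace K] [T2Space K]
    (hO : lineLike K = ∅) {C : Set K} (hC : IsCircleSet C) : interior C = ∅ := by
  obtain ⟨p, hp, hpi, rfl⟩ := isCircleSet_iff.1 hC
  have hP : Continuous fun t : ℝ => p t := hp.comp (AddCircle.continuous_mk' 1)
  have harc : ∀ a b : ℝ, b - a < 1 → interior ((fun t : ℝ => p t) '' Icc a b) = ∅ :=
    fun a b hab => interior_arc_eq_empty hO hP fun x hx y hy h =>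
      injOn_coe_addCircle hab hx hy (hpi h)
  have : range p = (fun t : ℝ => p t) '' Icc 0 (1 / 2) ∪ (fun t : ℝ => p t) '' Icc (1 / 2) 1 := by
    rw [← image_union, Icc_union_Icc_eq_Icc (by norm_num) (by norm_num)]
    have := AddCircle.coe_image_Icc_eq (1 : ℝ) 0
    rw [← image_univ, ← this, image_image]
    simp
  rw [this, interior_union_isClosed_of_interior_empty
    (isCompact_Icc.image hP).isClosed (harc _ _ (by norm_num)), harc _ _ (by norm_num)]

/-- In a Peano continuum without line-like points, finitely many circles lie in a nowhere dense
path-connected closed set. -/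
lemma exists_nowhereDense_tree {K : Type*} [MetricSpace K] [CompactSpace K] [ConnectedSpace K]
    [LocallyPathConnectedSpace K] (hK : ∀ x : K, ¬ IsOpen {x}) (hO : lineLike K = ∅)
    {𝒞 : Set (Set K)} (h𝒞 : 𝒞.Finite) :
    (∀ C ∈ 𝒞, IsCircleSet C) → ∃ T : Set K, IsClosed T ∧ IsPathConnected T ∧ interior T = ∅ ∧
      ∀ C ∈ 𝒞, C ⊆ T := by
  induction 𝒞, h𝒞 using Set.Finite.induction_on with
  | empty =>
    intro _
    obtain ⟨x₀⟩ : Nonempty K := inferInstance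
    refine ⟨{x₀}, isClosed_singleton, isPathConnected_singleton _, ?_, by simp⟩
    by_contra hne
    rcases subset_singleton_iff_eq.1 (interior_subset (s := ({x₀} : Set K))) with h | h
    · exact hne h
    · exact hK x₀ (interior_eq_iff_isOpen.1 h)
  | @insert C 𝒞 _ _ ih =>
    intro hC
    obtain ⟨T, hT, hTp, hTi, hTC⟩ := ih fun C' h => hC C' (mem_insert_of_mem _ h)
    have hCc := hC C (mem_insert _ _)
    have hCcl := hCc.isCompact.isClosed
    have hCi := interior_circle_eq_empty hO hCc
    have hCp : IsPathConnected C := by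
      obtain ⟨p, hp, -, rfl⟩ := isCircleSet_iff.1 hCc
      have : range p = range (fun t : ℝ => p t) := by
        ext z
        constructor
        · rintro ⟨s, rfl⟩
          obtain ⟨s, rfl⟩ := QuotientAddGroup.mk_surjective s
          exact ⟨s, rfl⟩
        · rintro ⟨s, rfl⟩
          exact ⟨s, rfl⟩
      rw [this]
      exact isPathConnected_range (hp.comp (AddCircle.continuous_mk' 1))
    obtain ⟨x, hx⟩ := hTp.nonempty
    obtain ⟨y, hy⟩ := hCp.nonempty
    by_cases hxy : x = y
    · refine ⟨T ∪ C, hT.union hCcl, hTp.union hCp ⟨x, hx, hxy ▸ hy⟩, ?_, ?_⟩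
      · rw [interior_union_isClosed_of_interior_empty hT hCi, hTi]
      · rintro C' (rfl | h)
        · exact subset_union_right
        · exact (hTC _ h).trans subset_union_left
    obtain ⟨α, hα, hαi, rfl, rfl, -⟩ := exists_arc_in (Y := K) isOpen_univ isPreconnected_univ
      (mem_univ x) (mem_univ y) hxy
    have hAp : IsPathConnected (α '' Icc 0 1) :=
      ((convex_Icc (0 : ℝ) 1).isPathConnected ⟨0, by simp⟩).image hα
    have hAcl : IsClosed (α '' Icc 0 1) := (isCompact_Icc.image hα).isClosed
    refine ⟨T ∪ α '' Icc 0 1 ∪ C, (hT.union hAcl).union hCcl,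
      (hTp.union hAp ⟨_, hx, 0, by simp, rfl⟩).union hCp ⟨_, .inr ⟨1, by simp, rfl⟩, hy⟩, ?_, ?_⟩
    · rw [interior_union_isClosed_of_interior_empty (hT.union hAcl) hCi,
        interior_union_isClosed_of_interior_empty hT (interior_arc_eq_empty hO hα hαi), hTi]
    · rintro C' (rfl | h)
      · exact subset_union_right
      · exact (hTC _ h).trans (subset_union_left.trans subset_union_left)

/-- A nondegenerate Peano continuum with finitely many circles which admits a minimal map is a
circle. -/
theorem isCircleSet_univ_of_minimalMap {K : Type*} [MetricSpace K] [CompactSpace K]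
    [ConnectedSpace K] [Nontrivial K] [LocallyPathConnectedSpace K]
    (hfin : {C : Set K | IsCircleSet C}.Finite) {g : K → K} (hc : Continuous g)
    (hg : MinimalMap g) : IsCircleSet (univ : Set K) := by
  have hinf : ¬ Finite K := fun h => by
    exact not_subsingleton K (subsingleton_univ_iff.1 isPreconnected_univ.subsingleton)
  have hK : ∀ x : K, ¬ IsOpen {x} := fun x hx => hinf (hg.finite_of_isolated hc hx)
  have hper : ∀ x : K, ∀ n, 0 < n → g^[n] x ≠ x := fun x n hn h =>
    hinf (hg.finite_of_periodic hn h)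
  by_cases hO : lineLike K = ∅
  · exfalso
    obtain ⟨T, hT, hTp, hTi, hTC⟩ := exists_nowhereDense_tree hK hO hfin fun C hC => hC
    obtain ⟨z, hz⟩ : ∃ z, z ∉ T := by
      by_contra! h
      rw [eq_univ_of_forall h, interior_univ] at hTi
      exact univ_nonempty.ne_empty hTi
    -- The component `W` of the complement of the tree `T` touches `T` at a single point `b`, as two
    -- such points would lie on a circle not contained in `T`; so `closure W` contains no circle.
    set W := connectedComponentIn Tᶜ z with hWdef
    have hW : IsOpen W := hT.isOpen_compl.connectedComponentIn
    have hWT : W ⊆ Tᶜ := connectedComponentIn_subset _ _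
    have hzW : z ∈ W := mem_connectedComponentIn hz
    have hcl : ∀ x ∈ closure W, x ∉ W → x ∈ T := by
      intro x hx hxW
      by_contra hxT
      obtain ⟨y, hy1, hy2⟩ := mem_closure_iff.1 hx _ hT.isOpen_compl.connectedComponentIn
        (mem_connectedComponentIn (hxT : x ∈ Tᶜ))
      refine hxW ?_
      rw [hWdef, connectedComponentIn_eq hy2, ← connectedComponentIn_eq hy1]
      exact mem_connectedComponentIn hxT
    have huniq : ∀ x ∈ closure W, ∀ y ∈ closure W, x ∈ T → y ∈ T → x = y := by
      intro x hx y hy hxT hyT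
      by_contra hxy
      obtain ⟨C, hC, z, hzC, hzT⟩ := exists_circle_of_touching hW
        isPreconnected_connectedComponentIn (disjoint_left.2 fun z hz => hWT hz) hxy hx hy
        (hTp.joinedIn x hxT y hyT)
      exact hzT (hTC C hC hzC)
    obtain ⟨b, hbcl, hbW⟩ : ∃ b ∈ closure W, b ∉ W := by
      by_contra! h
      rcases isClopen_iff.1 ⟨closure_subset_iff_isClosed.1 h, hW⟩ with h | h
      · exact (h ▸ hzW : z ∈ (∅ : Set K))
      · obtain ⟨x, hx⟩ := hTp.nonempty
        exact hWT (h ▸ mem_univ x : x ∈ W) hx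
    have hbT := hcl b hbcl hbW
    have hWb : ∀ x ∈ closure W, x ∈ W ∨ x = b := fun x hx => by
      by_cases h : x ∈ W
      · exact .inl h
      · exact .inr (huniq x hx b hbcl (hcl x hx h) hbT)
    have hDc : IsConnected (closure W) := ⟨⟨z, subset_closure hzW⟩,
      isPreconnected_connectedComponentIn.closure⟩
    have : CompactSpace (closure W) := isCompact_iff_compactSpace.1 isClosed_closure.isCompact
    have : ConnectedSpace (closure W) := isConnected_iff_connectedSpace.1 hDc
    have : LocallyPathConnectedSpace (closure W) :=
      locallyPathConnectedSpace_of_subcontinuum hfin isClosed_closure hDc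
    have hno : ∀ C : Set (closure W), ¬ IsCircleSet C := by
      intro C hC
      have hC' := isCircleSet_image continuous_subtype_val Subtype.val_injective hC
      obtain ⟨p, hp, hpi, hpr⟩ := isCircleSet_iff.1 hC
      have hT' : ∀ t, (p t : K) ∈ T := fun t => hTC _ hC' ⟨p t, hpr ▸ mem_range_self t, rfl⟩
      have hne : ((0 : ℝ) : AddCircle (1 : ℝ)) ≠ ((1 / 2 : ℝ) : AddCircle (1 : ℝ)) := fun h => by
        have := injOn_coe_addCircle (a := 0) (b := 1 / 2) (by norm_num) (by norm_num)
          (by norm_num) h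
        norm_num at this
      exact hne (hpi (Subtype.ext (huniq _ (p _).2 _ (p _).2 (hT' _) (hT' _))))
    -- Collapse everything outside `W` to `b`, and compose with a power of `g` moving `b` to `W`.
    classical
    let ρ : K → closure W := fun x => if h : x ∈ W then ⟨x, subset_closure h⟩ else ⟨b, hbcl⟩
    have hρ : Continuous ρ := by
      refine Continuous.subtype_mk (f := fun x => if x ∈ W then x else b) ?_ (fun x => ?_) |>.congr
        fun x => ?_
      · refine Continuous.if (fun x hx => ?_) continuous_id continuous_const
        have : x ∈ closure W \ W := by
          have h' : x ∈ frontier W := hx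
          rwa [frontier, hW.interior_eq] at h'
        exact (hWb x this.1).resolve_left this.2
      · split_ifs with h
        exacts [subset_closure h, hbcl]
      · apply Subtype.ext
        simp only [ρ]
        split_ifs <;> rfl
    obtain ⟨n, hn, hnb⟩ := hg.exists_iterate_mem hc hW ⟨z, hzW⟩ b
    obtain ⟨⟨x, hx⟩, hfix⟩ := exists_fixedPoint_of_no_circle hno
      (f := fun x => ρ (g^[n] x)) (hρ.comp ((hc.iterate n).comp continuous_subtype_val))
    by_cases h : g^[n] x ∈ W
    · simp only [ρ, dif_pos h] at hfix
      exact hper x n hn (congrArg Subtype.val hfix)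
    · simp only [ρ, dif_neg h] at hfix
      have : b = x := congrArg Subtype.val hfix
      exact h (this ▸ hnb)
  · have hO' : lineLike K = univ := by
      by_contra hne
      have := hg (lineLike K)ᶜ isOpen_lineLike.isClosed_compl (nonempty_compl.2 hne)
        (fun x hx h => hx (mem_lineLike_of_map hK hg hc h))
      exact hO (compl_univ_iff.1 this)
    obtain ⟨C, hC⟩ : ∃ C : Set K, IsCircleSet C := by
      by_contra! hno
      obtain ⟨x, hx⟩ := exists_fixedPoint_of_no_circle hno hc
      exact hper x 1 one_pos hx
    have hop : IsOpen C := isOpen_circle_of_lineLike hC (hO' ▸ subset_univ _)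
    rcases isClopen_iff.1 ⟨hC.isCompact.isClosed, hop⟩ with h | h
    · exact absurd h hC.isConnected.nonempty.ne_empty
    · exact h ▸ hC

/-! ### Minimal sets in Peano continua with finitely many circles -/

lemma MinimalSystemOn.mapsTo {Y : Type*} [TopologicalSpace Y] {f : Y → Y} {M : Set Y}
    (h : MinimalSystemOn f M) : MapsTo f M M := fun _ hx => h.2.1 ▸ mem_image_of_mem f hx

lemma MinimalSystemOn.minimalMap {Y : Type*} [TopologicalSpace Y] {f : Y → Y} {M : Set Y}
    (h : MinimalSystemOn f M) (hM : IsClosed M) : MinimalMap (h.mapsTo.restrict f M M) := by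
  intro N hN hne hm
  have := h.2.2 (Subtype.val '' N) (by rintro _ ⟨x, -, rfl⟩; exact x.2) (hne.image _)
    (hM.isClosedMap_subtype_val _ hN) (by
      rintro _ ⟨_, ⟨x, hx, rfl⟩, rfl⟩
      exact ⟨_, hm hx, rfl⟩)
  refine eq_univ_of_forall fun x => ?_
  obtain ⟨y, hy, hyx⟩ : (x : Y) ∈ Subtype.val '' N := this.symm ▸ x.2
  have : y = x := Subtype.ext hyx
  exact this ▸ hy

lemma minimalSystemOn_of_minimalMap {Y : Type*} [TopologicalSpace Y] [T2Space Y] {f : Y → Y}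
    {M : Set Y} (hM : IsCompact M) (hne : M.Nonempty) (hf : ContinuousOn f M) (hm : MapsTo f M M)
    (h : MinimalMap (hm.restrict f M M)) : MinimalSystemOn f M := by
  have : CompactSpace M := isCompact_iff_compactSpace.1 hM
  have : Nonempty M := hne.to_subtype
  refine ⟨hne, subset_antisymm hm.image_subset fun y hy => ?_, fun N hNM hN hNc hinv => ?_⟩
  · obtain ⟨x, hx⟩ := h.surjective (hf.mapsToRestrict hm) ⟨y, hy⟩
    exact ⟨x, x.2, congrArg Subtype.val hx⟩
  · have := h (Subtype.val ⁻¹' N) (hNc.preimage continuous_subtype_val)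
      (by obtain ⟨x, hx⟩ := hN; exact ⟨⟨x, hNM hx⟩, hx⟩) (fun x hx => hinv ⟨x, hx, rfl⟩)
    exact subset_antisymm hNM fun x hx =>
      show (⟨x, hx⟩ : M) ∈ Subtype.val ⁻¹' N from this ▸ mem_univ _

/-- For each `n` only finitely many components have two points at distance at least `1 / (n + 1)`.
-/
lemma countable_nondegenerate_components {Y : Type*} [MetricSpace Y] [CompactSpace Y]
    [LocallyPathConnectedSpace Y] (hfin : {C : Set Y | IsCircleSet C}.Finite) {M : Set Y}
    (hM : IsClosed M) :
    {K : Set M | ∃ x, K = connectedComponent x ∧ K ≠ {x}}.Countable := by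
  have hdist : ∀ K ∈ {K : Set M | ∃ x, K = connectedComponent x ∧ K ≠ {x}},
      ∃ n : ℕ, ∃ x ∈ K, ∃ y ∈ K, (1 : ℝ) / (n + 1) ≤ dist x y := by
    rintro K ⟨x, rfl, hne⟩
    obtain ⟨y, hy, hyx⟩ : ∃ y ∈ connectedComponent x, y ≠ x := by
      by_contra! h
      exact hne (subset_antisymm h (singleton_subset_iff.2 mem_connectedComponent))
    obtain ⟨n, hn⟩ := exists_nat_one_div_lt (dist_pos.2 hyx)
    exact ⟨n, y, hy, x, mem_connectedComponent, hn.le⟩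
  have hpart : ∀ n : ℕ, {K : Set M | (∃ x, K = connectedComponent x) ∧
      ∃ x ∈ K, ∃ y ∈ K, (1 : ℝ) / (n + 1) ≤ dist x y}.Finite := by
    intro n
    refine Set.Finite.of_finite_image (f := fun s : Set M => (Subtype.val '' s : Set Y)) ?_
      (image_injective.2 Subtype.val_injective).injOn
    refine finite_of_disjoint_continua hfin (δ := 1 / (n + 1)) (by positivity) ?_ ?_ ?_ ?_
    · rintro _ ⟨_, ⟨⟨x, rfl⟩, -⟩, rfl⟩
      exact hM.isClosedMap_subtype_val _ isClosed_connectedComponent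
    · rintro _ ⟨_, ⟨⟨x, rfl⟩, -⟩, rfl⟩
      exact isPreconnected_connectedComponent.image _ continuous_subtype_val.continuousOn
    · rintro _ ⟨_, ⟨⟨x, rfl⟩, -⟩, rfl⟩ _ ⟨_, ⟨⟨y, rfl⟩, -⟩, rfl⟩ hne
      refine disjoint_image_of_injective Subtype.val_injective ?_
      exact connectedComponent_disjoint fun h => hne (by rw [h])
    · rintro _ ⟨_, ⟨-, x, hx, y, hy, h⟩, rfl⟩
      exact ⟨x, ⟨x, hx, rfl⟩, y, ⟨y, hy, rfl⟩, h⟩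
  refine (countable_iUnion fun n => (hpart n).countable).mono ?_
  rintro K hK
  obtain ⟨n, hn⟩ := hdist K hK
  obtain ⟨x, hx, -⟩ := hK
  exact mem_iUnion.2 ⟨n, ⟨x, hx⟩, hn⟩

/-- If a minimal map has a component with interior, then finitely many components, permuted
cyclically, fill the space, and the return map to each of them is minimal. -/
lemma MinimalMap.exists_cycle_of_components {Z : Type*} [TopologicalSpace Z] [CompactSpace Z]
    [T2Space Z] {g : Z → Z} (hg : MinimalMap g) (hc : Continuous g) {x₀ : Z}
    (hint : (interior (connectedComponent x₀)).Nonempty) :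
    ∃ (n : ℕ) (C : Fin n → Set Z), 0 < n ∧ (∀ i, IsClosed (C i)) ∧ (∀ i, IsConnected (C i)) ∧
      Pairwise (Function.onFun Disjoint C) ∧ (⋃ i, C i) = univ ∧
      ∀ i, MapsTo g^[n] (C i) (C i) ∧
        ∀ N ⊆ C i, IsClosed N → N.Nonempty → MapsTo g^[n] N N → N = C i := by
  let G := hc.connectedComponentsMap
  let π : Z → ConnectedComponents Z := (↑)
  have hsemi : Function.Semiconj π g G := fun x => rfl
  have hit : ∀ n x, π (g^[n] x) = G^[n] (π x) := fun n x => hsemi.iterate_right n x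
  have hπ : ∀ x y, π x = π y ↔ connectedComponent x = connectedComponent y := fun x y =>
    ConnectedComponents.coe_eq_coe
  set a := π x₀ with ha
  obtain ⟨m, hm, hma⟩ := hg.exists_iterate_mem hc isOpen_interior hint x₀
  have hper : Function.IsPeriodicPt G m a := by
    have := (hπ (g^[m] x₀) x₀).2 (connectedComponent_eq (interior_subset hma)).symm
    rw [hit] at this
    exact this
  have hpp : a ∈ Function.periodicPts G := Function.mk_mem_periodicPts hm hper
  set n := Function.minimalPeriod G a with hn
  have hn0 : 0 < n := Function.minimalPeriod_pos_of_mem_periodicPts hpp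
  let C : Fin n → Set Z := fun i => connectedComponent (g^[i] x₀)
  have hC : ∀ i z, z ∈ C i ↔ π z = G^[i] a := by
    intro i z
    rw [ha, ← hit, hπ]
    exact (connectedComponent_eq_iff_mem (x := z) (y := g^[i] x₀)).symm
  have hperi : ∀ i : Fin n, Function.IsPeriodicPt G n (G^[i] a) := fun i =>
    (Function.isPeriodicPt_minimalPeriod G a).apply_iterate i
  refine ⟨n, C, hn0, fun i => isClosed_connectedComponent, fun i => isConnected_connectedComponent,
    ?_, ?_, ?_⟩
  · intro i j hij
    refine disjoint_left.2 fun z hi hj => hij (Fin.ext ?_)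
    have := ((hC i z).1 hi).symm.trans ((hC j z).1 hj)
    exact (Function.iterate_eq_iterate_iff_of_lt_minimalPeriod i.2 j.2).1 this
  · refine hg _ (isClosed_iUnion_of_finite fun i => isClosed_connectedComponent)
      ⟨x₀, mem_iUnion.2 ⟨⟨0, hn0⟩, mem_connectedComponent⟩⟩ ?_
    intro z hz
    obtain ⟨i, hi⟩ := mem_iUnion.1 hz
    refine mem_iUnion.2 ⟨⟨(i + 1) % n, Nat.mod_lt _ hn0⟩, (hC _ _).2 ?_⟩
    have h1 : π (g z) = G^[i + 1] a := by
      rw [Function.iterate_succ_apply', ← (hC i z).1 hi]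
      rfl
    rw [h1, (Function.isPeriodicPt_minimalPeriod G a).iterate_mod_apply]
  · intro i
    refine ⟨fun z hz => (hC _ _).2 ?_, fun N hNC hN hNne hNm => subset_antisymm hNC fun z hz => ?_⟩
    · rw [hit, (hC _ _).1 hz]
      exact hperi i
    · have huniv : (⋃ j : Fin n, g^[j] '' N) = univ := by
        refine hg _ (isClosed_iUnion_of_finite fun j =>
          (hN.isCompact.image (hc.iterate j)).isClosed) ?_ ?_
        · obtain ⟨y, hy⟩ := hNne
          exact ⟨y, mem_iUnion.2 ⟨⟨0, hn0⟩, y, hy, rfl⟩⟩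
        · intro w hw
          obtain ⟨j, y, hy, rfl⟩ := mem_iUnion.1 hw
          rw [← Function.iterate_succ_apply' g]
          by_cases hj : (j : ℕ) + 1 < n
          · exact mem_iUnion.2 ⟨⟨j + 1, hj⟩, y, hy, rfl⟩
          · have : (j : ℕ).succ = n := by omega
            rw [this]
            exact mem_iUnion.2 ⟨⟨0, hn0⟩, _, hNm hy, rfl⟩
      obtain ⟨j, y, hy, rfl⟩ := mem_iUnion.1 (huniv ▸ mem_univ z)
      have h1 := (hC _ _).1 hz
      rw [hit, (hC _ _).1 (hNC hy)] at h1
      have h2 : Function.IsPeriodicPt G j (G^[i] a) := h1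
      have h3 : (j : ℕ) = 0 := h2.eq_zero_of_lt_minimalPeriod (by
        rw [Function.minimalPeriod_apply_iterate hpp]
        exact j.2)
      rw [h3]
      exact hy

/-- A minimal set in a Peano continuum (or a finite disjoint union of such) with finitely many
circles is finite, a cantoroid or a finite disjoint union of circles. -/
theorem minimal_trichotomy {Y : Type*} [MetricSpace Y] [CompactSpace Y]
    [LocallyPathConnectedSpace Y] (hfin : {C : Set Y | IsCircleSet C}.Finite) {f : Y → Y}
    (hf : Continuous f) {M : Set Y} (hM : IsCompact M) (h : MinimalSystemOn f M) :
    M.Finite ∨ IsCantoroid M ∨ FinUnionDisjCircles M := by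
  by_cases hMf : M.Finite
  · exact .inl hMf
  refine .inr ?_
  have : CompactSpace M := isCompact_iff_compactSpace.1 hM
  have hg := h.minimalMap hM.isClosed
  set g := h.mapsTo.restrict f M M with hgdef
  have hgc : Continuous g := hf.continuousOn.mapsToRestrict h.mapsTo
  have hiso : NoIsolatedPoints M := fun x hx =>
    hMf (Set.finite_coe_iff.1 (hg.finite_of_isolated hgc hx))
  by_cases hd : Dense {x : M | connectedComponent x = {x}}
  · exact .inl ⟨h.1, hM, hiso, hd⟩
  refine .inr ?_
  set 𝒦 : Set (Set M) := {K : Set M | ∃ x, K = connectedComponent x ∧ K ≠ {x}} with h𝒦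
  have h𝒦c : 𝒦.Countable := countable_nondegenerate_components hfin hM.isClosed
  set D := closure {x : M | connectedComponent x = {x}} with hD
  -- `M` is the union of `D` and of the countably many nondegenerate components, so one of the
  -- latter has interior if `D` is not everything.
  have hbaire : Dense (⋃ K ∈ insert D 𝒦, interior K) := by
    refine dense_biUnion_interior_of_closed (f := id) ?_ (h𝒦c.insert D) ?_
    · rintro K (rfl | ⟨x, rfl, -⟩)
      · exact isClosed_closure
      · exact isClosed_connectedComponent
    · refine eq_univ_of_forall fun x => ?_
      by_cases hx : connectedComponent x = {x}
      · exact mem_biUnion (mem_insert _ _) (subset_closure hx)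
      · exact mem_biUnion (mem_insert_of_mem _ ⟨x, rfl, hx⟩) mem_connectedComponent
  have hDne : Dᶜ.Nonempty := nonempty_compl.2 fun h' => hd (dense_iff_closure_eq.2 h')
  obtain ⟨x, hxD, hx⟩ := hbaire.inter_open_nonempty _ isClosed_closure.isOpen_compl hDne
  obtain ⟨K, hK, hxK⟩ := mem_iUnion₂.1 hx
  obtain ⟨x₀, hx₀⟩ : ∃ x₀, (interior (connectedComponent x₀) : Set M).Nonempty := by
    rcases hK with rfl | ⟨x₀, rfl, -⟩
    · exact absurd (interior_subset hxK) hxD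
    · exact ⟨x₀, x, hxK⟩
  obtain ⟨n, C, hn, hCcl, hCc, hCd, hCu, hCm⟩ := hg.exists_cycle_of_components hgc hx₀
  have hval : ∀ k (x : M), ((g^[k] x : M) : Y) = f^[k] x := by
    intro k
    induction k with
    | zero => intro x; rfl
    | succ k ih => intro x; rw [Function.iterate_succ_apply, ih, Function.iterate_succ_apply]; rfl
  refine ⟨n, fun i => Subtype.val '' C i, hn, fun i => ?_, fun i j hij =>
    disjoint_image_of_injective Subtype.val_injective (hCd hij), ?_⟩
  · have hDcl : IsClosed (Subtype.val '' C i) := hM.isClosed.isClosedMap_subtype_val _ (hCcl i)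
    have hDc : IsConnected (Subtype.val '' C i) :=
      (hCc i).image _ continuous_subtype_val.continuousOn
    have hmap : MapsTo f^[n] (Subtype.val '' C i) (Subtype.val '' C i) := by
      rintro _ ⟨x, hx, rfl⟩
      exact ⟨_, (hCm i).1 hx, hval _ _⟩
    have : CompactSpace (Subtype.val '' C i) := isCompact_iff_compactSpace.1 hDcl.isCompact
    have : ConnectedSpace (Subtype.val '' C i) := isConnected_iff_connectedSpace.1 hDc
    have : LocallyPathConnectedSpace (Subtype.val '' C i) :=
      locallyPathConnectedSpace_of_subcontinuum hfin hDcl hDc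
    have hop : IsOpen (C i) := by
      have : C i = (⋃ j : {j // j ≠ i}, C j)ᶜ := by
        ext z
        rw [mem_compl_iff, mem_iUnion]
        constructor
        · rintro hz ⟨j, hj⟩
          exact disjoint_left.1 (hCd j.2) hj hz
        · intro hz
          obtain ⟨j, hj⟩ := mem_iUnion.1 (hCu ▸ mem_univ z)
          by_cases hji : j = i
          · exact hji ▸ hj
          · exact absurd ⟨⟨j, hji⟩, hj⟩ hz
      rw [this]
      exact (isClosed_iUnion_of_finite fun j => hCcl _).isOpen_compl
    have hnt : (C i).Nontrivial := by
      by_contra hnt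
      obtain ⟨z, hz⟩ := (hCc i).nonempty
      have := (not_nontrivial_iff.1 hnt).eq_singleton_of_mem hz
      exact hiso z (this ▸ hop)
    have : Nontrivial (Subtype.val '' C i) :=
      (hnt.image Subtype.val_injective).coe_sort
    have hmin : MinimalMap (hmap.restrict f^[n] _ _) := by
      intro N hN hNne hNm
      have hpre : (Subtype.val ⁻¹' (Subtype.val '' N) : Set M) = C i := by
        refine (hCm i).2 _ ?_ ?_ ?_ ?_
        · rintro z ⟨w, hw, hwz⟩
          obtain ⟨z', hz', hz'w⟩ := w.2
          have : z' = z := Subtype.ext (hz'w.trans hwz)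
          exact this ▸ hz'
        · exact (hDcl.isClosedMap_subtype_val _ hN).preimage continuous_subtype_val
        · obtain ⟨w, hw⟩ := hNne
          obtain ⟨z', hz', hz'w⟩ := w.2
          exact ⟨z', w, hw, hz'w.symm⟩
        · rintro z ⟨w, hw, hwz⟩
          refine ⟨_, hNm hw, ?_⟩
          rw [hval, ← hwz]
          rfl
      refine eq_univ_of_forall fun w => ?_
      obtain ⟨z, hz, hzw⟩ := w.2
      rw [← hpre] at hz
      obtain ⟨w', hw', hwz⟩ := hz
      have : w' = w := Subtype.ext (hwz.trans hzw)
      exact this ▸ hw'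
    have hcirc := isCircleSet_univ_of_minimalMap
      (finite_circles_of_injective continuous_subtype_val Subtype.val_injective hfin)
      ((hf.iterate n).continuousOn.mapsToRestrict hmap) hmin
    have := isCircleSet_image continuous_subtype_val Subtype.val_injective hcirc
    rwa [image_univ, Subtype.range_coe] at this
  · rw [← image_iUnion, hCu, image_univ, Subtype.range_coe]

/-! ### Minimal maps on cantoroids -/

lemma diff_singleton_nonempty {X : Type*} [TopologicalSpace X] (hI : NoIsolatedPoints X) {U : Set X} (hU : IsOpen U)
    (hne : U.Nonempty) (x : X) : (U \ {x}).Nonempty := by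
  by_contra h
  rw [not_nonempty_iff_eq_empty, sdiff_eq_empty] at h
  have : U = {x} := (subset_singleton_iff_eq.1 h).resolve_left hne.ne_empty
  exact hI x (this ▸ hU)

section Clopen

variable {X : Type*} [TopologicalSpace X] [CompactSpace X] [T2Space X]

lemma exists_isClopen_subset (hD : Dense {x : X | connectedComponent x = {x}}) {U : Set X}
    (hU : IsOpen U) (hne : U.Nonempty) : ∃ V ⊆ U, IsClopen V ∧ V.Nonempty := by
  obtain ⟨x, hxU, hx⟩ := hD.inter_open_nonempty U hU hne
  have hx' : (⋂ s : { s : Set X // IsClopen s ∧ x ∈ s }, (s : Set X)) ⊆ U := by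
    rw [← connectedComponent_eq_iInter_isClopen, hx]
    exact singleton_subset_iff.2 hxU
  have hdir : Directed (fun s t : Set X => t ⊆ s)
      (fun s : { s : Set X // IsClopen s ∧ x ∈ s } => (s : Set X)) := fun s t =>
    ⟨⟨s ∩ t, s.2.1.inter t.2.1, s.2.2, t.2.2⟩, inter_subset_left, inter_subset_right⟩
  have : Nonempty { s : Set X // IsClopen s ∧ x ∈ s } := ⟨⟨univ, isClopen_univ, mem_univ _⟩⟩
  obtain ⟨s, hs⟩ := exists_subset_nhds_of_compactSpace hdir (fun s => s.2.1.1)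
    (fun y hy => hU.mem_nhds (hx' hy))
  exact ⟨s, hs, s.2.1, x, s.2.2⟩

/-- Finitely many nonempty open sets can be shrunk to pairwise disjoint nonempty clopen sets. -/
lemma exists_disjoint_clopens (hI : NoIsolatedPoints X)
    (hD : Dense {x : X | connectedComponent x = {x}}) (U : ℕ → Set X) (hU : ∀ i, IsOpen (U i))
    (hne : ∀ i, (U i).Nonempty) (n : ℕ) :
    ∃ V : ℕ → Set X, (∀ i < n, IsClopen (V i) ∧ (V i).Nonempty ∧ V i ⊆ U i) ∧
      ∀ i < n, ∀ j < n, i ≠ j → Disjoint (V i) (V j) := by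
  induction n with
  | zero => exact ⟨fun _ => ∅, by simp, by simp⟩
  | succ n ih =>
    obtain ⟨V, hV, hdis⟩ := ih
    obtain ⟨x, hx⟩ := hne n
    have h1 : ∀ i, ∃ W : Set X, i < n → W ⊆ V i \ {x} ∧ IsClopen W ∧ W.Nonempty := by
      intro i
      by_cases hi : i < n
      · obtain ⟨W, h⟩ := exists_isClopen_subset hD ((hV i hi).1.2.sdiff isClosed_singleton)
          (diff_singleton_nonempty hI (hV i hi).1.2 (hV i hi).2.1 x)
        exact ⟨W, fun _ => h⟩
      · exact ⟨∅, fun h => absurd h hi⟩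
    choose W hW using h1
    have hcl : IsClosed (⋃ i ∈ Finset.range n, W i) :=
      isClosed_biUnion_finset fun i hi => (hW i (Finset.mem_range.1 hi)).2.1.1
    obtain ⟨T, hT, hTc, hTne⟩ := exists_isClopen_subset hD ((hU n).sdiff hcl)
      ⟨x, hx, by
        simp only [Finset.mem_range, mem_iUnion, not_exists]
        exact fun i hi hxi => ((hW i hi).1 hxi).2 rfl⟩
    have hTW : ∀ i < n, Disjoint T (W i) := fun i hi => Set.disjoint_left.2 fun y hy hyi =>
      (hT hy).2 (mem_biUnion (Finset.mem_coe.2 (Finset.mem_range.2 hi)) hyi)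
    refine ⟨fun i => if i = n then T else W i, fun i hi => ?_, fun i hi j hj hij => ?_⟩
    · by_cases hin : i = n
      · subst hin
        simpa using ⟨hTc, hTne, hT.trans sdiff_subset⟩
      · have hi' : i < n := by omega
        simp only [hin, if_false]
        exact ⟨(hW i hi').2.1, (hW i hi').2.2,
          ((hW i hi').1.trans sdiff_subset).trans (hV i hi').2.2⟩
    · by_cases hin : i = n
      · subst hin
        have hj' : j < i := by omega
        simpa [hij.symm] using hTW j hj'
      · have hi' : i < n := by omega
        by_cases hjn : j = n
        · subst hjn
          simpa [hin] using (hTW i hi').symm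
        · have hj' : j < n := by omega
          simp only [hin, hjn, if_false]
          exact (hdis i hi' j hj' hij).mono ((hW i hi').1.trans sdiff_subset)
            ((hW j hj').1.trans sdiff_subset)

end Clopen

/-- A choice of labels that depends only on locally constant data can be made locally constant. -/
lemma exists_continuous_label {X T : Type*} [TopologicalSpace X] [TopologicalSpace T]
    [DiscreteTopology T] {D : X → T} (hD : Continuous D) {P : X → ℕ → Prop}
    (hP : ∀ x, ∃ i, P x i) (hDP : ∀ x y, D x = D y → ∀ i, P x i → P y i) :
    ∃ f : X → ℕ, Continuous f ∧ ∀ x, P x (f x) := by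
  classical
  choose g hg using hP
  let G : T → ℕ := fun t => if h : ∃ x, D x = t then g h.choose else 0
  refine ⟨G ∘ D, continuous_of_discreteTopology.comp hD, fun x => ?_⟩
  have h : ∃ y, D y = D x := ⟨x, rfl⟩
  have : (G ∘ D) x = g h.choose := by simp only [G, Function.comp, dif_pos h]
  rw [this]
  exact hDP _ _ h.choose_spec _ (hg _)

/-- A cyclic counter that can only be reset late, and only to early values, runs through every
value in the middle third. -/
lemma exists_eq_of_counter {c : ℕ → ℕ} {n t : ℕ} (hc : ∀ k, c k < 3 * n)
    (hs : ∀ k, c (k + 1) = (c k + 1) % (3 * n) ∨ (2 * n ≤ c k ∧ c (k + 1) ≤ n))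
    (h1 : n < t) (h2 : t ≤ 2 * n) : ∃ k, c k = t := by
  have hA : ∃ k, c k ≤ n := by
    by_contra! h
    have hinc : ∀ k, c k = c 0 + k := by
      intro k
      induction k with
      | zero => rfl
      | succ k ih =>
        rcases hs k with h' | h'
        · by_cases hk : c k + 1 < 3 * n
          · rw [Nat.mod_eq_of_lt hk] at h'
            omega
          · have : c k + 1 = 3 * n := by have := hc k; omega
            rw [this, Nat.mod_self] at h'
            have := h (k + 1)
            omega
        · have := h (k + 1)
          omega
    have := hinc (3 * n)
    have := hc (3 * n)
    omega
  obtain ⟨k, hk⟩ := hA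
  have hB : ∀ i, c k + i ≤ t → c (k + i) = c k + i := by
    intro i
    induction i with
    | zero => simp
    | succ i ih =>
      intro hi
      have h := ih (by omega)
      rcases hs (k + i) with h' | h'
      · rw [Nat.mod_eq_of_lt (by omega)] at h'
        rw [← add_assoc, h', h]
        rfl
      · omega
  exact ⟨k + (t - c k), by rw [hB _ (by omega)]; omega⟩

/-- A finite approximation of a map `σ : X → Z` that makes `q ∘ σ` minimal: `a` and `b` are locally
constant labels, `σ` is required to match `b` with `a`, and the induced graph on the labels is
strongly connected. -/
structure SymbolicStage {X Z : Type*} [TopologicalSpace X] [TopologicalSpace Z] (q : Z → X)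
    (N : ℕ) (a : X → ℕ) (b : Z → ℕ) : Prop where
  cont_a : Continuous a
  cont_b : Continuous b
  lt_a : ∀ x, a x < N
  lt_b : ∀ z, b z < N
  surj_b : ∀ i < N, ∃ z, b z = i
  conn : ∀ i < N, ∀ j < N, Relation.ReflTransGen (fun i j => ∃ z, b z = i ∧ a (q z) = j) i j

lemma SymbolicStage.exists_closed_walk {X Z : Type*} [TopologicalSpace X] [TopologicalSpace Z]
    [Nonempty Z] {q : Z → X} {N : ℕ} {a : X → ℕ} {b : Z → ℕ} (h : SymbolicStage q N a b) {T : Type*} {τ : Z → T} (hτ : (range τ).Finite) :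
    ∃ (n : ℕ) (w : ℕ → Z), 0 < n ∧ (∀ k, a (q (w k)) = b (w (k + 1))) ∧
      (∀ k, w (k % n) = w k) ∧ ∀ z, ∃ i < n, τ (w i) = τ z := by
  let r : Z → Z → Prop := fun z z' => a (q z) = b z'
  have key : ∀ z z', Relation.ReflTransGen r z z' := by
    intro z z'
    have : ∀ i, Relation.ReflTransGen (fun i j => ∃ z, b z = i ∧ a (q z) = j) (a (q z)) i →
        ∀ z', b z' = i → Relation.ReflTransGen r z z' := by
      intro i hi
      induction hi with
      | refl => exact fun z' hz' => Relation.ReflTransGen.single hz'.symm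
      | tail _ hij ih =>
        obtain ⟨z₁, h1, h2⟩ := hij
        exact fun z' hz' => (ih z₁ h1).tail (h2.trans hz'.symm)
    exact this _ (h.conn _ (h.lt_a _) _ (h.lt_b z')) z' rfl
  obtain ⟨z₀⟩ := ‹Nonempty Z›
  obtain ⟨z₁, hz₁⟩ := h.surj_b (a (q z₀)) (h.lt_a _)
  choose! s hs using (fun t (ht : t ∈ range τ) => ht : ∀ t ∈ range τ, ∃ z, τ z = t)
  obtain ⟨l, c, h0, hl, hc, hP⟩ := exists_walk_through (s '' range τ) (hτ.image s)
    (fun p _ => key z₁ p) (fun p _ => key p z₁) (key z₁ z₀)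
  refine ⟨l + 1, fun k => c (k % (l + 1)), by omega, fun k => ?_, fun k => by simp, fun z => ?_⟩
  · have hk : k % (l + 1) < l + 1 := Nat.mod_lt _ (by omega)
    by_cases hkl : k % (l + 1) = l
    · have : (k + 1) % (l + 1) = 0 := by rw [Nat.add_mod, hkl]; simp
      simp only [this, hkl, h0, hl, hz₁]
    · have : (k + 1) % (l + 1) = k % (l + 1) + 1 := by
        rw [← Nat.mod_add_mod, Nat.mod_eq_of_lt (by omega)]
      simp only [this]
      exact hc _ (by omega)
  · obtain ⟨i, hi, hci⟩ := hP (s (τ z)) (mem_image_of_mem s (mem_range_self z))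
    refine ⟨i, by omega, ?_⟩
    simp only [Nat.mod_eq_of_lt (by omega : i < l + 1), hci]
    exact hs _ (mem_range_self z)

/-- The refinement step: the new stage decides the locally constant function `e` on the label of
`b'`, and forces every orbit to visit `A`. -/
lemma SymbolicStage.exists_refinement {X Z : Type*} [TopologicalSpace X] [CompactSpace X] [T2Space X]
    (hI : NoIsolatedPoints X) (hD : Dense {x : X | connectedComponent x = {x}})
    [TopologicalSpace Z] [CompactSpace Z] [Nonempty Z] {q : Z → X} (hq : Continuous q)
    (hqs : q.Surjective)
    (hirr : ∀ U : Set Z, IsOpen U → U.Nonempty → q '' Uᶜ ≠ univ)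
    {N : ℕ} {a : X → ℕ} {b : Z → ℕ} (h : SymbolicStage q N a b) {A : Set X} (hA : IsClopen A)
    (hAne : A.Nonempty) {e : Z → Bool} (he : Continuous e) :
    ∃ (N' : ℕ) (a' : X → ℕ) (b' : Z → ℕ), SymbolicStage q N' a' b' ∧
      (∃ π : ℕ → ℕ, (∀ x, π (a' x) = a x) ∧ ∀ z, π (b' z) = b z) ∧
      (∃ ε : ℕ → Bool, ∀ z, ε (b' z) = e z) ∧
      ∀ x : ℕ → X, (∀ k, ∃ z, b' z = a' (x k) ∧ q z = x (k + 1)) → ∃ k, x k ∈ A := by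
  classical
  have hAc : Continuous A.boolIndicator := (continuous_boolIndicator_iff_isClopen A).2 hA
  let α : X → ℕ × Bool := fun x => (a x, A.boolIndicator x)
  have hα : Continuous α := h.cont_a.prodMk hAc
  -- All that is relevant about a point is its type `τ z`: the old labels, the value of `e`, and
  -- membership of the image in `A`. The closed walk `w` of length `n` visits all types.
  let τ : Z → (ℕ × Bool) × (ℕ × Bool) := fun z => ((b z, e z), α (q z))
  have hτ : Continuous τ := (h.cont_b.prodMk he).prodMk (hα.comp hq)
  obtain ⟨n, w, hn, hw, hwn, hcov⟩ := h.exists_closed_walk (τ := τ)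
    (isCompact_range hτ).finite_of_discrete
  have hW : ∀ i, ∃ U : Set X, IsOpen U ∧ U.Nonempty ∧ q ⁻¹' U ⊆ τ ⁻¹' {τ (w i)} := by
    intro i
    have ho : IsOpen (τ ⁻¹' {τ (w i)}) := (isOpen_discrete _).preimage hτ
    have hcl : IsClosed (q '' (τ ⁻¹' {τ (w i)})ᶜ) := (ho.isClosed_compl.isCompact.image hq).isClosed
    refine ⟨(q '' (τ ⁻¹' {τ (w i)})ᶜ)ᶜ, hcl.isOpen_compl, ?_, fun z hz => ?_⟩
    · exact nonempty_compl.2 (hirr _ ho ⟨w i, rfl⟩)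
    · by_contra hz'
      exact hz ⟨z, hz', rfl⟩
  choose U hUo hUne hUτ using hW
  obtain ⟨V, hV, hVd⟩ := exists_disjoint_clopens hI hD U hUo hUne (3 * n)
  have hVτ : ∀ i < 3 * n, ∀ z, q z ∈ V i → τ z = τ (w i) :=
    fun i hi z hz => hUτ i ((hV i hi).2.2 hz)
  let ind : X → Fin (3 * n) → Bool := fun x i => (V i).boolIndicator x
  have hind : Continuous ind := continuous_pi fun i =>
    (continuous_boolIndicator_iff_isClopen _).2 (hV i i.2).1
  have hmem : ∀ x y, ind x = ind y → ∀ i < 3 * n, (x ∈ V i ↔ y ∈ V i) := by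
    intro x y hxy i hi
    rw [mem_iff_boolIndicator, mem_iff_boolIndicator]
    exact iff_of_eq (congrArg (· = true) (congrFun hxy ⟨i, hi⟩))
  -- The new labels count the positions on three rounds of `w`. The clopen sets `V i` provide the
  -- transitions from `i` to `i + 1`. Elsewhere, images are labelled in the first round and points
  -- of `Z` in the third one, so that the counter can jump only from the third round to the first.
  obtain ⟨l, hlc, hl⟩ := exists_continuous_label (hind.prodMk hα)
    (P := fun x i => i < 3 * n ∧ α (q (w i)) = α x ∧
      (x ∈ V i ∨ (∀ j < 3 * n, x ∉ V j) ∧ i < n)) (by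
      intro x
      obtain ⟨z, rfl⟩ := hqs x
      by_cases hx : ∃ i < 3 * n, q z ∈ V i
      · obtain ⟨i, hi, hxi⟩ := hx
        exact ⟨i, hi, (congrArg Prod.snd (hVτ i hi z hxi)).symm, Or.inl hxi⟩
      · push Not at hx
        obtain ⟨i, hi, hiz⟩ := hcov z
        exact ⟨i, by omega, congrArg Prod.snd hiz, Or.inr ⟨hx, hi⟩⟩) (by
      rintro x y hxy i ⟨hi, h1, h2⟩
      have hxy1 := hmem x y (congrArg Prod.fst hxy)
      refine ⟨hi, h1.trans (congrArg Prod.snd hxy), ?_⟩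
      rcases h2 with h2 | h2
      · exact Or.inl ((hxy1 i hi).1 h2)
      · exact Or.inr ⟨fun j hj hy => h2.1 j hj ((hxy1 j hj).2 hy), h2.2⟩)
  obtain ⟨b', hb'c, hb'⟩ := exists_continuous_label ((hind.comp hq).prodMk hτ)
    (P := fun z i => i < 3 * n ∧ τ (w i) = τ z ∧
      (q z ∈ V i ∨ (∀ j < 3 * n, q z ∉ V j) ∧ 2 * n ≤ i)) (by
      intro z
      by_cases hx : ∃ i < 3 * n, q z ∈ V i
      · obtain ⟨i, hi, hxi⟩ := hx
        exact ⟨i, hi, (hVτ i hi z hxi).symm, Or.inl hxi⟩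
      · push Not at hx
        obtain ⟨i, hi, hiz⟩ := hcov z
        refine ⟨2 * n + i, by omega, ?_, Or.inr ⟨hx, by omega⟩⟩
        rw [← hwn (2 * n + i), Nat.mul_add_mod_self_right, hwn, hiz]) (by
      rintro x y hxy i ⟨hi, h1, h2⟩
      have hxy1 := hmem (q x) (q y) (congrArg Prod.fst hxy)
      refine ⟨hi, h1.trans (congrArg Prod.snd hxy), ?_⟩
      rcases h2 with h2 | h2
      · exact Or.inl ((hxy1 i hi).1 h2)
      · exact Or.inr ⟨fun j hj hy => h2.1 j hj ((hxy1 j hj).2 hy), h2.2⟩)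
  have huniq : ∀ x, ∀ i < 3 * n, ∀ j < 3 * n, x ∈ V i → x ∈ V j → i = j := by
    intro x i hi j hj hxi hxj
    by_contra hij
    exact Set.disjoint_left.1 (hVd i hi j hj hij) hxi hxj
  have hlV : ∀ x, ∀ i < 3 * n, x ∈ V i → l x = i := by
    intro x i hi hxi
    rcases (hl x).2.2 with h2 | h2
    · exact huniq x _ (hl x).1 _ hi h2 hxi
    · exact absurd hxi (h2.1 i hi)
  have hbV : ∀ z, ∀ i < 3 * n, q z ∈ V i → b' z = i := by
    intro z i hi hxi
    rcases (hb' z).2.2 with h2 | h2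
    · exact huniq _ _ (hb' z).1 _ hi h2 hxi
    · exact absurd hxi (h2.1 i hi)
  have hwmod : ∀ k, w (k % (3 * n)) = w k := by
    intro k
    rw [← hwn (k % (3 * n)), Nat.mod_mul_left_mod, hwn]
  let a' : X → ℕ := fun x => (l x + 1) % (3 * n)
  have hVz : ∀ i < 3 * n, ∃ z, q z ∈ V i := by
    intro i hi
    obtain ⟨x, hx⟩ := (hV i hi).2.1
    obtain ⟨z, rfl⟩ := hqs x
    exact ⟨z, hx⟩
  have hsucc : ∀ i < 3 * n, ∃ z, b' z = i ∧ a' (q z) = (i + 1) % (3 * n) := by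
    intro i hi
    obtain ⟨z, hz⟩ := hVz i hi
    exact ⟨z, hbV z i hi hz, by simp only [a', hlV _ i hi hz]⟩
  have hedge : ∀ z, a' (q z) = (b' z + 1) % (3 * n) ∨ (2 * n ≤ b' z ∧ a' (q z) ≤ n) := by
    intro z
    rcases (hb' z).2.2 with h2 | h2
    · left
      simp only [a', hlV _ _ (hb' z).1 h2]
    · right
      refine ⟨h2.2, ?_⟩
      rcases (hl (q z)).2.2 with h3 | h3
      · exact absurd h3 (h2.1 _ (hl (q z)).1)
      · have : l (q z) + 1 < 3 * n := by omega
        simp only [a', Nat.mod_eq_of_lt this]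
        omega
  refine ⟨3 * n, a', b', ⟨?_, hb'c, fun x => Nat.mod_lt _ (by omega), fun z => (hb' z).1,
    fun i hi => ⟨(hVz i hi).choose, hbV _ i hi (hVz i hi).choose_spec⟩, ?_⟩,
    ⟨fun i => b (w i), fun x => ?_, fun z => ?_⟩, ⟨fun i => e (w i), fun z => ?_⟩, fun x hx => ?_⟩
  · exact (continuous_of_discreteTopology (f := fun i : ℕ => (i + 1) % (3 * n))).comp hlc
  · have step : ∀ i < 3 * n, ∀ k,
        Relation.ReflTransGen (fun i j => ∃ z, b' z = i ∧ a' (q z) = j) i ((i + k) % (3 * n)) := by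
      intro i hi k
      induction k with
      | zero => rw [add_zero, Nat.mod_eq_of_lt hi]
      | succ k ih =>
        refine ih.tail ?_
        have := hsucc ((i + k) % (3 * n)) (Nat.mod_lt _ (by omega))
        rwa [Nat.mod_add_mod] at this
    intro i hi j hj
    have := step i hi (3 * n - i + j)
    rwa [show i + (3 * n - i + j) = 3 * n + j by omega, Nat.add_mod_left,
      Nat.mod_eq_of_lt hj] at this
  · change b (w ((l x + 1) % (3 * n))) = a x
    rw [hwmod, ← hw]
    exact congrArg Prod.fst (hl x).2.1
  · exact congrArg (fun t => t.1.1) (hb' z).2.1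
  · exact congrArg (fun t => t.1.2) (hb' z).2.1
  -- The counter cannot avoid the second round, and in it the position with the type of a point of
  -- `A`.
  · obtain ⟨x₀, hx₀⟩ := hAne
    obtain ⟨z₀, rfl⟩ := hqs x₀
    obtain ⟨m, hm, hmz⟩ := hcov z₀
    obtain ⟨k, hk⟩ := exists_eq_of_counter (c := fun k => a' (x k)) (n := n) (t := n + m + 1)
      (fun k => Nat.mod_lt _ (by omega)) (fun k => by
        obtain ⟨z, h1, h2⟩ := hx k
        have := hedge z
        rwa [h1, h2] at this) (by omega) (by omega)
    refine ⟨k, ?_⟩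
    have hlk : l (x k) = n + m := by
      have h1 : (l (x k) + 1) % (3 * n) = n + m + 1 := hk
      have h2 := (hl (x k)).1
      by_cases h3 : l (x k) + 1 < 3 * n
      · rw [Nat.mod_eq_of_lt h3] at h1
        omega
      · rw [show l (x k) + 1 = 3 * n by omega, Nat.mod_self] at h1
        omega
    have h4 := (hl (x k)).2.1
    rw [hlk, ← hwn, Nat.add_mod_left, hwn] at h4
    have h5 : α (q (w m)) = α (q z₀) := congrArg Prod.snd hmz
    have h6 : A.boolIndicator (x k) = A.boolIndicator (q z₀) :=
      congrArg Prod.snd (h4.symm.trans h5)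
    rw [mem_iff_boolIndicator, h6]
    exact (mem_iff_boolIndicator _ _).1 hx₀

/-- Every irreducible continuous surjection `q : Z → X` onto a space of cantoroid type has a right
factor `σ : X → Z`, continuous for the given locally constant functions, with `q ∘ σ` minimal. -/
theorem exists_minimal_factor {X Z : Type*} [TopologicalSpace X] [CompactSpace X] [T2Space X]
    [SecondCountableTopology X]
    (hI : NoIsolatedPoints X) (hD : Dense {x : X | connectedComponent x = {x}})
    [TopologicalSpace Z] [CompactSpace Z] [Nonempty Z] {q : Z → X} (hq : Continuous q)
    (hqs : q.Surjective)
    (hirr : ∀ U : Set Z, IsOpen U → U.Nonempty → q '' Uᶜ ≠ univ)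
    (e : ℕ → Z → Bool) (he : ∀ n, Continuous (e n)) :
    ∃ σ : X → Z, (∀ n, Continuous (e n ∘ σ)) ∧ MinimalMap (q ∘ σ) := by
  have hXne : Nonempty X := Nonempty.map q inferInstance
  have hbas := TopologicalSpace.isBasis_countableBasis X
  have hBne : (TopologicalSpace.countableBasis X).Nonempty := by
    obtain ⟨x⟩ := hXne
    obtain ⟨B, hB, -⟩ := hbas.exists_subset_of_mem_open (mem_univ x) isOpen_univ
    exact ⟨B, hB⟩
  obtain ⟨B, hB⟩ := (TopologicalSpace.countable_countableBasis X).exists_eq_range hBne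
  have hA : ∀ n, ∃ V ⊆ B n, IsClopen V ∧ V.Nonempty := fun n => by
    have hn : B n ∈ TopologicalSpace.countableBasis X := hB ▸ mem_range_self n
    exact exists_isClopen_subset hD (hbas.isOpen hn)
      (TopologicalSpace.nonempty_of_mem_countableBasis hn)
  choose A hAB hA hAne using hA
  let S := {s : ℕ × (X → ℕ) × (Z → ℕ) // SymbolicStage q s.1 s.2.1 s.2.2}
  have hstep : ∀ (n : ℕ) (s : S), ∃ s' : S,
      (∃ π : ℕ → ℕ, (∀ x, π (s'.1.2.1 x) = s.1.2.1 x) ∧ ∀ z, π (s'.1.2.2 z) = s.1.2.2 z) ∧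
      (∃ ε : ℕ → Bool, ∀ z, ε (s'.1.2.2 z) = e n z) ∧
      ∀ x : ℕ → X, (∀ k, ∃ z, s'.1.2.2 z = s'.1.2.1 (x k) ∧ q z = x (k + 1)) → ∃ k, x k ∈ A n := by
    intro n s
    obtain ⟨N', a', b', h', h⟩ := s.2.exists_refinement hI hD hq hqs hirr (hA n) (hAne n) (he n)
    exact ⟨⟨(N', a', b'), h'⟩, h⟩
  choose F hFπ hFe hFA using hstep
  have h0 : SymbolicStage q 1 (fun _ => 0) (fun _ => 0) := by
    refine ⟨continuous_const, continuous_const, by simp, by simp, fun i hi => ?_,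
      fun i hi j hj => ?_⟩
    · obtain ⟨z⟩ := ‹Nonempty Z›
      exact ⟨z, by omega⟩
    · obtain rfl : i = j := by omega
      exact Relation.ReflTransGen.refl
  let st : ℕ → S := fun n => Nat.rec ⟨(1, fun _ => 0, fun _ => 0), h0⟩ F n
  have hst : ∀ n, st (n + 1) = F n (st n) := fun n => rfl
  -- `σ x` is any point whose labels at all stages are those of `x`.
  have hσ : ∀ x, ∃ z, ∀ n, (st n).1.2.2 z = (st n).1.2.1 x := by
    intro x
    have hcl : ∀ n, IsClosed {z | (st n).1.2.2 z = (st n).1.2.1 x} := fun n =>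
      isClosed_eq (st n).2.cont_b continuous_const
    obtain ⟨z, hz⟩ := IsCompact.nonempty_iInter_of_sequence_nonempty_isCompact_isClosed
      (fun n => {z | (st n).1.2.2 z = (st n).1.2.1 x}) (fun n z hz => by
        obtain ⟨π, h1, h2⟩ := hFπ n (st n)
        change (st n).1.2.2 z = (st n).1.2.1 x
        have hz' : (F n (st n)).1.2.2 z = (F n (st n)).1.2.1 x := hz
        rw [← h1, ← h2, hz'])
      (fun n => (st n).2.surj_b _ ((st n).2.lt_a x)) (hcl 0).isCompact hcl
    exact ⟨z, fun n => mem_iInter.1 hz n⟩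
  choose σ hσ using hσ
  refine ⟨σ, fun n => ?_, minimalMap_of_exists_iterate_mem fun U hU hUne x => ?_⟩
  · obtain ⟨ε, hε⟩ := hFe n (st n)
    have : e n ∘ σ = ε ∘ (st (n + 1)).1.2.1 := by
      ext x
      simp only [Function.comp]
      rw [← hε, ← hst]
      exact congrArg ε (hσ x (n + 1))
    rw [this]
    exact continuous_of_discreteTopology.comp (st (n + 1)).2.cont_a
  · obtain ⟨y, hy⟩ := hUne
    obtain ⟨B', hB', -, hBU⟩ := hbas.exists_subset_of_mem_open hy hU
    rw [hB] at hB'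
    obtain ⟨n, rfl⟩ := hB'
    obtain ⟨k, hk⟩ := hFA n (st n) (fun k => (q ∘ σ)^[k] x) fun k =>
      ⟨σ ((q ∘ σ)^[k] x), hσ _ (n + 1), by rw [Function.iterate_succ_apply']; rfl⟩
    exact ⟨k, hBU (hAB n hk)⟩

/-! ### Finite sets and cantoroids on curves -/

universe u

/-- A minimal map `γ ∘ t` of `M` which factors through a curve extends to the whole space, as `t`
does by Tietze's theorem. -/
lemma mem_MSpace_of_curve {X : Type*} [MetricSpace X] [CompactSpace X] {γ : ℝ → X}
    (hγ : Continuous γ) {M : Set X} (hM : IsCompact M) (hne : M.Nonempty) {g : M → M}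
    (hg : MinimalMap g) {t : M → ℝ} (ht : Continuous t) (hgt : ∀ x, (g x : X) = γ (t x)) :
    M ∈ MSpace X := by
  obtain ⟨T, hT⟩ := ContinuousMap.exists_restrict_eq hM.isClosed (⟨t, ht⟩ : C(M, ℝ))
  have hT' : ∀ x : M, T x = t x := fun x => DFunLike.congr_fun hT x
  have hfg : ∀ x : M, γ (T x) = g x := fun x => by rw [hT', hgt]
  have hm : MapsTo (fun x => γ (T x)) M M := fun x hx => by
    have : γ (T x) = g ⟨x, hx⟩ := hfg ⟨x, hx⟩
    change γ (T x) ∈ M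
    rw [this]
    exact (g ⟨x, hx⟩).2
  have hc : Continuous fun x => γ (T x) := hγ.comp T.continuous
  refine ⟨hM, _, hc, minimalSystemOn_of_minimalMap hM hne hc.continuousOn hm ?_⟩
  have : hm.restrict (fun x => γ (T x)) M M = g := by
    ext x
    exact hfg x
  rwa [this]

lemma exists_minimalMap_of_finite {K : Type*} [TopologicalSpace K] [Finite K] [Nonempty K] :
    ∃ g : K → K, MinimalMap g := by
  have hpos : Nat.card K ≠ 0 := Nat.card_ne_zero.2 ⟨inferInstance, inferInstance⟩
  have : NeZero (Nat.card K) := ⟨hpos⟩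
  obtain ⟨φ⟩ : Nonempty (K ≃ ZMod (Nat.card K)) := (Finite.card_eq).1 (by simp)
  refine ⟨fun x => φ.symm (φ x + 1), minimalMap_of_exists_iterate_mem fun U _ hne x => ?_⟩
  obtain ⟨y, hy⟩ := hne
  have hit : ∀ k : ℕ, φ ((fun x => φ.symm (φ x + 1))^[k] x) = φ x + k := by
    intro k
    induction k with
    | zero => simp
    | succ k ih =>
      rw [Function.iterate_succ_apply', φ.apply_symm_apply, ih]
      push_cast
      ring
  refine ⟨(φ y - φ x).val, ?_⟩
  have : (fun x => φ.symm (φ x + 1))^[(φ y - φ x).val] x = y := by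
    apply φ.injective
    rw [hit, ZMod.natCast_zmod_val]
    ring
  exact this.symm ▸ hy

theorem finite_mem_MSpace_of_curve {X : Type*} [MetricSpace X] [CompactSpace X] {γ : ℝ → X}
    (hγ : Continuous γ) {M : Set X} (hMγ : M ⊆ range γ) (hM : M.Finite) (hne : M.Nonempty) :
    M ∈ MSpace X := by
  have : Finite M := hM
  have : Nonempty M := hne.to_subtype
  obtain ⟨g, hg⟩ := exists_minimalMap_of_finite (K := M)
  choose r hr using fun x : M => hMγ x.2
  exact mem_MSpace_of_curve hγ hM.isCompact hne hg (t := fun x => r (g x))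
    continuous_of_discreteTopology fun x => (hr _).symm

/-- A cantoroid `M` on a curve is the irreducible image of a closed subset of the Cantor set of
parameters, and carries a minimal map which factors through it. -/
theorem cantoroid_mem_MSpace_of_curve {X : Type u} [MetricSpace X] [CompactSpace X] {γ : ℝ → X}
    (hγ : Continuous γ) {M : Set X} (hMγ : M ⊆ γ '' Icc 0 1) (hM : IsCantoroid M) :
    M ∈ MSpace X := by
  obtain ⟨hne, hMc, hI, hD⟩ := hM
  have : CompactSpace M := isCompact_iff_compactSpace.1 hMc
  have : Nonempty M := hne.to_subtype
  obtain ⟨s, hs, hss⟩ := exists_nat_bool_continuous_surjective_of_compact (Icc (0 : ℝ) 1)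
  have hγs : Continuous fun c => γ (s c) := hγ.comp (continuous_subtype_val.comp hs)
  let Z : Set (ℕ → Bool) := {c | γ (s c) ∈ M}
  have hZ : IsClosed Z := hMc.isClosed.preimage hγs
  have : CompactSpace Z := isCompact_iff_compactSpace.1 hZ.isCompact
  let p : ULift.{u} Z → M := fun c => ⟨γ (s c.down), c.down.2⟩
  have hp : Continuous p :=
    (hγs.comp (continuous_subtype_val.comp continuous_uliftDown)).subtype_mk _
  have hps : p.Surjective := by
    rintro ⟨x, hx⟩
    obtain ⟨t, ht, rfl⟩ := hMγ hx
    obtain ⟨c, hc⟩ := hss ⟨t, ht⟩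
    exact ⟨⟨⟨c, by change γ (s c) ∈ M; rwa [hc]⟩⟩, Subtype.ext (by change γ (s c) = γ t; rw [hc])⟩
  obtain ⟨E, hE, hEs, hEi⟩ := exists_compact_surjective_zorn_subset hp hps
  have hqs : (E.domRestrict p).Surjective := fun x => by
    obtain ⟨c, hc, hcx⟩ : x ∈ p '' E := hEs ▸ mem_univ x
    exact ⟨⟨c, hc⟩, hcx⟩
  have : Nonempty E := by
    obtain ⟨x⟩ := ‹Nonempty M›
    obtain ⟨c, -⟩ := hqs x
    exact ⟨c⟩
  obtain ⟨σ, hσ, hmin⟩ := exists_minimal_factor hI hD (q := E.domRestrict p)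
    (hp.comp continuous_subtype_val) hqs (fun U hU hUne => hEi Uᶜ (fun h => by
      rw [compl_univ_iff] at h
      exact hUne.ne_empty h) hU.isClosed_compl)
    (fun n c => c.1.down.1 n)
    (fun n => (continuous_apply n).comp 
      (continuous_subtype_val.comp (continuous_uliftDown.comp continuous_subtype_val)))
  have hc : Continuous fun x => (σ x).1.down.1 := continuous_pi fun n => hσ n
  exact mem_MSpace_of_curve hγ hMc hne hmin (t := fun x => s (σ x).1.down.1)
    (continuous_subtype_val.comp (hs.comp hc)) fun x => rfl

lemma IsCantorSet.isCantoroid {X : Type*} [TopologicalSpace X] {M : Set X} (h : IsCantorSet M) :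
    IsCantoroid M := by
  obtain ⟨h1, h2, h3, h4⟩ := h
  refine ⟨h1, h2, h4, ?_⟩
  have : TotallyDisconnectedSpace M := totallyDisconnectedSpace_subtype_iff.2 h3
  have : {x : M | connectedComponent x = {x}} = univ :=
    eq_univ_of_forall fun x => connectedComponent_eq_singleton x
  rw [this]
  exact dense_univ

/-! ### Retractions onto circles supported near the circle -/

lemma range_loop {Y : Type*} {p : AddCircle (1 : ℝ) → Y} : range (fun s : ℝ => p s) = range p := by
  refine subset_antisymm (by rintro _ ⟨s, rfl⟩; exact ⟨_, rfl⟩) ?_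
  rintro _ ⟨a, rfl⟩
  obtain ⟨s, rfl⟩ := QuotientAddGroup.mk_surjective a
  exact ⟨s, rfl⟩

section Loops

variable {Y : Type*} [MetricSpace Y] {p : AddCircle (1 : ℝ) → Y}

lemma continuous_loop (hp : Continuous p) : Continuous fun s : ℝ => p s :=
  hp.comp (AddCircle.continuous_mk' 1)

lemma joinedIn_loop (hp : Continuous p) {s t : ℝ} (hst : s ≤ t) :
    JoinedIn ((fun s : ℝ => p s) '' Icc s t) (p s) (p t) := by
  have hc := continuous_loop hp
  refine JoinedIn.ofLine (f := fun u : ℝ => p ((s + u * (t - s) : ℝ) : AddCircle (1 : ℝ)))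
    (hc.comp (by fun_prop : Continuous fun u : ℝ => s + u * (t - s))).continuousOn
    (by simp) (by simp) ?_
  rintro _ ⟨u, hu, rfl⟩
  exact ⟨_, ⟨by nlinarith [hu.1], by nlinarith [hu.2]⟩, rfl⟩

lemma joinedIn_range_loop (hp : Continuous p) {x y : Y} (hx : x ∈ range p) (hy : y ∈ range p) :
    JoinedIn (range p) x y := by
  rw [← range_loop] at hx hy
  obtain ⟨s, rfl⟩ := hx
  obtain ⟨t, rfl⟩ := hy
  rcases le_total s t with h | h
  · exact (joinedIn_loop hp h).mono (by rintro _ ⟨u, -, rfl⟩; exact ⟨_, rfl⟩)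
  · exact ((joinedIn_loop hp h).mono (by rintro _ ⟨u, -, rfl⟩; exact ⟨_, rfl⟩)).symm

variable [LocallyPathConnectedSpace Y]

/-- Only finitely many complementary components touch the circle `range p` more than once. -/
lemma finite_multiply_touching (hfin : {C : Set Y | IsCircleSet C}.Finite) (hp : Continuous p) :
    {W : Set Y | ∃ y, W = connectedComponentIn (range p)ᶜ y ∧
      ∃ a ∈ range p, ∃ b ∈ range p, a ≠ b ∧ a ∈ closure W ∧ b ∈ closure W}.Finite := by
  classical
  have hC : IsClosed (range p) := (isCompact_range hp).isClosed
  have hz : ∀ D : Set Y, ∃ z, ¬ D ⊆ range p → z ∈ D ∧ z ∉ range p := fun D => by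
    by_cases h : D ⊆ range p
    · obtain ⟨t⟩ : Nonempty (AddCircle (1 : ℝ)) := inferInstance
      exact ⟨p t, fun h' => absurd h h'⟩
    · obtain ⟨z, hz⟩ := not_subset.1 h
      exact ⟨z, fun _ => hz⟩
  choose z hz using hz
  let F : Set Y := z '' {D | IsCircleSet D ∧ ¬ D ⊆ range p}
  have hF : F.Finite := (hfin.subset fun D hD => hD.1).image z
  have hFC : Disjoint F (range p) := disjoint_left.2 (by
    rintro _ ⟨D, hD, rfl⟩
    exact (hz D hD.2).2)
  refine (hF.image (connectedComponentIn (range p)ᶜ)).subset ?_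
  rintro W ⟨y, rfl, a, ha, b, hb, hab, haW, hbW⟩
  have : ¬ Disjoint F (connectedComponentIn (range p)ᶜ y) := by
    intro hFW
    obtain ⟨D, hD, ⟨x, hxD, hxW⟩, -, hFD⟩ := exists_circle_of_touching_avoiding
      hC.isOpen_compl.connectedComponentIn isPreconnected_connectedComponentIn
      (disjoint_left.2 fun x hx => connectedComponentIn_subset _ _ hx) hab haW hbW
      (joinedIn_range_loop hp ha hb) hF.isClosed hFW hFC
    have hDC : ¬ D ⊆ range p := fun h => connectedComponentIn_subset _ _ hxW (h hxD)
    exact disjoint_left.1 hFD ⟨D, ⟨hD, hDC⟩, rfl⟩ (hz D hDC).1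
  obtain ⟨f, hf, hfW⟩ := not_disjoint_iff.1 this
  exact ⟨f, hf, (connectedComponentIn_eq hfW).symm⟩

/-- Only finitely many complementary components that touch the circle leave a given
neighbourhood. -/
lemma finite_large_touching [CompactSpace Y] (hfin : {C : Set Y | IsCircleSet C}.Finite)
    (hp : Continuous p) {N : Set Y} (hN : IsOpen N) (hpN : range p ⊆ N) :
    {W : Set Y | ∃ y, W = connectedComponentIn (range p)ᶜ y ∧
      (∃ a ∈ range p, a ∈ closure W) ∧ ¬ W ⊆ N}.Finite := by
  have hC : IsClosed (range p) := (isCompact_range hp).isClosed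
  obtain ⟨δ, hδ, hδN⟩ := (isCompact_range hp).exists_thickening_subset_open hN hpN
  have key : ∀ W ∈ {W : Set Y | ∃ y, W = connectedComponentIn (range p)ᶜ y ∧
      (∃ a ∈ range p, a ∈ closure W) ∧ ¬ W ⊆ N}, ∃ K : Set Y, K ⊆ W ∧ IsClosed K ∧
      IsPreconnected K ∧ ∃ x ∈ K, ∃ y ∈ K, δ / 2 ≤ dist x y := by
    rintro W ⟨y, rfl, ⟨a, ha, haW⟩, hWN⟩
    obtain ⟨z, hzW, hzN⟩ := not_subset.1 hWN
    obtain ⟨w, hwW, haw⟩ := Metric.mem_closure_iff.1 haW (δ / 2) (by linarith)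
    obtain ⟨β, hβ, h0, h1, hβW⟩ := exists_path_in hC.isOpen_compl.connectedComponentIn
      isPreconnected_connectedComponentIn hwW hzW
    refine ⟨β '' Icc 0 1, by rintro _ ⟨t, -, rfl⟩; exact hβW t, (isCompact_Icc.image hβ).isClosed,
      isPreconnected_Icc.image _ hβ.continuousOn, w, ⟨0, by simp, h0⟩, z, ⟨1, by simp, h1⟩, ?_⟩
    by_contra! h
    refine hzN (hδN (Metric.mem_thickening_iff.2 ⟨a, ha, ?_⟩))
    have := dist_triangle_left z a w
    rw [dist_comm a w] at haw
    linarith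
  choose! K hKW hKc hKp hKδ using key
  have hdis : ∀ W ∈ {W : Set Y | ∃ y, W = connectedComponentIn (range p)ᶜ y ∧
      (∃ a ∈ range p, a ∈ closure W) ∧ ¬ W ⊆ N}, ∀ W' ∈ {W : Set Y | ∃ y,
      W = connectedComponentIn (range p)ᶜ y ∧ (∃ a ∈ range p, a ∈ closure W) ∧ ¬ W ⊆ N},
      ∀ x, x ∈ K W → x ∈ K W' → W = W' := by
    intro W hW W' hW' x hx hx'
    have h1 := hKW W hW hx
    have h2 := hKW W' hW' hx'
    obtain ⟨y, rfl, -⟩ := hW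
    obtain ⟨y', rfl, -⟩ := hW'
    rw [connectedComponentIn_eq h1, connectedComponentIn_eq h2]
  refine Set.Finite.of_finite_image (f := K) ?_ ?_
  · refine finite_of_disjoint_continua hfin (half_pos hδ) (𝒦 := K '' _)
      (by rintro _ ⟨W, hW, rfl⟩; exact hKc W hW) (by rintro _ ⟨W, hW, rfl⟩; exact hKp W hW) ?_
      (by rintro _ ⟨W, hW, rfl⟩; exact hKδ W hW)
    rintro _ ⟨W, hW, rfl⟩ _ ⟨W', hW', rfl⟩ hne
    refine disjoint_left.2 fun x hx hx' => hne ?_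
    rw [hdis W hW W' hW' x hx hx']
  · intro W hW W' hW' h
    obtain ⟨x, hx, -⟩ := hKδ W hW
    exact hdis W hW W' hW' x hx (h ▸ hx)

/-- A complementary component cannot touch the circle along an arc. -/
lemma interior_touching_eq_empty (hfin : {C : Set Y | IsCircleSet C}.Finite) (hp : Continuous p)
    (hpi : p.Injective) (y : Y) :
    interior {s : ℝ | p s ∈ closure (connectedComponentIn (range p)ᶜ y)} = ∅ := by
  have hC : IsClosed (range p) := (isCompact_range hp).isClosed
  set W := connectedComponentIn (range p)ᶜ y with hW
  by_contra hne
  obtain ⟨c, hc⟩ := nonempty_iff_ne_empty.2 hne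
  obtain ⟨ε, hε, hball⟩ := Metric.isOpen_iff.1 isOpen_interior c hc
  obtain ⟨d, hcd, hd1, hdε⟩ : ∃ d, c < d ∧ d < c + 1 ∧ d < c + ε :=
    ⟨c + min ε 1 / 2, by
      have : 0 < min ε 1 := lt_min hε one_pos
      linarith, by linarith [min_le_right ε 1], by linarith [min_le_left ε 1]⟩
  have hcl : ∀ s ∈ Icc c d, p s ∈ closure W := by
    intro s hs
    have hs' : s ∈ Metric.ball c ε := by
      rw [Metric.mem_ball, Real.dist_eq, abs_lt]
      constructor <;> linarith [hs.1, hs.2]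
    exact (interior_subset (hball hs') : s ∈ {s : ℝ | p s ∈ closure W})
  have hinj : ∀ s ∈ Icc c d, ∀ t ∈ Icc c d, p s = p t → s = t := fun s hs t ht h =>
    injOn_coe_addCircle (by linarith) hs ht (hpi h)
  let u : ℕ → ℝ := fun i => c + (d - c) / (i + 1)
  have hu : StrictAnti u := by
    intro i j hij
    have : (i : ℝ) < j := Nat.cast_lt.2 hij
    have : (d - c) / ((j : ℝ) + 1) < (d - c) / (i + 1) :=
      div_lt_div_of_pos_left (by linarith) (by positivity) (by linarith)
    change c + _ < c + _
    linarith
  have huc : ∀ i, u i ∈ Icc c d := fun i => by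
    have h1 : 0 < (d - c) / ((i : ℝ) + 1) := div_pos (by linarith) (by positivity)
    have h2 : (d - c) / ((i : ℝ) + 1) ≤ d - c := div_le_self (by linarith) (by
      have : (0 : ℝ) ≤ i := Nat.cast_nonneg i
      linarith)
    constructor <;> simp only [u] <;> linarith
  have hcirc : ∀ i, ∃ D, IsCircleSet D ∧
      (D ∩ (fun s : ℝ => p s) '' Icc ((2 * u (i + 1) + u i) / 3) ((u (i + 1) + 2 * u i) / 3)).Nonempty ∧
      Disjoint ((fun s : ℝ => p s) '' (Icc c d \ Ioo (u (i + 1)) (u i))) D := by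
    intro i
    have hlt := hu (Nat.lt_succ_self i)
    have h1 := huc i
    have h2 := huc (i + 1)
    obtain ⟨D, hD, -, hDT, hDF⟩ := exists_circle_of_touching_avoiding (T :=
      (fun s : ℝ => p s) '' Icc ((2 * u (i + 1) + u i) / 3) ((u (i + 1) + 2 * u i) / 3))
      (F := (fun s : ℝ => p s) '' (Icc c d \ Ioo (u (i + 1)) (u i)))
      (hC.isOpen_compl.connectedComponentIn (x := y)) isPreconnected_connectedComponentIn
      (disjoint_left.2 (by
        rintro _ hx ⟨s, -, rfl⟩
        exact connectedComponentIn_subset _ _ hx ⟨_, rfl⟩))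
      (p := p ((2 * u (i + 1) + u i) / 3 : ℝ)) (q := p ((u (i + 1) + 2 * u i) / 3 : ℝ))
      (fun h => by
        have := hinj _ ⟨by linarith [h2.1], by linarith [h1.2]⟩ _
          ⟨by linarith [h2.1], by linarith [h1.2]⟩ h
        linarith)
      (hcl _ ⟨by linarith [h2.1], by linarith [h1.2]⟩)
      (hcl _ ⟨by linarith [h2.1], by linarith [h1.2]⟩)
      (joinedIn_loop hp (by linarith))
      ((isCompact_Icc.diff isOpen_Ioo).image (continuous_loop hp)).isClosed
      (disjoint_left.2 (by
        rintro _ ⟨s, -, rfl⟩ hx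
        exact connectedComponentIn_subset _ _ hx ⟨_, rfl⟩))
      (disjoint_left.2 (by
        rintro _ ⟨s, hs, rfl⟩ ⟨t, ht, hts⟩
        have : t = s := hinj t ⟨by linarith [ht.1, h2.1], by linarith [ht.2, h1.2]⟩ s hs.1 hts
        exact hs.2 ⟨by linarith [ht.1], by linarith [ht.2]⟩))
    exact ⟨D, hD, hDT, hDF⟩
  choose D hD hDT hDF using hcirc
  refine Set.infinite_of_injective_forall_mem (f := D) (fun i j hij => ?_) hD hfin
  by_contra hne
  obtain ⟨z, hzD, s, hs, rfl⟩ := hDT i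
  have hlt := hu (Nat.lt_succ_self i)
  refine disjoint_left.1 (hDF j) ⟨s, ⟨⟨?_, ?_⟩, fun hsj => ?_⟩, rfl⟩ (hij ▸ hzD)
  · linarith [hs.1, (huc (i + 1)).1]
  · linarith [hs.2, (huc i).2]
  · rcases lt_or_gt_of_ne hne with h | h
    · have : u j ≤ u (i + 1) := hu.antitone h
      linarith [hs.1, hsj.2]
    · have : u i ≤ u (j + 1) := hu.antitone h
      linarith [hs.2, hsj.1]

lemma exists_touching_of_isPreconnected (hp : Continuous p) {y : Y} {U : Set Y}
    (hU : IsPreconnected U) {x z : Y} (hxU : x ∈ U) (hx : x ∉ connectedComponentIn (range p)ᶜ y)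
    (hzU : z ∈ U) (hz : z ∈ connectedComponentIn (range p)ᶜ y) :
    ∃ a ∈ U, a ∈ range p ∧ a ∈ closure (connectedComponentIn (range p)ᶜ y) := by
  have hC : IsClosed (range p) := (isCompact_range hp).isClosed
  have hW : ∀ y, IsOpen (connectedComponentIn (range p)ᶜ y) := fun y =>
    hC.isOpen_compl.connectedComponentIn
  by_contra! h
  have hcl : ∀ b ∈ U, b ∈ closure (connectedComponentIn (range p)ᶜ y) →
      b ∈ connectedComponentIn (range p)ᶜ y := by
    intro b hb hbW
    have hbC : b ∉ range p := fun h' => h b hb h' hbW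
    obtain ⟨c, hcb, hcy⟩ := mem_closure_iff.1 hbW _ (hW b) (mem_connectedComponentIn hbC)
    rw [connectedComponentIn_eq hcy, ← connectedComponentIn_eq hcb]
    exact mem_connectedComponentIn hbC
  obtain ⟨b, -, hb1, hb2⟩ := hU _ (closure (connectedComponentIn (range p)ᶜ y))ᶜ (hW y)
    isClosed_closure.isOpen_compl (fun b hb => by
      by_cases h' : b ∈ closure (connectedComponentIn (range p)ᶜ y)
      · exact .inl (hcl b hb h')
      · exact .inr h') ⟨z, hzU, hz⟩ ⟨x, hxU, fun h' => hx (hcl x hxU h')⟩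
  exact hb2 (subset_closure hb1)

lemma loop_eq {Y : Type*} {p : AddCircle (1 : ℝ) → Y} (hpi : p.Injective) {s t : ℝ}
    (hs : s ∈ Ioo (0 : ℝ) 1) (ht : t ∈ Icc (0 : ℝ) 1) (h : p s = p t) : s = t := by
  rcases ht.2.eq_or_lt with rfl | ht1
  · have h0 : ((1 : ℝ) : AddCircle (1 : ℝ)) = ((0 : ℝ) : AddCircle (1 : ℝ)) := by
      rw [AddCircle.coe_period]; rfl
    rw [h0] at h
    have : s = 0 := injOn_coe_addCircle (a := 0) (b := s) (by linarith [hs.2]) ⟨hs.1.le, le_rfl⟩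
      ⟨le_rfl, hs.1.le⟩ (hpi h)
    linarith [hs.1]
  · exact injOn_coe_addCircle (a := 0) (b := max s t) (by linarith [max_lt hs.2 ht1])
      ⟨hs.1.le, le_max_left _ _⟩ ⟨ht.1, le_max_right _ _⟩ (hpi h)

/-- Near a circle with small neighbourhood `N` there is an open set whose frontier consists of two
points of the circle and which meets the circle exactly in the open arc between them. -/
lemma exists_cut [CompactSpace Y] (hfin : {C : Set Y | IsCircleSet C}.Finite) (hp : Continuous p)
    (hpi : p.Injective) {N : Set Y} (hN : IsOpen N) (hpN : range p ⊆ N) :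
    ∃ s₁ s₂ : ℝ, 0 < s₁ ∧ s₁ < s₂ ∧ s₂ < 1 ∧ ∃ O : Set Y, IsOpen O ∧ O ⊆ N ∧
      frontier O ⊆ {p s₁, p s₂} ∧ ∀ s ∈ Icc (0 : ℝ) 1, (p s ∈ O ↔ s ∈ Ioo s₁ s₂) := by
  have hC : IsClosed (range p) := (isCompact_range hp).isClosed
  have hW : ∀ y, IsOpen (connectedComponentIn (range p)ᶜ y) := fun y =>
    hC.isOpen_compl.connectedComponentIn
  have hbad := (finite_multiply_touching hfin hp).union (finite_large_touching hfin hp hN hpN)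
  set ℬ := {W : Set Y | ∃ y, W = connectedComponentIn (range p)ᶜ y ∧
      ∃ a ∈ range p, ∃ b ∈ range p, a ≠ b ∧ a ∈ closure W ∧ b ∈ closure W} ∪
    {W : Set Y | ∃ y, W = connectedComponentIn (range p)ᶜ y ∧
      (∃ a ∈ range p, a ∈ closure W) ∧ ¬ W ⊆ N} with hℬ
  have hopen : ∀ W ∈ ℬ, IsOpen {s : ℝ | p s ∈ closure W}ᶜ := fun W _ =>
    (isClosed_closure.preimage (continuous_loop hp)).isOpen_compl
  have hdense : Dense (⋂ W ∈ ℬ, {s : ℝ | p s ∈ closure W}ᶜ) := by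
    refine dense_biInter_of_isOpen hopen hbad.countable fun W hW => ?_
    rw [← interior_eq_empty_iff_dense_compl]
    rcases hW with ⟨y, rfl, -⟩ | ⟨y, rfl, -⟩ <;> exact interior_touching_eq_empty hfin hp hpi y
  obtain ⟨s₀, hs₀, hs₀E⟩ := hdense.inter_open_nonempty (Ioo 0 1) isOpen_Ioo
    (nonempty_Ioo.2 one_pos)
  obtain ⟨ε, hε, hball⟩ := Metric.isOpen_iff.1
    ((isOpen_Ioo (a := (0 : ℝ)) (b := 1)).inter (hbad.isOpen_biInter hopen)) s₀ ⟨hs₀, hs₀E⟩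
  have hIcc : ∀ s ∈ Icc (s₀ - ε / 2) (s₀ + ε / 2), s ∈ Ioo (0 : ℝ) 1 ∧
      ∀ W ∈ ℬ, p s ∉ closure W := by
    intro s hs
    have hs' : s ∈ Metric.ball s₀ ε := by
      rw [Metric.mem_ball, Real.dist_eq, abs_lt]
      constructor <;> linarith [hs.1, hs.2]
    have := hball hs'
    exact ⟨this.1, fun W hW => mem_iInter₂.1 this.2 W hW⟩
  set s₁ := s₀ - ε / 2
  set s₂ := s₀ + ε / 2
  have hs12 : s₁ < s₂ := by simp only [s₁, s₂]; linarith
  have hIoo : ∀ s ∈ Ioo s₁ s₂, s ∈ Icc s₁ s₂ := fun s hs => Ioo_subset_Icc_self hs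
  have hrange : ∀ y ∈ range p, ∃ t ∈ Icc (0 : ℝ) 1, p t = y := by
    rintro _ ⟨a, rfl⟩
    have : a ∈ ((↑) : ℝ → AddCircle (1 : ℝ)) '' Icc 0 (0 + 1) := by
      rw [AddCircle.coe_image_Icc_eq]; exact mem_univ a
    obtain ⟨t, ht, rfl⟩ := this
    exact ⟨t, by simpa using ht, rfl⟩
  let O : Set Y := {y | (∃ s ∈ Ioo s₁ s₂, p s = y) ∨
    (y ∉ range p ∧ ∃ s ∈ Ioo s₁ s₂, p s ∈ closure (connectedComponentIn (range p)ᶜ y))}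
  have hOo : IsOpen O := by
    rw [isOpen_iff_forall_mem_open]
    rintro y (⟨s, hs, rfl⟩ | ⟨hy, s, hs, hsW⟩)
    · have hK : IsClosed ((fun s : ℝ => p s) '' (Icc 0 1 \ Ioo s₁ s₂)) :=
        ((isCompact_Icc.diff isOpen_Ioo).image (continuous_loop hp)).isClosed
      have hsK : p s ∈ ((fun s : ℝ => p s) '' (Icc 0 1 \ Ioo s₁ s₂))ᶜ := by
        rintro ⟨t, ht, hts⟩
        have : s = t := loop_eq hpi (hIcc s (hIoo s hs)).1 ht.1 hts.symm
        exact ht.2 (this ▸ hs)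
      obtain ⟨U, hUK, hU, hsU, hUc⟩ := exists_open_connected (hK.isOpen_compl.mem_nhds hsK)
      have hUr : ∀ z ∈ U, z ∈ range p → ∃ t ∈ Ioo s₁ s₂, p t = z := by
        intro z hz hzr
        obtain ⟨t, ht, rfl⟩ := hrange z hzr
        by_contra! h
        exact hUK hz ⟨t, ⟨ht, fun h' => h t h' rfl⟩, rfl⟩
      refine ⟨U, fun z hz => ?_, hU, hsU⟩
      by_cases hzr : z ∈ range p
      · exact .inl (hUr z hz hzr)
      · obtain ⟨a, haU, har, haW⟩ := exists_touching_of_isPreconnected hp hUc.isPreconnected hsU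
          (fun h => connectedComponentIn_subset _ _ h ⟨_, rfl⟩) hz (mem_connectedComponentIn hzr)
        obtain ⟨t, ht, rfl⟩ := hUr a haU har
        exact .inr ⟨hzr, t, ht, haW⟩
    · refine ⟨connectedComponentIn (range p)ᶜ y, fun z hz => .inr ⟨connectedComponentIn_subset _ _ hz, s, hs, ?_⟩, hW y,
        mem_connectedComponentIn hy⟩
      have hz' : z ∈ connectedComponentIn (range p)ᶜ y := hz
      rwa [← connectedComponentIn_eq hz']
  refine ⟨s₁, s₂, (hIcc s₁ ⟨le_rfl, hs12.le⟩).1.1, hs12, (hIcc s₂ ⟨hs12.le, le_rfl⟩).1.2, O, hOo,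
    ?_, ?_, fun s hs => ⟨?_, fun h => .inl ⟨s, h, rfl⟩⟩⟩
  · rintro y (⟨s, hs, rfl⟩ | ⟨hy, s, hs, hsW⟩)
    · exact hpN ⟨_, rfl⟩
    · by_contra hyN
      exact (hIcc s (hIoo s hs)).2 _ (.inr ⟨y, rfl, ⟨_, ⟨_, rfl⟩, hsW⟩,
        fun h => hyN (h (mem_connectedComponentIn hy))⟩) hsW
  · rw [hOo.frontier_eq]
    rintro y ⟨hycl, hyO⟩
    by_cases hyr : y ∈ range p
    · obtain ⟨t, ht, rfl⟩ := hrange y hyr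
      by_contra hne
      simp only [mem_insert_iff, mem_singleton_iff, not_or] at hne
      have htI : t ∉ Icc s₁ s₂ := by
        intro h
        rcases h.1.eq_or_lt with h1 | h1
        · exact hne.1 (by rw [h1])
        rcases h.2.eq_or_lt with h2 | h2
        · exact hne.2 (by rw [h2])
        exact hyO (.inl ⟨t, ⟨h1, h2⟩, rfl⟩)
      have hK : IsClosed ((fun s : ℝ => p s) '' Icc s₁ s₂) :=
        (isCompact_Icc.image (continuous_loop hp)).isClosed
      have htK : p t ∈ ((fun s : ℝ => p s) '' Icc s₁ s₂)ᶜ := by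
        rintro ⟨s, hs, hst⟩
        have : s = t := loop_eq hpi (hIcc s hs).1 ht hst
        exact htI (this ▸ hs)
      obtain ⟨U, hUK, hU, htU, hUc⟩ := exists_open_connected (hK.isOpen_compl.mem_nhds htK)
      obtain ⟨z, hzU, ⟨s, hs, rfl⟩ | ⟨hzr, s, hs, hsW⟩⟩ := mem_closure_iff.1 hycl U hU htU
      · exact hUK hzU ⟨s, hIoo s hs, rfl⟩
      · obtain ⟨a, haU, har, haW⟩ := exists_touching_of_isPreconnected hp hUc.isPreconnected htU
          (fun h => connectedComponentIn_subset _ _ h ⟨_, rfl⟩) hzU (mem_connectedComponentIn hzr)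
        refine (hIcc s (hIoo s hs)).2 _ (.inl ⟨z, rfl, a, har, p s, ⟨_, rfl⟩, ?_, haW, hsW⟩) hsW
        rintro rfl
        exact hUK haU ⟨s, hIoo s hs, rfl⟩
    · obtain ⟨z, hzW, hzO⟩ := mem_closure_iff.1 hycl _ (hW y) (mem_connectedComponentIn hyr)
      rcases hzO with ⟨s, hs, rfl⟩ | ⟨hzr, s, hs, hsW⟩
      · exact absurd ⟨_, rfl⟩ (connectedComponentIn_subset _ _ hzW)
      · refine absurd (.inr ⟨hyr, s, hs, ?_⟩) hyO
        rwa [connectedComponentIn_eq hzW]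
  · rintro (⟨t, ht, hts⟩ | ⟨h, -⟩)
    · exact (loop_eq hpi (hIcc t (hIoo t ht)).1 hs hts) ▸ ht
    · exact absurd ⟨_, rfl⟩ h

/-- A circle in a Peano continuum with finitely many circles is a retract, by a map that is constant
away from a prescribed neighbourhood of the circle. -/
theorem exists_angle [CompactSpace Y] (hfin : {C : Set Y | IsCircleSet C}.Finite) (hp : Continuous p)
    (hpi : p.Injective) {N : Set Y} (hN : IsOpen N) (hpN : range p ⊆ N) :
    ∃ θ : Y → AddCircle (1 : ℝ), Continuous θ ∧ (∀ a, θ (p a) = a) ∧ ∀ y, y ∉ N → θ y = 0 := by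
  classical
  obtain ⟨s₁, s₂, h1, h12, h2, O, hO, hON, hfr, hOp⟩ := exists_cut hfin hp hpi hN hpN
  have hs1 : s₁ ∈ Ioo (0 : ℝ) 1 := ⟨h1, h12.trans h2⟩
  have hs2 : s₂ ∈ Ioo (0 : ℝ) 1 := ⟨h1.trans h12, h2⟩
  have hne : p s₁ ≠ p s₂ := fun h => h12.ne (loop_eq hpi hs1 (Ioo_subset_Icc_self hs2) h)
  have hpos : ∀ y, 0 < dist y (p s₁) + dist y (p s₂) := fun y => by
    have := dist_triangle_left (p s₁) (p s₂) y
    linarith [dist_pos.2 hne]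
  let u : Y → ℝ := fun y => dist y (p s₁) / (dist y (p s₁) + dist y (p s₂))
  have hu : Continuous u := by
    refine Continuous.div (by fun_prop) (by fun_prop) fun y => (hpos y).ne'
  have hu1 : u (p s₁) = 0 := by simp [u]
  have hu2 : u (p s₂) = 1 := by
    have := dist_pos.2 hne.symm
    simp only [u, dist_self, add_zero]
    exact div_self this.ne'
  have hone : ((1 : ℝ) : AddCircle (1 : ℝ)) = 0 := AddCircle.coe_period 1
  -- `θ₀` winds once around while the circle passes from `p s₁` to `p s₂` through `O`; it differs
  -- from the angle on the circle by a real function `v`, which extends to `Y`.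
  let θ₀ : Y → AddCircle (1 : ℝ) := fun y => if y ∈ O then (u y : AddCircle (1 : ℝ)) else 0
  have hθ₀ : Continuous θ₀ := by
    refine Continuous.if (fun y hy => ?_) ((AddCircle.continuous_mk' 1).comp hu) continuous_const
    rcases hfr hy with rfl | rfl
    · rw [hu1]; rfl
    · rw [hu2, hone]
  let v : ℝ → ℝ := fun s => s - u (p (max s₁ (min s₂ s) : ℝ))
  have hv : Continuous v := continuous_id.sub (hu.comp ((continuous_loop hp).comp (by fun_prop)))
  have hθv : ∀ s ∈ Icc (0 : ℝ) 1, θ₀ (p s) = ((s - v s : ℝ) : AddCircle (1 : ℝ)) := by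
    intro s hs
    simp only [v, sub_sub_cancel, θ₀]
    by_cases hsI : s ∈ Ioo s₁ s₂
    · rw [if_pos ((hOp s hs).2 hsI), min_eq_right hsI.2.le, max_eq_right hsI.1.le]
    · rw [if_neg (fun h => hsI ((hOp s hs).1 h))]
      by_cases hs' : s₁ < s
      · have : s₂ ≤ s := not_lt.1 fun h => hsI ⟨hs', h⟩
        rw [min_eq_left this, max_eq_right h12.le, hu2, hone]
      · rw [max_eq_left ((min_le_right _ _).trans (not_lt.1 hs')), hu1]
        rfl
  have hv01 : v 0 = v (0 + 1) := by
    simp only [v, zero_add]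
    rw [min_eq_right hs2.1.le, max_eq_left h1.le, hu1, min_eq_left h2.le, max_eq_right h12.le, hu2]
    norm_num
  have hvc : Continuous (AddCircle.liftIco 1 0 v) :=
    AddCircle.liftIco_continuous hv01 hv.continuousOn
  obtain ⟨w, hw⟩ := ContinuousMap.exists_extension (hp.isClosedEmbedding hpi)
    (⟨_, hvc⟩ : C(AddCircle (1 : ℝ), ℝ))
  obtain ⟨χ, hχ0, hχ1, -⟩ := exists_continuous_zero_one_of_isClosed hN.isClosed_compl
    (isCompact_range hp).isClosed (disjoint_compl_left_iff_subset.2 hpN)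
  refine ⟨fun y => θ₀ y + ((χ y * w y : ℝ) : AddCircle (1 : ℝ)),
    hθ₀.add ((AddCircle.continuous_mk' 1).comp (χ.continuous.mul w.continuous)), fun a => ?_,
    fun y hy => ?_⟩
  · have : a ∈ ((↑) : ℝ → AddCircle (1 : ℝ)) '' Ico 0 (0 + 1) := by
      rw [AddCircle.coe_image_Ico_eq]; exact mem_univ a
    obtain ⟨s, hs, rfl⟩ := this
    have hvs : AddCircle.liftIco 1 0 v (s : AddCircle (1 : ℝ)) = v s :=
      AddCircle.liftIco_coe_apply hs
    have hw' : w (p s) = v s := (DFunLike.congr_fun hw (s : AddCircle (1 : ℝ))).trans hvs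
    have hs' : s ∈ Icc (0 : ℝ) 1 := by simpa using Ico_subset_Icc_self hs
    change θ₀ (p s) + ((χ (p s) * w (p s) : ℝ) : AddCircle (1 : ℝ)) = s
    rw [hχ1 ⟨_, rfl⟩, Pi.one_apply, one_mul, hw', hθv s hs', ← AddCircle.coe_add, sub_add_cancel]
  · change θ₀ y + ((χ y * w y : ℝ) : AddCircle (1 : ℝ)) = 0
    rw [hχ0 hy, Pi.zero_apply, zero_mul]
    simp only [θ₀, if_neg (fun h => hy (hON h))]
    simp

end Loops

/-! ### The structure of continua of the class `𝒞` -/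

section Coordinate

variable {X : Type*} [TopologicalSpace X]

/-- A coordinate on a continuum `L ∪ J ∪ R` of the class `𝒞`: a continuous map `τ : X → [0, 1]` with
`L = τ⁻¹(0)`, `R = τ⁻¹(1)`, which on `J = τ⁻¹((0, 1))` is a homeomorphism onto `(0, 1)` with
inverse `φ`; the curve `φ` accumulates on the whole of `L` at `0` and on the whole of `R` at `1`. -/
structure IsCoordinate (L R : Set X) (τ : X → ℝ) (φ : ℝ → X) : Prop where
  cont : Continuous τ
  range : ∀ x, τ x ∈ Icc (0 : ℝ) 1
  left : ∀ x, x ∈ L ↔ τ x = 0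
  right : ∀ x, x ∈ R ↔ τ x = 1
  contOn : ContinuousOn φ (Ioo 0 1)
  coord_apply : ∀ t ∈ Ioo (0 : ℝ) 1, τ (φ t) = t
  apply_coord : ∀ x, τ x ∈ Ioo (0 : ℝ) 1 → φ (τ x) = x
  left_acc : ∀ ε ∈ Ioo (0 : ℝ) 1, L ⊆ closure (φ '' Ioo 0 ε)
  right_acc : ∀ ε ∈ Ioo (0 : ℝ) 1, R ⊆ closure (φ '' Ioo ε 1)

theorem IsCoordinate.symm {L R : Set X} {τ : X → ℝ} {φ : ℝ → X} (h : IsCoordinate L R τ φ) :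
    IsCoordinate R L (fun x => 1 - τ x) (fun t => φ (1 - t)) := by
  have hflip : ∀ t ∈ Ioo (0 : ℝ) 1, 1 - t ∈ Ioo (0 : ℝ) 1 := fun t ht =>
    ⟨by linarith [ht.2], by linarith [ht.1]⟩
  refine ⟨continuous_const.sub h.cont, fun x => ⟨?_, ?_⟩, fun x => ?_, fun x => ?_, ?_,
    fun t ht => ?_, fun x hx => ?_, fun ε hε => ?_, fun ε hε => ?_⟩
  · linarith [(h.range x).2]
  · linarith [(h.range x).1]
  · rw [h.right]; constructor <;> intro h <;> linarith
  · rw [h.left]; constructor <;> intro h <;> linarith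
  · exact h.contOn.comp (by fun_prop) hflip
  · rw [h.coord_apply _ (hflip t ht)]; ring
  · rw [sub_sub_cancel]
    exact h.apply_coord x ⟨by linarith [hx.2], by linarith [hx.1]⟩
  · refine (h.right_acc _ (hflip ε hε)).trans (closure_mono ?_)
    rintro _ ⟨t, ht, rfl⟩
    exact ⟨1 - t, ⟨by linarith [ht.2], by linarith [ht.1]⟩, by simp⟩
  · refine (h.left_acc _ (hflip ε hε)).trans (closure_mono ?_)
    rintro _ ⟨t, ht, rfl⟩
    exact ⟨1 - t, ⟨by linarith [ht.2], by linarith [ht.1]⟩, by simp⟩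

/-- A relatively closed, connected, noncompact proper subset of `(0, 1)` reaches exactly one of the
two ends. -/
theorem interval_of_isClosed {A : Set ℝ} (hA : A ⊆ Ioo 0 1)
    (hcl : closure A ∩ Ioo 0 1 ⊆ A) (hc : IsPreconnected A)
    (hK : ¬ IsCompact A) (hne : A ≠ Ioo 0 1) :
    ∃ a ∈ Ioo (0 : ℝ) 1, A = Ioc 0 a ∨ A = Ico a 1 := by
  have hbb : BddBelow A := ⟨0, fun x hx => (hA hx).1.le⟩
  have hba : BddAbove A := ⟨1, fun x hx => (hA hx).2.le⟩
  have hAne : A.Nonempty := by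
    by_contra h
    rw [not_nonempty_iff_eq_empty] at h
    exact hK (h ▸ isCompact_empty)
  have hoc := hc.ordConnected
  have hle : ∀ x ∈ A, sInf A ≤ x ∧ x ≤ sSup A := fun x hx => ⟨csInf_le hbb hx, le_csSup hba hx⟩
  obtain ⟨x₀, hx₀⟩ := hAne
  have h0 : 0 ≤ sInf A := le_csInf ⟨x₀, hx₀⟩ fun x hx => (hA hx).1.le
  have h1 : sSup A ≤ 1 := csSup_le ⟨x₀, hx₀⟩ fun x hx => (hA hx).2.le
  have hx₀' := hA hx₀
  have hmid : ∀ x, sInf A < x → x < sSup A → x ∈ A := by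
    intro x hx hx'
    obtain ⟨y, hy, hyx⟩ := exists_lt_of_csInf_lt ⟨x₀, hx₀⟩ hx
    obtain ⟨z, hz, hxz⟩ := exists_lt_of_lt_csSup ⟨x₀, hx₀⟩ hx'
    exact hoc.out hy hz ⟨hyx.le, hxz.le⟩
  have hinf : 0 < sInf A → sInf A ∈ A := fun h =>
    hcl ⟨csInf_mem_closure ⟨x₀, hx₀⟩ hbb, h, (hle _ hx₀).1.trans_lt hx₀'.2⟩
  have hsup : sSup A < 1 → sSup A ∈ A := fun h =>
    hcl ⟨csSup_mem_closure ⟨x₀, hx₀⟩ hba, hx₀'.1.trans_le (hle _ hx₀).2, h⟩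
  rcases h0.eq_or_lt with h0 | h0
  · rcases h1.eq_or_lt with h1 | h1
    · exact absurd (hA.antisymm fun x hx => hmid x (h0 ▸ hx.1) (h1 ▸ hx.2)) hne
    · refine ⟨sSup A, ⟨hx₀'.1.trans_le (hle _ hx₀).2, h1⟩, .inl ?_⟩
      ext x
      refine ⟨fun hx => ⟨(hA hx).1, (hle x hx).2⟩, fun hx => ?_⟩
      rcases hx.2.eq_or_lt with h | h
      · exact h ▸ hsup h1
      · exact hmid x (h0 ▸ hx.1) h
  · rcases h1.eq_or_lt with h1 | h1
    · refine ⟨sInf A, ⟨h0, (hle _ hx₀).1.trans_lt hx₀'.2⟩, .inr ?_⟩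
      ext x
      refine ⟨fun hx => ⟨(hle x hx).1, (hA hx).2⟩, fun hx => ?_⟩
      rcases hx.1.eq_or_lt with h | h
      · exact h ▸ hinf h0
      · exact hmid x h (h1 ▸ hx.2)
    · refine absurd ?_ hK
      have : A = Icc (sInf A) (sSup A) :=
        Subset.antisymm (fun x hx => hle x hx) (hoc.out (hinf h0) (hsup h1))
      rw [this]
      exact isCompact_Icc

/-- The coordinate, once the rays are known to be `φ((0, a])` and `φ([b, 1))`. -/
theorem exists_coordinate_aux [T2Space X] {L J R JL JR : Set X} {φ : ℝ → X} {h : X → ℝ}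
    (hJ : IsOpen J) (hu : ∀ x, x ∈ L ∨ x ∈ J ∨ x ∈ R) (hLJ : Disjoint L J) (hRJ : Disjoint R J)
    (hLR : Disjoint L R) (hφ : ContinuousOn φ (Ioo 0 1)) (hφJ : MapsTo φ (Ioo 0 1) J)
    (hh : ContinuousOn h J) (hhJ : MapsTo h J (Ioo 0 1)) (hhφ : ∀ t ∈ Ioo (0 : ℝ) 1, h (φ t) = t)
    (hφh : ∀ x ∈ J, φ (h x) = x)
    (hJL : IsClosed (L ∪ JL)) (hJR : IsClosed (R ∪ JR)) (hL : L ⊆ closure JL)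
    (hR : R ⊆ closure JR) {a b : ℝ} (ha : a ∈ Ioo (0 : ℝ) 1) (hb : b ∈ Ioo (0 : ℝ) 1)
    (hJLa : JL = φ '' Ioc 0 a) (hJRb : JR = φ '' Ico b 1) :
    ∃ τ : X → ℝ, ∃ φ : ℝ → X, IsCoordinate L R τ φ ∧ ∀ x, x ∈ J ↔ τ x ∈ Ioo (0 : ℝ) 1 := by
  classical
  let τ : X → ℝ := fun x => if x ∈ L then 0 else if x ∈ R then 1 else h x
  have hτL : ∀ x ∈ L, τ x = 0 := fun x hx => if_pos hx
  have hτR : ∀ x ∈ R, τ x = 1 := fun x hx => by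
    simp only [τ, if_neg (fun h => disjoint_left.1 hLR h hx), if_pos hx]
  have hτJ : ∀ x ∈ J, τ x = h x := fun x hx => by
    simp only [τ, if_neg (fun h => disjoint_left.1 hLJ h hx),
      if_neg (fun h => disjoint_left.1 hRJ h hx)]
  have hJτ : ∀ x, x ∈ J ↔ τ x ∈ Ioo (0 : ℝ) 1 := by
    intro x
    refine ⟨fun hx => hτJ x hx ▸ hhJ hx, fun hx => ?_⟩
    rcases hu x with h | h | h
    · rw [hτL x h] at hx; exact absurd hx.1 (lt_irrefl _)
    · exact h
    · rw [hτR x h] at hx; exact absurd hx.2 (lt_irrefl _)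
  have hcpt : ∀ c d, 0 < c → d < 1 → IsClosed (φ '' Icc c d) := fun c d hc hd =>
    (isCompact_Icc.image_of_continuousOn (hφ.mono (Icc_subset_Ioo hc hd))).isClosed
  have hopen : ∀ U : Set ℝ, IsOpen U → IsOpen (J ∩ h ⁻¹' U) := fun U hU => hh.isOpen_inter_preimage hJ hU
  have hmemφ : ∀ t ∈ Ioo (0 : ℝ) 1, τ (φ t) = t := fun t ht => by
    rw [hτJ _ (hφJ ht), hhφ t ht]
  have hcases : ∀ x, (x ∈ L ∧ τ x = 0) ∨ (x ∈ J ∧ τ x = h x ∧ h x ∈ Ioo 0 1 ∧ φ (h x) = x) ∨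
      (x ∈ R ∧ τ x = 1) := by
    intro x
    rcases hu x with h | h | h
    · exact .inl ⟨h, hτL x h⟩
    · exact .inr (.inl ⟨h, hτJ x h, hhJ h, hφh x h⟩)
    · exact .inr (.inr ⟨h, hτR x h⟩)
  have hlow : ∀ c, 0 < c → c < 1 → IsClosed {x | τ x ≤ c} := by
    intro c hc hc1
    have : {x | τ x ≤ c} = ((L ∪ JL) ∩ (J ∩ h ⁻¹' Ioi c)ᶜ) ∪ φ '' Icc a c := by
      ext x
      simp only [mem_ofPred_eq, mem_union, mem_inter_iff, mem_compl_iff, mem_preimage, mem_Ioi,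
        hJLa, not_and, not_lt]
      constructor
      · intro hx
        rcases hcases x with ⟨h1, h2⟩ | ⟨h1, h2, h3, h4⟩ | ⟨h1, h2⟩
        · exact .inl ⟨.inl h1, fun h => absurd h (disjoint_left.1 hLJ h1)⟩
        · rw [h2] at hx
          rcases le_total (h x) a with hxa | hxa
          · exact .inl ⟨.inr ⟨h x, ⟨h3.1, hxa⟩, h4⟩, fun _ => hx⟩
          · exact .inr ⟨h x, ⟨hxa, hx⟩, h4⟩
        · rw [h2] at hx; exact absurd hx (not_le.2 hc1)
      · rintro (⟨h1 | ⟨t, ht, rfl⟩, h2⟩ | ⟨t, ht, rfl⟩)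
        · rw [hτL x h1]; exact hc.le
        · have := h2 (hφJ ⟨ht.1, ht.2.trans_lt ha.2⟩)
          rwa [hτJ _ (hφJ ⟨ht.1, ht.2.trans_lt ha.2⟩)]
        · rw [hmemφ t ⟨ha.1.trans_le ht.1, ht.2.trans_lt hc1⟩]; exact ht.2
    rw [this]
    exact (hJL.inter (hopen _ isOpen_Ioi).isClosed_compl).union (hcpt a c ha.1 hc1)
  have hhigh : ∀ c, 0 < c → c < 1 → IsClosed {x | c ≤ τ x} := by
    intro c hc hc1
    have : {x | c ≤ τ x} = ((R ∪ JR) ∩ (J ∩ h ⁻¹' Iio c)ᶜ) ∪ φ '' Icc c b := by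
      ext x
      simp only [mem_ofPred_eq, mem_union, mem_inter_iff, mem_compl_iff, mem_preimage, mem_Iio,
        hJRb, not_and, not_lt]
      constructor
      · intro hx
        rcases hcases x with ⟨h1, h2⟩ | ⟨h1, h2, h3, h4⟩ | ⟨h1, h2⟩
        · rw [h2] at hx; exact absurd hx (not_le.2 hc)
        · rw [h2] at hx
          rcases le_total b (h x) with hxa | hxa
          · exact .inl ⟨.inr ⟨h x, ⟨hxa, h3.2⟩, h4⟩, fun _ => hx⟩
          · exact .inr ⟨h x, ⟨hx, hxa⟩, h4⟩
        · exact .inl ⟨.inl h1, fun h => absurd h (disjoint_left.1 hRJ h1)⟩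
      · rintro (⟨h1 | ⟨t, ht, rfl⟩, h2⟩ | ⟨t, ht, rfl⟩)
        · rw [hτR x h1]; exact hc1.le
        · have := h2 (hφJ ⟨hb.1.trans_le ht.1, ht.2⟩)
          rwa [hτJ _ (hφJ ⟨hb.1.trans_le ht.1, ht.2⟩)]
        · rw [hmemφ t ⟨hc.trans_le ht.1, ht.2.trans_lt hb.2⟩]; exact ht.1
    rw [this]
    exact (hJR.inter (hopen _ isOpen_Iio).isClosed_compl).union (hcpt c b hc hb.2)
  have hrange : ∀ x, τ x ∈ Icc (0 : ℝ) 1 := by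
    intro x
    rcases hcases x with ⟨h1, h2⟩ | ⟨h1, h2, h3, h4⟩ | ⟨h1, h2⟩
    · rw [h2]; simp
    · rw [h2]; exact Ioo_subset_Icc_self h3
    · rw [h2]; simp
  have hτ : Continuous τ := by
    rw [continuous_iff_continuousAt]
    intro x
    refine tendsto_order.2 ⟨fun c hc => ?_, fun c hc => ?_⟩
    · rcases lt_or_ge c 0 with h0 | h0
      · exact .of_forall fun y => h0.trans_le (hrange y).1
      · obtain ⟨d, hcd, hdx⟩ := exists_between hc
        have hcl := hlow d (h0.trans_lt hcd) (hdx.trans_le (hrange x).2)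
        filter_upwards [hcl.isOpen_compl.mem_nhds (x := x) (by simpa using hdx)] with y hy
        have : d < τ y := by simpa using hy
        exact hcd.trans this
    · rcases lt_or_ge 1 c with h0 | h0
      · exact .of_forall fun y => (hrange y).2.trans_lt h0
      · obtain ⟨d, hdx, hcd⟩ := exists_between hc
        have hcl := hhigh d ((hrange x).1.trans_lt hdx) (hcd.trans_le h0)
        filter_upwards [hcl.isOpen_compl.mem_nhds (x := x) (by simpa using hdx)] with y hy
        have : τ y < d := by simpa using hy
        exact this.trans hcd
  refine ⟨τ, φ, ⟨hτ, hrange, fun x => ⟨hτL x, fun h0 => ?_⟩, fun x => ⟨hτR x, fun h0 => ?_⟩, hφ,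
    hmemφ, fun x hx => ?_, fun ε hε x hx => ?_, fun ε hε x hx => ?_⟩, hJτ⟩
  · rcases hcases x with ⟨h1, h2⟩ | ⟨h1, h2, h3, h4⟩ | ⟨h1, h2⟩
    · exact h1
    · rw [← h2, h0] at h3; exact absurd h3.1 (lt_irrefl _)
    · rw [h0] at h2; norm_num at h2
  · rcases hcases x with ⟨h1, h2⟩ | ⟨h1, h2, h3, h4⟩ | ⟨h1, h2⟩
    · rw [h0] at h2; norm_num at h2
    · rw [← h2, h0] at h3; exact absurd h3.2 (lt_irrefl _)
    · exact h1
  · have := (hJτ x).2 hx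
    rw [hτJ x this]; exact hφh x this
  · have h1 : JL ⊆ φ '' Ioo 0 ε ∪ φ '' Icc ε a := by
      rw [hJLa]
      rintro _ ⟨t, ht, rfl⟩
      rcases lt_or_ge t ε with h | h
      · exact .inl ⟨t, ⟨ht.1, h⟩, rfl⟩
      · exact .inr ⟨t, ⟨h, ht.2⟩, rfl⟩
    have h2 := closure_mono h1 (hL hx)
    rw [closure_union, (hcpt ε a hε.1 ha.2).closure_eq] at h2
    rcases h2 with h2 | ⟨t, ht, rfl⟩
    · exact h2
    · exact absurd (hφJ ⟨hε.1.trans_le ht.1, ht.2.trans_lt ha.2⟩) (disjoint_left.1 hLJ hx)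
  · have h1 : JR ⊆ φ '' Ioo ε 1 ∪ φ '' Icc b ε := by
      rw [hJRb]
      rintro _ ⟨t, ht, rfl⟩
      rcases lt_or_ge ε t with h | h
      · exact .inl ⟨t, ⟨h, ht.2⟩, rfl⟩
      · exact .inr ⟨t, ⟨ht.1, h⟩, rfl⟩
    have h2 := closure_mono h1 (hR hx)
    rw [closure_union, (hcpt b ε hb.1 hε.2).closure_eq] at h2
    rcases h2 with h2 | ⟨t, ht, rfl⟩
    · exact h2
    · exact absurd (hφJ ⟨hb.1.trans_le ht.1, ht.2.trans_lt hε.2⟩) (disjoint_left.1 hRJ hx)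

/-- Each of the two rays approaches exactly one end of `J`, and not the same one, since otherwise
one of the compactifications would be all of `X`. -/
theorem ClassC.exists_coordinate [T2Space X] {L J R : Set X} (hC : ClassC L J R)
    (hLR : Disjoint L R) :
    ∃ τ : X → ℝ, ∃ φ : ℝ → X, IsCoordinate L R τ φ ∧ ∀ x, x ∈ J ↔ τ x ∈ Ioo (0 : ℝ) 1 := by
  classical
  obtain ⟨JL, JR, hJJ, hrL, hrR, hcL, hdL, hcR, hdR⟩ := hC.rays
  obtain ⟨e⟩ := hC.freeJ
  have hhalf : (1 / 2 : ℝ) ∈ Ioo (0 : ℝ) 1 := by norm_num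
  let φ : ℝ → X := fun t => if ht : t ∈ Ioo (0 : ℝ) 1 then (e.symm ⟨t, ht⟩ : X) else (e.symm ⟨1 / 2, hhalf⟩ : X)
  let h : X → ℝ := fun x => if hx : x ∈ J then (e ⟨x, hx⟩ : ℝ) else 0
  have hφe : ∀ t (ht : t ∈ Ioo (0 : ℝ) 1), φ t = e.symm ⟨t, ht⟩ := fun t ht => dif_pos ht
  have hhe : ∀ x (hx : x ∈ J), h x = e ⟨x, hx⟩ := fun x hx => dif_pos hx
  have hφ : ContinuousOn φ (Ioo 0 1) := by
    rw [continuousOn_iff_continuous_domRestrict]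
    have : (Ioo (0 : ℝ) 1).domRestrict φ = fun t => (e.symm t : X) := by
      ext t; exact hφe t.1 t.2
    rw [this]; fun_prop
  have hh : ContinuousOn h J := by
    rw [continuousOn_iff_continuous_domRestrict]
    have : J.domRestrict h = fun t => (e t : ℝ) := by
      ext t; exact hhe t.1 t.2
    rw [this]; fun_prop
  have hφJ : MapsTo φ (Ioo 0 1) J := fun t ht => by rw [hφe t ht]; exact Subtype.coe_prop _
  have hhJ : MapsTo h J (Ioo 0 1) := fun t ht => by rw [hhe t ht]; exact Subtype.coe_prop _
  have hhφ : ∀ t ∈ Ioo (0 : ℝ) 1, h (φ t) = t := fun t ht => by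
    rw [hhe _ (hφJ ht)]
    have : (⟨φ t, hφJ ht⟩ : J) = e.symm ⟨t, ht⟩ := Subtype.ext (hφe t ht)
    rw [this, Homeomorph.apply_symm_apply]
  have hφh : ∀ x ∈ J, φ (h x) = x := fun x hx => by
    rw [hφe _ (hhJ hx)]
    have : (⟨h x, hhJ hx⟩ : Ioo (0 : ℝ) 1) = e ⟨x, hx⟩ := Subtype.ext (hhe x hx)
    rw [this, Homeomorph.symm_apply_apply]
  -- the shape of a ray whose end set is `S`, seen in the coordinate
  have key : ∀ S T JS : Set X, S.Nonempty → T.Nonempty → Disjoint S J → Disjoint S T →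
      Disjoint T J → JS ⊆ J → IsRaySet JS → IsCompact (S ∪ JS) → S ∪ JS ⊆ closure JS →
      JS = φ '' (h '' JS) ∧ h '' JS ≠ Ioo 0 1 ∧ ∃ a ∈ Ioo (0 : ℝ) 1, h '' JS = Ioc 0 a ∨ h '' JS = Ico a 1 := by
    intro S T JS hS hT hSJ hST hTJ hJS hray hcS hdS
    have hJSφ : JS = φ '' (h '' JS) := by
      rw [image_image]
      ext x
      refine ⟨fun hx => ⟨x, hx, hφh x (hJS hx)⟩, ?_⟩
      rintro ⟨y, hy, rfl⟩
      change φ (h y) ∈ JS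
      rwa [hφh y (hJS hy)]
    have hsub : h '' JS ⊆ Ioo 0 1 := (image_mono hJS).trans hhJ.image_subset
    have hne : h '' JS ≠ Ioo 0 1 := by
      intro heq
      have hJeq : JS = J := by
        refine hJS.antisymm fun x hx => ?_
        rw [hJSφ, heq]
        exact ⟨h x, hhJ hx, hφh x hx⟩
      have : S ∪ J = univ := by
        rw [hJeq] at hcS
        exact univ_subset_iff.1 ((hC.denseJ.closure_eq ▸
          closure_minimal subset_union_right hcS.isClosed))
      obtain ⟨y, hy⟩ := hT
      rcases (this ▸ mem_univ y : y ∈ S ∪ J) with h | h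
      · exact disjoint_left.1 hST h hy
      · exact disjoint_left.1 hTJ hy h
    refine ⟨hJSφ, hne, interval_of_isClosed hsub ?_ ?_ ?_ hne⟩
    · rintro t ⟨ht, htI⟩
      have h1 : φ t ∈ closure JS := by
        have := (hφ t htI).mono hsub
        have h2 := this.mem_closure_image ht
        rwa [← hJSφ] at h2
      have h3 : φ t ∈ S ∪ JS := closure_minimal subset_union_right hcS.isClosed h1
      rcases h3 with h3 | h3
      · exact absurd (hφJ htI) (disjoint_left.1 hSJ h3)
      · exact ⟨φ t, h3, hhφ t htI⟩
    · obtain ⟨r⟩ := hray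
      have hIci : PreconnectedSpace (Ici (0 : ℝ)) :=
        isPreconnected_iff_preconnectedSpace.1 isPreconnected_Ici
      have hpre : IsPreconnected JS := by
        have := isPreconnected_range r.symm.continuous
        rw [r.symm.surjective.range_eq] at this
        exact isPreconnected_iff_preconnectedSpace.2 ⟨this⟩
      exact hpre.image h (hh.mono hJS)
    · intro hK
      have h1 : IsCompact JS := by
        rw [hJSφ]; exact hK.image_of_continuousOn (hφ.mono hsub)
      rw [h1.isClosed.closure_eq] at hdS
      obtain ⟨y, hy⟩ := hS
      exact disjoint_left.1 hSJ hy (hJS (hdS (.inl hy)))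
  have hu : ∀ x, x ∈ L ∨ x ∈ J ∨ x ∈ R := fun x => by
    have := hC.union_eq ▸ mem_univ x
    rcases this with (h | h) | h
    exacts [.inl h, .inr (.inl h), .inr (.inr h)]
  obtain ⟨hL1, hL2, a, ha, hLa⟩ := key L R JL hC.connL.nonempty hC.connR.nonempty hC.disjLJ hLR
    hC.disjRJ (hJJ ▸ subset_union_left) hrL hcL hdL
  obtain ⟨hR1, hR2, b, hb, hRb⟩ := key R L JR hC.connR.nonempty hC.connL.nonempty hC.disjRJ
    hLR.symm hC.disjLJ (hJJ ▸ subset_union_right) hrR hcR hdR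
  have hcov : ∀ t ∈ Ioo (0 : ℝ) 1, t ∈ h '' JL ∨ t ∈ h '' JR := by
    intro t ht
    rcases (hJJ.symm ▸ hφJ ht : φ t ∈ JL ∪ JR) with h1 | h1
    · exact .inl ⟨_, h1, hhφ t ht⟩
    · exact .inr ⟨_, h1, hhφ t ht⟩
  have hmin : min a b / 2 ∈ Ioo (0 : ℝ) 1 ∧ min a b / 2 < a ∧ min a b / 2 < b := by
    have h1 : 0 < min a b := lt_min ha.1 hb.1
    have h2 := min_le_left a b
    have h3 := min_le_right a b
    have := ha.2
    exact ⟨⟨by linarith, by linarith⟩, by linarith, by linarith⟩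
  have hmax : (1 + max a b) / 2 ∈ Ioo (0 : ℝ) 1 ∧ a < (1 + max a b) / 2 ∧ b < (1 + max a b) / 2 := by
    have h1 : max a b < 1 := max_lt ha.2 hb.2
    have h2 := le_max_left a b
    have h3 := le_max_right a b
    have := ha.1
    exact ⟨⟨by linarith, by linarith⟩, by linarith, by linarith⟩
  rcases hLa with hLa | hLa <;> rcases hRb with hRb | hRb
  · exfalso
    rcases hcov _ hmax.1 with h | h
    · rw [hLa] at h; exact absurd h.2 (not_le.2 hmax.2.1)
    · rw [hRb] at h; exact absurd h.2 (not_le.2 hmax.2.2)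
  · rw [hLa] at hL1
    rw [hRb] at hR1
    exact exists_coordinate_aux hC.openJ hu hC.disjLJ hC.disjRJ hLR hφ hφJ hh hhJ hhφ hφh
      hcL.isClosed hcR.isClosed (subset_union_left.trans hdL) (subset_union_left.trans hdR) ha hb
      hL1 hR1
  · rw [hLa] at hL1
    rw [hRb] at hR1
    have hflip : ∀ t ∈ Ioo (0 : ℝ) 1, 1 - t ∈ Ioo (0 : ℝ) 1 := fun t ht =>
      ⟨by linarith [ht.2], by linarith [ht.1]⟩
    refine exists_coordinate_aux (φ := fun t => φ (1 - t)) (h := fun x => 1 - h x) (a := 1 - a)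
      (b := 1 - b) (JL := JL) (JR := JR) hC.openJ hu hC.disjLJ hC.disjRJ hLR
      (hφ.comp (by fun_prop) hflip) (fun t ht => hφJ (hflip t ht)) (continuousOn_const.sub hh)
      (fun x hx => hflip _ (hhJ hx)) (fun t ht => ?_) (fun x hx => ?_) hcL.isClosed hcR.isClosed
      (subset_union_left.trans hdL) (subset_union_left.trans hdR) (hflip a ha) (hflip b hb) ?_ ?_
    · rw [hhφ _ (hflip t ht)]; ring
    · rw [sub_sub_cancel]; exact hφh x hx
    · rw [← image_image φ (fun t => 1 - t), image_const_sub_Ioc, sub_sub_cancel, sub_zero]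
      exact hL1
    · rw [← image_image φ (fun t => 1 - t), image_const_sub_Ico, sub_sub_cancel, sub_self]
      exact hR1
  · exfalso
    rcases hcov _ hmin.1 with h | h
    · rw [hLa] at h; exact absurd h.1 (not_le.2 hmin.2.1)
    · rw [hRb] at h; exact absurd h.1 (not_le.2 hmin.2.2)

/-- The preimage of `L` under a map `g` from a locally connected space is open: near a frontier
point of `g⁻¹(L)` the image of a small connected neighbourhood would have to contain a whole
initial piece of the free interval, which accumulates on all of `L`. -/
theorem IsCoordinate.isOpen_preimage_left [T3Space X] {L R : Set X} {τ : X → ℝ} {φ : ℝ → X}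
    (h : IsCoordinate L R τ φ) (hL : L.Nontrivial) {Y : Type*} [TopologicalSpace Y]
    [LocallyConnectedSpace Y] {g : Y → X} (hg : Continuous g) : IsOpen (g ⁻¹' L) := by
  rw [isOpen_iff_mem_nhds]
  intro y hy
  obtain ⟨l, hl, hlne⟩ := hL.exists_ne (g y)
  obtain ⟨V, hV, hVc, hVU⟩ := exists_mem_nhds_isClosed_subset
    (isOpen_compl_singleton.mem_nhds (show g y ∈ ({l}ᶜ : Set X) from fun h => hlne h.symm))
  obtain ⟨W, hWV, hWo, hyW, hWc⟩ := locallyConnectedSpace_iff_subsets_isOpen_isConnected.1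
    ‹LocallyConnectedSpace Y› y _ (hg.continuousAt hV)
  refine Filter.mem_of_superset (hWo.mem_nhds hyW) fun z hz => ?_
  by_contra hzL
  have hτz : 0 < τ (g z) := lt_of_le_of_ne (h.range _).1 fun h0 => hzL ((h.left _).2 h0.symm)
  have hτy : τ (g y) = 0 := (h.left _).1 hy
  have hI : Icc 0 (τ (g z)) ⊆ (τ ∘ g) '' W := by
    have := (hWc.isPreconnected.image _ (h.cont.comp hg).continuousOn).ordConnected.out
      (mem_image_of_mem _ hyW) (mem_image_of_mem _ hz)
    simpa [hτy] using this
  have hε : min (τ (g z)) (1 / 2) ∈ Ioo (0 : ℝ) 1 :=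
    ⟨lt_min hτz (by norm_num), (min_le_right _ _).trans_lt (by norm_num)⟩
  have hsub : φ '' Ioo 0 (min (τ (g z)) (1 / 2)) ⊆ V := by
    rintro _ ⟨t, ht, rfl⟩
    obtain ⟨w, hw, hwt⟩ := hI ⟨ht.1.le, (ht.2.trans_le (min_le_left _ _)).le⟩
    have hwt' : τ (g w) = t := hwt
    have : φ (τ (g w)) = g w := h.apply_coord _ (hwt'.symm ▸ ⟨ht.1, ht.2.trans hε.2⟩)
    rw [← hwt', this]
    exact hWV hw
  have hlV : l ∈ V := closure_minimal hsub hVc (h.left_acc _ hε hl)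
  exact hVU hlV rfl

theorem IsCoordinate.isClosed_left {L R : Set X} {τ : X → ℝ} {φ : ℝ → X}
    (h : IsCoordinate L R τ φ) : IsClosed L := by
  have : L = τ ⁻¹' {0} := by ext x; exact h.left x
  rw [this]
  exact isClosed_singleton.preimage h.cont

/-- A continuous image of a connected, locally connected space lies in one of the three pieces. -/
theorem IsCoordinate.range_subset [T3Space X] {L R : Set X} {τ : X → ℝ} {φ : ℝ → X}
    (h : IsCoordinate L R τ φ) (hL : L.Nontrivial) (hR : R.Nontrivial) {Y : Type*}
    [TopologicalSpace Y] [LocallyConnectedSpace Y] [PreconnectedSpace Y] {g : Y → X}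
    (hg : Continuous g) :
    (∀ y, g y ∈ L) ∨ (∀ y, g y ∈ R) ∨ ∀ y, τ (g y) ∈ Ioo (0 : ℝ) 1 := by
  have h1 : IsClopen (g ⁻¹' L) := ⟨h.isClosed_left.preimage hg, h.isOpen_preimage_left hL hg⟩
  have h2 : IsClopen (g ⁻¹' R) :=
    ⟨h.symm.isClosed_left.preimage hg, h.symm.isOpen_preimage_left hR hg⟩
  rcases isClopen_iff.1 h1 with h1 | h1
  · rcases isClopen_iff.1 h2 with h2 | h2
    · refine .inr (.inr fun y => ⟨lt_of_le_of_ne (h.range _).1 fun h0 => ?_,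
        lt_of_le_of_ne (h.range _).2 fun h0 => ?_⟩)
      · exact (h1 ▸ (h.left _).2 h0.symm : y ∈ (∅ : Set Y))
      · exact (h2 ▸ (h.right _).2 h0 : y ∈ (∅ : Set Y))
    · exact .inr (.inl fun y => (h2 ▸ mem_univ y : y ∈ g ⁻¹' R))
  · exact .inl fun y => show y ∈ g ⁻¹' L from h1 ▸ mem_univ y

/-- `X` can be pushed into an arbitrarily small neighbourhood of `L` without moving `L`. -/
theorem IsCoordinate.exists_retraction [CompactSpace X] {L R : Set X} {τ : X → ℝ} {φ : ℝ → X}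
    (h : IsCoordinate L R τ φ) {U : Set X} (hU : IsOpen U) (hLU : L ⊆ U) :
    ∃ ρ : X → X, Continuous ρ ∧ (∀ x, ρ x ∈ U) ∧ ∀ x ∈ L, ρ x = x := by
  classical
  obtain ⟨s, hs, hsU⟩ : ∃ s ∈ Ioo (0 : ℝ) 1, ∀ x, τ x ≤ s → x ∈ U := by
    rcases (Uᶜ : Set X).eq_empty_or_nonempty with hE | hE
    · exact ⟨1 / 2, by norm_num, fun x _ => by
        by_contra hx; exact (hE ▸ hx : x ∈ (∅ : Set X))⟩
    obtain ⟨x₀, hx₀, hmin⟩ := hU.isClosed_compl.isCompact.exists_isMinOn hE h.cont.continuousOn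
    have hpos : 0 < τ x₀ := lt_of_le_of_ne (h.range _).1 fun h0 => hx₀ (hLU ((h.left _).2 h0.symm))
    refine ⟨τ x₀ / 2, ⟨by linarith, by linarith [(h.range x₀).2]⟩, fun x hx => ?_⟩
    by_contra hxU
    have : τ x₀ ≤ τ x := hmin hxU
    linarith
  refine ⟨fun x => if τ x ≤ s then x else φ s, ?_, fun x => ?_, fun x hx => ?_⟩
  · refine Continuous.if (fun x hx => ?_) continuous_id continuous_const
    have : τ x = s := frontier_le_subset_eq h.cont continuous_const hx
    have h1 := h.apply_coord x (this.symm ▸ hs)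
    rw [this] at h1
    exact h1.symm
  · change (if τ x ≤ s then x else φ s) ∈ U
    split_ifs with hx
    · exact hsU x hx
    · exact hsU _ (h.coord_apply s hs).le
  · exact if_pos ((h.left x).1 hx ▸ hs.1.le)

end Coordinate

/-! ### Unions of disjoint circles as minimal sets -/

section Circles

variable {X : Type*} [TopologicalSpace X]

theorem IsLocalDendrite.finite_circles [T2Space X] {L : Set X} (hL : IsLocalDendrite L) :
    {C : Set L | IsCircleSet C}.Finite :=
  Set.Finite.of_injOn (t := {C : Set X | C ⊆ L ∧ IsCircleSet C})
    (f := fun C : Set L => ((↑) : L → X) '' C) (fun C hC => ⟨Subtype.coe_image_subset L C,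
      isCircleSet_image continuous_subtype_val Subtype.val_injective hC⟩)
    (image_injective.2 Subtype.val_injective).injOn hL.2.2.2

/-- A circle-valued map on a closed set `L`, vanishing off an open set `N`, extends to a
neighbourhood of `L` with the same property: extend it as a map to `ℂ` and take the argument where
the extension does not vanish. -/
theorem exists_extension_angle [NormalSpace X] {L N : Set X} (hL : IsClosed L) (hN : IsOpen N)
    {θ : L → AddCircle (1 : ℝ)} (hθ : Continuous θ) (hθN : ∀ y : L, (y : X) ∉ N → θ y = 0) :
    ∃ U : Set X, IsOpen U ∧ L ⊆ U ∧ ∃ Θ : X → AddCircle (1 : ℝ), ContinuousOn Θ U ∧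
      (∀ y : L, Θ y = θ y) ∧ ∀ x ∉ N, Θ x = 0 := by
  classical
  let e : AddCircle (1 : ℝ) ≃ₜ Real.Angle :=
    AddCircle.homeomorphAddCircle 1 (2 * Real.pi) one_ne_zero (by positivity)
  have he0 : e 0 = 0 := by
    have : e ((0 : ℝ) : AddCircle (1 : ℝ)) = ((0 * (1⁻¹ * (2 * Real.pi)) : ℝ) : Real.Angle) := rfl
    rw [zero_mul] at this
    exact this
  let w : X → ℂ := fun x => if hx : x ∈ L then ((e (θ ⟨x, hx⟩)).toCircle : ℂ) else 1
  have hw : ContinuousOn w (L ∪ Nᶜ) := by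
    refine ContinuousOn.union_of_isClosed ?_ ?_ hL hN.isClosed_compl
    · rw [continuousOn_iff_continuous_domRestrict]
      have : L.domRestrict w = fun y => ((e (θ y)).toCircle : ℂ) := by
        ext y; exact dif_pos y.2
      rw [this]
      have hcos : Continuous fun y => (e (θ y)).cos :=
        Real.Angle.continuous_cos.comp (e.continuous.comp hθ)
      have hsin : Continuous fun y => (e (θ y)).sin :=
        Real.Angle.continuous_sin.comp (e.continuous.comp hθ)
      simp only [Real.Angle.coe_toCircle]
      fun_prop
    · refine continuousOn_const.congr (f := fun _ => (1 : ℂ)) fun x hx => ?_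
      by_cases hxL : x ∈ L
      · have : w x = ((e (θ ⟨x, hxL⟩)).toCircle : ℂ) := dif_pos hxL
        rw [this, hθN ⟨x, hxL⟩ hx, he0]
        simp
      · exact dif_neg hxL
  obtain ⟨h, hh⟩ := ContinuousMap.exists_restrict_eq (hL.union hN.isClosed_compl)
    (⟨_, continuousOn_iff_continuous_domRestrict.1 hw⟩ : C(↥(L ∪ Nᶜ), ℂ))
  have hhw : ∀ x ∈ L ∪ Nᶜ, h x = w x := fun x hx => DFunLike.congr_fun hh ⟨x, hx⟩
  have hhL : ∀ y : L, h y = ((e (θ y)).toCircle : ℂ) := fun y => by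
    rw [hhw y (.inl y.2)]; exact dif_pos y.2
  refine ⟨{x | h x ≠ 0}, isOpen_ne_fun h.continuous continuous_const, fun x hx => ?_,
    fun x => e.symm (Complex.arg (h x) : Real.Angle), ?_, fun y => ?_, fun x hx => ?_⟩
  · change h x ≠ 0
    rw [hhL ⟨x, hx⟩]
    exact Circle.coe_ne_zero _
  · refine e.symm.continuous.comp_continuousOn fun x hx => ?_
    exact ((Complex.continuousAt_arg_coe_angle hx).comp h.continuous.continuousAt).continuousWithinAt
  · change e.symm (Complex.arg (h y) : Real.Angle) = θ y
    rw [hhL y, Real.Angle.arg_toCircle, e.symm_apply_apply]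
  · have h1 : h x = 1 := by
      rw [hhw x (.inr hx)]
      by_cases hxL : x ∈ L
      · have : w x = ((e (θ ⟨x, hxL⟩)).toCircle : ℂ) := dif_pos hxL
        rw [this, hθN ⟨x, hxL⟩ hx, he0]
        simp
      · exact dif_neg hxL
    change e.symm (Complex.arg (h x) : Real.Angle) = 0
    rw [h1, Complex.arg_one, Real.Angle.coe_zero, ← he0, e.symm_apply_apply]

theorem exists_interpolation (n : ℕ) (r : ℕ → ℝ) :
    ∃ β : ℝ → ℝ, Continuous β ∧ ∀ k < n, β k = r k := by
  have hc : Continuous fun k : Fin n => (k : ℝ) := continuous_of_discreteTopology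
  have hi : Function.Injective fun k : Fin n => (k : ℝ) := fun k l h => Fin.ext (Nat.cast_injective h)
  obtain ⟨β, hβ⟩ := ContinuousMap.exists_extension (hc.isClosedEmbedding hi)
    (⟨fun k => r k, continuous_of_discreteTopology⟩ : C(Fin n, ℝ))
  exact ⟨β, β.continuous, fun k hk => DFunLike.congr_fun hβ (⟨k, hk⟩ : Fin n)⟩

/-- A continuous map of the line which rounds to the nearest integer near `0, …, n - 1`. -/
theorem exists_rounding (n : ℕ) :
    ∃ σ : ℝ → ℝ, Continuous σ ∧ ∀ k < n, ∀ s : ℝ, |s - (k : ℕ)| < 1 / 3 → σ s = (k : ℕ) := by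
  let b : ℝ → ℝ := fun s => max 0 (min 1 (2 - 3 * |s|))
  have hb : Continuous b := by fun_prop
  refine ⟨fun s => ∑ k ∈ Finset.range n, (k : ℝ) * b (s - k), by fun_prop, fun k hk s hs => ?_⟩
  have h1 : b (s - k) = 1 := by
    simp only [b]
    rw [min_eq_left (by linarith), max_eq_right zero_le_one]
  change ∑ k ∈ Finset.range n, (k : ℝ) * b (s - k) = k
  rw [Finset.sum_eq_single k, h1, mul_one]
  · intro j _ hjk
    have h2 : 1 ≤ |(j : ℝ) - k| := by
      have : 1 ≤ |(j : ℤ) - k| := Int.one_le_abs (by omega)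
      exact_mod_cast this
    have h3 : |(j : ℝ) - k| ≤ |s - j| + |s - k| := by
      have := abs_sub (s - k) (s - j)
      rw [show s - k - (s - j) = (j : ℝ) - k by ring] at this
      linarith
    have h4 : b (s - j) = 0 := by
      simp only [b]
      exact max_eq_left ((min_le_right _ _).trans (by linarith))
    rw [h4, mul_zero]
  · intro h
    exact absurd (Finset.mem_range.2 hk) h

/-- A continuous function taking the value `k` on the `k`-th of finitely many disjoint closed sets.
-/
theorem exists_label [NormalSpace X] {n : ℕ} {C : ℕ → Set X} (hC : ∀ k, IsClosed (C k))
    (hd : ∀ k < n, ∀ l < n, k ≠ l → Disjoint (C k) (C l)) :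
    ∃ κ : X → ℝ, Continuous κ ∧ ∀ k < n, ∀ x ∈ C k, κ x = k := by
  have : ∀ k, ∃ χ : C(X, ℝ), k < n → (∀ x ∈ C k, χ x = 1) ∧
      ∀ l < n, l ≠ k → ∀ x ∈ C l, χ x = 0 := by
    intro k
    by_cases hk : k < n
    · have hcl : IsClosed (⋃ l ∈ {l | l < n ∧ l ≠ k}, C l) :=
        ((finite_lt_nat n).subset fun l hl => hl.1).isClosed_biUnion fun l _ => hC l
      have hdis : Disjoint (⋃ l ∈ {l | l < n ∧ l ≠ k}, C l) (C k) := by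
        simp only [disjoint_iUnion_left]
        exact fun l hl => hd l hl.1 k hk hl.2
      obtain ⟨χ, h0, h1, -⟩ := exists_continuous_zero_one_of_isClosed hcl (hC k) hdis
      exact ⟨χ, fun _ => ⟨fun x hx => h1 hx, fun l hl hlk x hx => h0 (mem_biUnion ⟨hl, hlk⟩ hx)⟩⟩
    · exact ⟨0, fun h => absurd h hk⟩
  choose χ hχ using this
  refine ⟨fun x => ∑ k ∈ Finset.range n, (k : ℝ) * χ k x, by fun_prop, fun k hk x hx => ?_⟩
  change ∑ k ∈ Finset.range n, (k : ℝ) * χ k x = k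
  rw [Finset.sum_eq_single k, (hχ k hk).1 x hx, mul_one]
  · intro j hj hjk
    rw [(hχ j (Finset.mem_range.1 hj)).2 k hk hjk.symm x hx, mul_zero]
  · intro h
    exact absurd (Finset.mem_range.2 hk) h

/-- The space `ℝ × {0} ∪ {0, …, n - 1} × S¹`, a line carrying `n` circles, maps to `X` by a curve on
the line and by prescribed loops on the circles. -/
theorem exists_map_line_with_circles {n : ℕ} {γ : ℝ → X} (hγ : Continuous γ)
    {q : ℕ → AddCircle (1 : ℝ) → X} (hq : ∀ k, Continuous (q k)) (hγq : ∀ k < n, γ k = q k 0) :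
    ∃ G : ℝ × AddCircle (1 : ℝ) → X,
      ContinuousOn G {z | z.2 = 0 ∨ ∃ k < n, z.1 = ((k : ℕ) : ℝ)} ∧
      ∀ k < n, ∀ a, G (((k : ℕ) : ℝ), a) = q k a := by
  classical
  let G : ℝ × AddCircle (1 : ℝ) → X := fun z => if z.2 = 0 then γ z.1 else q ⌊z.1⌋₊ z.2
  have hGq : ∀ k < n, ∀ a, G (((k : ℕ) : ℝ), a) = q k a := by
    intro k hk a
    by_cases ha : a = 0
    · subst ha
      exact (if_pos rfl).trans (hγq k hk)
    · refine (if_neg ha).trans ?_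
      change q ⌊(k : ℝ)⌋₊ a = q k a
      rw [Nat.floor_natCast]
  refine ⟨G, ?_, hGq⟩
  have key : ∀ m ≤ n, IsClosed {z : ℝ × AddCircle (1 : ℝ) | z.2 = 0 ∨ ∃ k < m, z.1 = ((k : ℕ) : ℝ)} ∧
      ContinuousOn G {z | z.2 = 0 ∨ ∃ k < m, z.1 = ((k : ℕ) : ℝ)} := by
    intro m
    induction m with
    | zero =>
      intro _
      have : {z : ℝ × AddCircle (1 : ℝ) | z.2 = 0 ∨ ∃ k < 0, z.1 = ((k : ℕ) : ℝ)} = {z | z.2 = 0} := by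
        ext z; simp
      rw [this]
      refine ⟨isClosed_eq continuous_snd continuous_const, ?_⟩
      exact (hγ.comp continuous_fst).continuousOn.congr fun z hz => if_pos hz
    | succ m ih =>
      intro hm
      obtain ⟨h1, h2⟩ := ih (by omega)
      have : {z : ℝ × AddCircle (1 : ℝ) | z.2 = 0 ∨ ∃ k < m + 1, z.1 = ((k : ℕ) : ℝ)} =
          {z | z.2 = 0 ∨ ∃ k < m, z.1 = ((k : ℕ) : ℝ)} ∪ {z | z.1 = ((m : ℕ) : ℝ)} := by
        ext z
        simp only [mem_union, mem_ofPred_eq, Nat.lt_succ_iff_lt_or_eq, or_and_right, exists_or,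
          exists_eq_left, or_assoc]
      rw [this]
      have h3 : IsClosed {z : ℝ × AddCircle (1 : ℝ) | z.1 = ((m : ℕ) : ℝ)} :=
        isClosed_eq continuous_fst continuous_const
      refine ⟨h1.union h3, h2.union_of_isClosed ?_ h1 h3⟩
      refine ((hq m).comp continuous_snd).continuousOn.congr fun z hz => ?_
      obtain ⟨s, a⟩ := z
      have hs : s = ((m : ℕ) : ℝ) := hz
      subst hs
      exact hGq m (by omega) a
  exact (key n le_rfl).2

/-- Prescribed maps on finitely many disjoint circles in `L` extend to a continuous selfmap
of `X`. -/
theorem exists_map_of_circles {X : Type*} [MetricSpace X] [CompactSpace X] {L R : Set X} {τ : X → ℝ}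
    {φ : ℝ → X} (h : IsCoordinate L R τ φ) (hL : IsLocalDendrite L) {n : ℕ}
    {p q : ℕ → AddCircle (1 : ℝ) → X} (hp : ∀ k, Continuous (p k))
    (hpi : ∀ k, (p k).Injective) (hpL : ∀ k a, p k a ∈ L)
    (hd : ∀ k < n, ∀ l < n, k ≠ l → Disjoint (range (p k)) (range (p l)))
    (hq : ∀ k, Continuous (q k)) (hqL : ∀ k a, q k a ∈ L) :
    ∃ F : X → X, Continuous F ∧ ∀ k < n, ∀ a, F (p k a) = q k a := by
  classical
  have hLcl : IsClosed L := h.isClosed_left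
  have : CompactSpace L := isCompact_iff_compactSpace.1 hL.1
  have : ConnectedSpace L := isConnected_iff_connectedSpace.1 hL.2.1
  have : LocallyConnectedSpace L := hL.2.2.1
  have hLP : LocallyPathConnectedSpace L := locallyPathConnectedSpace_of_peano L
  obtain ⟨κ, hκ, hκp⟩ := exists_label (C := fun k => range (p k))
    (fun k => (isCompact_range (hp k)).isClosed) hd
  let N : ℕ → Set X := fun k => {x | |κ x - k| < 1 / 3}
  have hN : ∀ k, IsOpen (N k) := fun k =>
    isOpen_lt ((hκ.sub continuous_const).abs) continuous_const
  have hpN : ∀ k < n, ∀ a, p k a ∈ N k := fun k hk a => by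
    change |κ (p k a) - k| < 1 / 3
    rw [hκp k hk _ ⟨a, rfl⟩, sub_self, abs_zero]
    norm_num
  have hpN' : ∀ k < n, ∀ l, l ≠ k → ∀ a, p k a ∉ N l := fun k hk l hlk a hmem => by
    have h1 : |κ (p k a) - l| < 1 / 3 := hmem
    rw [hκp k hk _ ⟨a, rfl⟩] at h1
    have : 1 ≤ |(k : ℤ) - l| := Int.one_le_abs (by omega)
    have h2 : (1 : ℝ) ≤ |(k : ℝ) - l| := by exact_mod_cast this
    linarith
  have hang : ∀ k, ∃ θ : L → AddCircle (1 : ℝ), Continuous θ ∧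
      (k < n → ∀ a, θ ⟨p k a, hpL k a⟩ = a) ∧ ∀ y : L, (y : X) ∉ N k → θ y = 0 := by
    intro k
    by_cases hk : k < n
    · have hcont : Continuous fun a => (⟨p k a, hpL k a⟩ : L) := (hp k).subtype_mk _
      have hinj : Function.Injective fun a => (⟨p k a, hpL k a⟩ : L) := fun a b hab =>
        hpi k (congrArg Subtype.val hab)
      obtain ⟨θ, h1, h2, h3⟩ := exists_angle hL.finite_circles hcont hinj
        ((hN k).preimage continuous_subtype_val) (by rintro _ ⟨a, rfl⟩; exact hpN k hk a)
      exact ⟨θ, h1, fun _ => h2, h3⟩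
    · exact ⟨fun _ => 0, continuous_const, fun h => absurd h hk, fun _ _ => rfl⟩
  choose θ hθ hθp hθN using hang
  -- the angles have disjoint supports, so their sum is an angle for all the circles at once
  obtain ⟨U, hU, hLU, Θ, hΘ, hΘL, hΘN⟩ := exists_extension_angle (L := L)
    (N := ⋃ k ∈ Iio n, N k) hLcl (isOpen_biUnion fun k _ => hN k)
    (θ := fun y => ∑ k ∈ Finset.range n, θ k y)
    (continuous_finsetSum _ fun k _ => hθ k) (fun y hy => Finset.sum_eq_zero fun k hk =>
      hθN k y fun hyk => hy (mem_biUnion (Finset.mem_range.1 hk) hyk))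
  obtain ⟨ρ, hρ, hρU, hρL⟩ := h.exists_retraction hU hLU
  obtain ⟨σ, hσ, hσn⟩ := exists_rounding n
  obtain ⟨γ, hγ, hγL⟩ := hahn_mazurkiewicz L
  have hr : ∀ k, ∃ t, γ t = ⟨q k 0, hqL k 0⟩ := fun k => by
    have := hγL ▸ mem_univ (⟨q k 0, hqL k 0⟩ : L)
    obtain ⟨t, -, ht⟩ := this
    exact ⟨t, ht⟩
  choose r hr using hr
  obtain ⟨β, hβ, hβr⟩ := exists_interpolation n r
  obtain ⟨G, hG, hGq⟩ := exists_map_line_with_circles (n := n) (γ := fun s => (γ (β s) : X))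
    (continuous_subtype_val.comp (hγ.comp hβ)) hq (fun k hk => by rw [hβr k hk, hr])
  refine ⟨fun x => G (σ (κ (ρ x)), Θ (ρ x)), ?_, fun k hk a => ?_⟩
  · have h1 : Continuous fun x => (σ (κ (ρ x)), Θ (ρ x)) :=
      (hσ.comp (hκ.comp hρ)).prodMk (hΘ.comp_continuous hρ hρU)
    refine hG.comp_continuous h1 fun x => ?_
    by_cases hx : ρ x ∈ ⋃ k ∈ Iio n, N k
    · simp only [mem_iUnion] at hx
      obtain ⟨k, hk, hx⟩ := hx
      exact .inr ⟨k, hk, hσn k hk _ hx⟩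
    · exact .inl (hΘN _ hx)
  · change G (σ (κ (ρ (p k a))), Θ (ρ (p k a))) = q k a
    have hΘp : Θ (p k a) = a := by
      have h1 : Θ (p k a) = ∑ l ∈ Finset.range n, θ l ⟨p k a, hpL k a⟩ := hΘL ⟨p k a, hpL k a⟩
      rw [h1, Finset.sum_eq_single k, hθp k hk]
      · exact fun l _ hlk => hθN l _ (hpN' k hk l hlk a)
      · exact fun h => absurd (Finset.mem_range.2 hk) h
    rw [hρL _ (hpL k a), hΘp, hσn k hk _ (hpN k hk a), hGq k hk]

theorem exists_dense_multiples (n : ℕ) (hn : 0 < n) :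
    ∃ α : AddCircle (1 : ℝ), DenseRange fun m : ℕ => (m * n) • α := by
  have hirr : Irrational (n * √2 / 1 : ℝ) := by
    rw [div_one]
    exact irrational_sqrt_two.natCast_mul hn.ne'
  have h1 := denseRange_zsmul_iff_nsmul.1 (AddCircle.denseRange_zsmul_coe_iff.2 hirr)
  refine ⟨((√2 : ℝ) : AddCircle (1 : ℝ)), ?_⟩
  convert h1 using 2 with m
  rw [mul_smul, ← AddCircle.coe_nsmul (n := n), nsmul_eq_mul]

/-- A union of finitely many disjoint circles in `L` is minimal for a map which permutes the circles
cyclically, composed with an irrational rotation. -/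
theorem circles_mem_MSpace {X : Type*} [MetricSpace X] [CompactSpace X] {L R : Set X} {τ : X → ℝ}
    {φ : ℝ → X} (h : IsCoordinate L R τ φ) (hL : IsLocalDendrite L) {M : Set X} (hML : M ⊆ L)
    (hM : FinUnionDisjCircles M) : M ∈ MSpace X := by
  obtain ⟨n, C, hn, hC, hd, rfl⟩ := hM
  have hpar : ∀ k : Fin n, ∃ p : AddCircle (1 : ℝ) → X, Continuous p ∧ p.Injective ∧ range p = C k :=
    fun k => isCircleSet_iff.1 (hC k)
  choose p₀ hp₀ hpi₀ hpr₀ using hpar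
  have hmod : ∀ k, k % n < n := fun k => Nat.mod_lt k hn
  let p : ℕ → AddCircle (1 : ℝ) → X := fun k => p₀ ⟨k % n, hmod k⟩
  have hpmod : ∀ k, p (k % n) = p k := fun k => by simp only [p, Nat.mod_mod]
  have hpC : ∀ k a, p k a ∈ C ⟨k % n, hmod k⟩ := fun k a => hpr₀ _ ▸ mem_range_self a
  have hpM : ∀ k a, p k a ∈ ⋃ i, C i := fun k a => mem_iUnion.2 ⟨_, hpC k a⟩
  have hMp : ∀ x ∈ ⋃ i, C i, ∃ k a, p k a = x := by
    intro x hx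
    obtain ⟨i, hi⟩ := mem_iUnion.1 hx
    rw [← hpr₀ i] at hi
    obtain ⟨a, rfl⟩ := hi
    refine ⟨i, a, ?_⟩
    have : (⟨(i : ℕ) % n, hmod i⟩ : Fin n) = i := Fin.ext (Nat.mod_eq_of_lt i.2)
    simp only [p, this]
  obtain ⟨α, hα⟩ := exists_dense_multiples n hn
  obtain ⟨F, hF, hFp⟩ := exists_map_of_circles h hL (n := n) (p := p)
    (q := fun k a => p (k + 1) (a + α)) (fun k => hp₀ _) (fun k => hpi₀ _)
    (fun k a => hML (hpM k a)) (fun k hk l hl hkl => by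
      have hne : (⟨k % n, hmod k⟩ : Fin n) ≠ ⟨l % n, hmod l⟩ := by
        intro heq
        have := congrArg Fin.val heq
        simp only [Nat.mod_eq_of_lt hk, Nat.mod_eq_of_lt hl] at this
        exact hkl this
      have := hd hne
      simp only [p, hpr₀]
      exact this)
    (fun k => (hp₀ _).comp (by fun_prop)) (fun k a => hML (hpM _ _))
  have hFp' : ∀ k a, F (p k a) = p (k + 1) (a + α) := by
    intro k a
    have h1 := hFp (k % n) (hmod k) a
    rw [hpmod] at h1
    rw [h1]
    simp only [p, Nat.mod_add_mod]
  have hit : ∀ m k a, F^[m] (p k a) = p (k + m) (a + m • α) := by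
    intro m
    induction m with
    | zero => intro k a; simp
    | succ m ih =>
      intro k a
      rw [Function.iterate_succ_apply, hFp', ih, add_assoc, add_assoc, add_comm 1 m, succ_nsmul']
  have hMc : IsCompact (⋃ i, C i) := isCompact_iUnion fun i => (hC i).isCompact
  have hne : (⋃ i, C i).Nonempty := ⟨_, hpM 0 0⟩
  have hmaps : MapsTo F (⋃ i, C i) (⋃ i, C i) := by
    intro x hx
    obtain ⟨k, a, rfl⟩ := hMp x hx
    rw [hFp']
    exact hpM _ _
  refine ⟨hMc, F, hF, minimalSystemOn_of_minimalMap hMc hne hF.continuousOn hmaps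
    (minimalMap_of_exists_iterate_mem ?_)⟩
  rintro U hU ⟨⟨y, hy⟩, hyU⟩ ⟨x, hx⟩
  obtain ⟨V, hV, rfl⟩ := isOpen_induced_iff.1 hU
  obtain ⟨l, b, rfl⟩ := hMp y hy
  obtain ⟨k, a, rfl⟩ := hMp x hx
  -- `m₀` steps lead from the `k`-th circle to the `l`-th one
  obtain ⟨m₀, hm₀⟩ : ∃ m₀, p (k + m₀) = p l := by
    refine ⟨l + k * (n - 1), ?_⟩
    have : k + (l + k * (n - 1)) = l + n * k := by
      obtain ⟨n, rfl⟩ : ∃ n', n = n' + 1 := ⟨n - 1, by omega⟩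
      simp only [Nat.add_sub_cancel]; ring
    simp only [this, p, Nat.add_mul_mod_self_left]
  have hO : IsOpen {c | p l (a + m₀ • α + c) ∈ V} :=
    hV.preimage ((hp₀ _).comp (by fun_prop))
  have hOne : {c | p l (a + m₀ • α + c) ∈ V}.Nonempty := by
    refine ⟨b - (a + m₀ • α), ?_⟩
    change p l (a + m₀ • α + (b - (a + m₀ • α))) ∈ V
    rw [add_sub_cancel]
    exact hyU
  obtain ⟨m, hm⟩ := hα.exists_mem_open hO hOne
  refine ⟨m₀ + m * n, ?_⟩
  change (((hmaps.restrict F _ _)^[m₀ + m * n] ⟨p k a, hx⟩ : ↥(⋃ i, C i)) : X) ∈ V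
  rw [MapsTo.iterate_restrict, MapsTo.val_restrict_apply, hit, add_smul, ← add_assoc, ← add_assoc]
  have : p (k + m₀ + m * n) = p l := by
    rw [← hm₀]
    simp only [p, Nat.add_mul_mod_self_right]
  rw [this]
  exact hm

end Circles

/-! ### Minimal sets of continua of the class `𝒞` -/

section Transport

variable {X Y : Type*} [TopologicalSpace X] [TopologicalSpace Y]

theorem MinimalSystemOn.comap {e : Y → X} (he : IsClosedEmbedding e) {f : X → X} {F : Y → Y}
    {M : Set X} (hMe : M ⊆ range e) (hF : ∀ y, e y ∈ M → e (F y) = f (e y))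
    (h : MinimalSystemOn f M) : MinimalSystemOn F (e ⁻¹' M) := by
  obtain ⟨⟨x, hx⟩, him, hmin⟩ := h
  refine ⟨?_, ?_, fun N hN hNe hNc hNF => ?_⟩
  · obtain ⟨y, rfl⟩ := hMe hx
    exact ⟨y, hx⟩
  · ext y
    constructor
    · rintro ⟨z, hz, rfl⟩
      change e (F z) ∈ M
      rw [hF z hz, ← him]
      exact mem_image_of_mem f hz
    · intro hy
      have hy' : e y ∈ f '' M := him.symm ▸ hy
      obtain ⟨w, hw, hwy⟩ := hy'
      obtain ⟨z, rfl⟩ := hMe hw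
      exact ⟨z, hw, he.injective ((hF z hw).trans hwy)⟩
  · have h1 : e '' N = M := by
      refine hmin _ ?_ (hNe.image e) (he.isClosedMap N hNc) ?_
      · rintro _ ⟨y, hy, rfl⟩
        exact hN hy
      · rintro _ ⟨_, ⟨y, hy, rfl⟩, rfl⟩
        exact ⟨F y, hNF ⟨y, hy, rfl⟩, hF y (hN hy)⟩
    rw [← h1, preimage_image_eq _ he.injective]

theorem IsCantoroid.image {e : Y → X} (he : IsEmbedding e) {M : Set Y} (hM : IsCantoroid M) :
    IsCantoroid (e '' M) := by
  obtain ⟨hne, hc, hiso, hd⟩ := hM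
  have hr := he.homeomorphImage M
  refine ⟨hne.image e, hc.image he.continuous, fun y hy => ?_, ?_⟩
  · refine hiso (hr.symm y) ?_
    have : {hr.symm y} = hr ⁻¹' {y} := by
      ext z
      simp only [mem_singleton_iff, mem_preimage]
      exact ⟨fun h => by rw [h, hr.apply_symm_apply], fun h => by rw [← h, hr.symm_apply_apply]⟩
    rw [this]
    exact hy.preimage hr.continuous
  · refine (hr.surjective.denseRange.dense_image hr.continuous hd).mono ?_
    rintro _ ⟨x, hx, rfl⟩
    have hx' : connectedComponent x = {x} := hx
    refine Subset.antisymm (fun z hz => ?_) (singleton_subset_iff.2 mem_connectedComponent)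
    have h1 := hr.symm.continuous.image_connectedComponent_subset (hr x) (mem_image_of_mem _ hz)
    rw [hr.symm_apply_apply, hx'] at h1
    have h2 : hr.symm z = x := h1
    change z = hr x
    rw [← h2, hr.apply_symm_apply]

theorem FinUnionDisjCircles.image {e : Y → X} [T2Space X] [T2Space Y] (he : Continuous e)
    (hi : e.Injective) {M : Set Y} (hM : FinUnionDisjCircles M) : FinUnionDisjCircles (e '' M) := by
  obtain ⟨n, C, hn, hC, hd, rfl⟩ := hM
  exact ⟨n, fun i => e '' C i, hn, fun i => isCircleSet_image he hi (hC i),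
    fun i j hij => (disjoint_image_iff hi).2 (hd hij), image_iUnion⟩

/-- The trichotomy for a minimal set carried by an embedded copy of a locally path connected
compact space. -/
theorem minimal_trichotomy_of_embedding {Y X : Type*} [MetricSpace Y] [CompactSpace Y]
    [LocallyPathConnectedSpace Y] [TopologicalSpace X] [T2Space X]
    (hfin : {C : Set Y | IsCircleSet C}.Finite) {e : Y → X}
    (he : Continuous e) (hi : e.Injective) {f : X → X} {F : Y → Y} (hF : Continuous F) {M : Set X}
    (hM : IsCompact M) (hMe : M ⊆ range e) (hFe : ∀ y, e y ∈ M → e (F y) = f (e y))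
    (h : MinimalSystemOn f M) :
    M.Finite ∨ IsCantoroid M ∨ FinUnionDisjCircles M := by
  have hcl := he.isClosedEmbedding hi
  have hM' : IsCompact (e ⁻¹' M) := (hM.isClosed.preimage he).isCompact
  have him : e '' (e ⁻¹' M) = M := image_preimage_eq_of_subset hMe
  rcases minimal_trichotomy hfin hF hM' (h.comap hcl hMe hFe) with h1 | h1 | h1
  · exact .inl (him ▸ h1.image e)
  · exact .inr (.inl (him ▸ h1.image hcl.isEmbedding))
  · exact .inr (.inr (him ▸ h1.image he hi))

end Transport

section Interval

theorem not_injective_of_continuous_addCircle {p : AddCircle (1 : ℝ) → ℝ} (hp : Continuous p) :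
    ¬ p.Injective := by
  intro hi
  let d : ℝ → ℝ := fun t => p ((t + 1 / 2 : ℝ) : AddCircle (1 : ℝ)) - p (t : AddCircle (1 : ℝ))
  have hP : Continuous fun t : ℝ => p t := hp.comp (AddCircle.continuous_mk' 1)
  have hd : Continuous d := (hP.comp (by fun_prop : Continuous fun t : ℝ => t + 1 / 2)).sub hP
  -- the difference of the values at antipodal points changes sign over half a turn
  have h1 : d (1 / 2) = - d 0 := by
    have : ((1 / 2 + 1 / 2 : ℝ) : AddCircle (1 : ℝ)) = ((0 : ℝ) : AddCircle (1 : ℝ)) := by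
      rw [add_halves, AddCircle.coe_period]; rfl
    simp only [d, this, zero_add, neg_sub]
  have hz : ∃ t, d t = 0 := by
    rcases le_total 0 (d 0) with h0 | h0
    · exact mem_range_of_exists_le_of_exists_ge hd ⟨1 / 2, by linarith⟩ ⟨0, h0⟩
    · exact mem_range_of_exists_le_of_exists_ge hd ⟨0, h0⟩ ⟨1 / 2, by linarith⟩
  obtain ⟨t, ht⟩ := hz
  have h2 := injOn_coe_addCircle (a := t) (b := t + 1 / 2) (by linarith)
    ⟨by linarith, le_rfl⟩ ⟨le_rfl, by linarith⟩ (hi (sub_eq_zero.1 ht))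
  linarith

theorem not_isCircleSet_of_injOn {X : Type*} [TopologicalSpace X] [T2Space X] {C : Set X}
    {τ : X → ℝ} (hτ : Continuous τ) (hi : InjOn τ C) : ¬ IsCircleSet C := by
  intro hC
  obtain ⟨p, hp, hpi, rfl⟩ := isCircleSet_iff.1 hC
  exact not_injective_of_continuous_addCircle (hτ.comp hp)
    fun a b hab => hpi (hi ⟨a, rfl⟩ ⟨b, rfl⟩ hab)

/-- A cantoroid on which a real function is injective is a Cantor set, as a nondegenerate component
would contain an interval. -/
theorem IsCantoroid.isCantorSet_of_injOn {X : Type*} [TopologicalSpace X] {M : Set X} {τ : X → ℝ}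
    (hτ : Continuous τ) (hi : InjOn τ M) (hM : IsCantoroid M) : IsCantorSet M := by
  obtain ⟨hne, hc, hiso, hd⟩ := hM
  refine ⟨hne, hc, ?_, hiso⟩
  have key : ∀ S ⊆ M, IsPreconnected S → ∀ x ∈ S, ∀ y ∈ S, ¬ τ x < τ y := by
    intro S hSM hS x hx y hy hxy
    have hI : Icc (τ x) (τ y) ⊆ τ '' S := (hS.image τ hτ.continuousOn).ordConnected.out
      (mem_image_of_mem τ hx) (mem_image_of_mem τ hy)
    have hO : IsOpen {z : M | τ z ∈ Ioo (τ x) (τ y)} :=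
      isOpen_Ioo.preimage (hτ.comp continuous_subtype_val)
    have hOne : {z : M | τ z ∈ Ioo (τ x) (τ y)}.Nonempty := by
      obtain ⟨m, hm⟩ := exists_between hxy
      obtain ⟨z, hz, hzm⟩ := hI ⟨hm.1.le, hm.2.le⟩
      exact ⟨⟨z, hSM hz⟩, by change τ z ∈ Ioo (τ x) (τ y); rw [hzm]; exact hm⟩
    obtain ⟨z, hzO, hz⟩ := hd.exists_mem_open hO hOne
    have hzO' : τ z ∈ Ioo (τ x) (τ y) := hz
    obtain ⟨s, hs, hsz⟩ := hI ⟨hzO'.1.le, hzO'.2.le⟩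
    have hsz' : s = z := hi (hSM hs) z.2 hsz
    have hpre : IsPreconnected ((↑) ⁻¹' S : Set M) :=
      IsInducing.subtypeVal.isPreconnected_image.1 (by
        rwa [image_preimage_eq_of_subset (by rw [Subtype.range_coe]; exact hSM)])
    have h1 := hpre.subset_connectedComponent (x := z) (by change (z : X) ∈ S; exact hsz' ▸ hs)
      (show (⟨x, hSM hx⟩ : M) ∈ _ from hx)
    have hzO'' : connectedComponent z = {z} := hzO
    rw [hzO''] at h1
    have h2 : x = z := congrArg Subtype.val h1
    rw [← h2] at hzO'
    exact lt_irrefl _ hzO'.1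
  intro S hSM hS x hx y hy
  exact hi (hSM hx) (hSM hy) (le_antisymm (not_lt.1 (key S hSM hS y hy x hx))
    (not_lt.1 (key S hSM hS x hx y hy)))

end Interval

section ClassC

variable {X : Type*} [TopologicalSpace X] {L R : Set X} {τ : X → ℝ} {φ : ℝ → X}

theorem IsCoordinate.cases (h : IsCoordinate L R τ φ) (x : X) :
    x ∈ L ∨ x ∈ R ∨ τ x ∈ Ioo (0 : ℝ) 1 := by
  rcases (h.range x).1.eq_or_lt with h0 | h0
  · exact .inl ((h.left x).2 h0.symm)
  · rcases (h.range x).2.eq_or_lt with h1 | h1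
    · exact .inr (.inl ((h.right x).2 h1))
    · exact .inr (.inr ⟨h0, h1⟩)

theorem IsCoordinate.disjoint (h : IsCoordinate L R τ φ) : Disjoint L R :=
  disjoint_left.2 fun x hL hR => by
    have := (h.left x).1 hL
    rw [(h.right x).1 hR] at this
    exact one_ne_zero this

theorem IsCoordinate.not_mem_left (h : IsCoordinate L R τ φ) {x : X} (hx : τ x ∈ Ioo (0 : ℝ) 1) :
    x ∉ L := fun hL => hx.1.ne' ((h.left x).1 hL)

theorem IsCoordinate.not_mem_right (h : IsCoordinate L R τ φ) {x : X} (hx : τ x ∈ Ioo (0 : ℝ) 1) :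
    x ∉ R := fun hR => hx.2.ne ((h.right x).1 hR)

theorem IsCoordinate.mapsTo_left [T3Space X] (h : IsCoordinate L R τ φ) (hL : L.Nontrivial)
    (hR : R.Nontrivial) {P : Set X} (hP : IsPreconnected P) (hPl : LocallyConnectedSpace P)
    {f : X → X} (hf : Continuous f) {x : X} (hx : x ∈ P) (hfx : f x ∈ L) : MapsTo f P L := by
  have : PreconnectedSpace P := isPreconnected_iff_preconnectedSpace.1 hP
  rcases h.range_subset hL hR (hf.comp (continuous_subtype_val (p := (· ∈ P)))) with h1 | h1 | h1
  · exact fun y hy => h1 ⟨y, hy⟩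
  · exact absurd (h1 ⟨x, hx⟩) (disjoint_left.1 h.disjoint hfx)
  · exact absurd hfx (h.not_mem_left (h1 ⟨x, hx⟩))

/-- If the free interval is mapped into `L`, so is its closure `X`. -/
theorem IsCoordinate.forall_mem_left (h : IsCoordinate L R τ φ) {f : X → X} (hf : Continuous f)
    (hfφ : ∀ t ∈ Ioo (0 : ℝ) 1, f (φ t) ∈ L) (x : X) : f x ∈ L := by
  have hcl : IsClosed (f ⁻¹' L) := h.isClosed_left.preimage hf
  rcases h.cases x with hx | hx | hx
  · refine closure_minimal ?_ hcl (h.left_acc (1 / 2) (by norm_num) hx)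
    rintro _ ⟨t, ht, rfl⟩
    exact hfφ t ⟨ht.1, ht.2.trans (by norm_num)⟩
  · refine closure_minimal ?_ hcl (h.right_acc (1 / 2) (by norm_num) hx)
    rintro _ ⟨t, ht, rfl⟩
    exact hfφ t ⟨lt_trans (by norm_num) ht.1, ht.2⟩
  · have := hfφ _ hx
    rwa [h.apply_coord x hx] at this

theorem IsCoordinate.interval_cases [T3Space X] (h : IsCoordinate L R τ φ) (hL : L.Nontrivial)
    (hR : R.Nontrivial) {f : X → X} (hf : Continuous f) :
    (∀ x, f x ∈ L) ∨ (∀ x, f x ∈ R) ∨ ∀ x, τ x ∈ Ioo (0 : ℝ) 1 → τ (f x) ∈ Ioo (0 : ℝ) 1 := by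
  have : LocallyPathConnectedSpace (Ioo (0 : ℝ) 1) := isOpen_Ioo.locallyPathConnectedSpace
  have : PreconnectedSpace (Ioo (0 : ℝ) 1) :=
    isPreconnected_iff_preconnectedSpace.1 isPreconnected_Ioo
  have hc : Continuous fun t : Ioo (0 : ℝ) 1 => f (φ t) :=
    hf.comp (continuousOn_iff_continuous_domRestrict.1 h.contOn)
  rcases h.range_subset hL hR hc with h1 | h1 | h1
  · exact .inl (h.forall_mem_left hf fun t ht => h1 ⟨t, ht⟩)
  · refine .inr (.inl (h.symm.forall_mem_left hf fun t ht => h1 ⟨1 - t, ?_, ?_⟩))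
    · linarith [ht.2]
    · linarith [ht.1]
  · refine .inr (.inr fun x hx => ?_)
    have := h1 ⟨_, hx⟩
    rwa [h.apply_coord x hx] at this

/-- A compact subset of the free interval lies in `φ([a, b])` for some `0 < a ≤ b < 1`. -/
theorem IsCoordinate.exists_Icc (h : IsCoordinate L R τ φ) {M : Set X} (hM : IsCompact M)
    (hne : M.Nonempty) (hMJ : ∀ x ∈ M, τ x ∈ Ioo (0 : ℝ) 1) :
    ∃ a b : ℝ, 0 < a ∧ a ≤ b ∧ b < 1 ∧ ∀ x ∈ M, τ x ∈ Icc a b := by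
  obtain ⟨x, hx, hmin⟩ := hM.exists_isMinOn hne h.cont.continuousOn
  obtain ⟨y, hy, hmax⟩ := hM.exists_isMaxOn hne h.cont.continuousOn
  exact ⟨τ x, τ y, (hMJ x hx).1, hmin hy, (hMJ y hy).2, fun z hz => ⟨hmin hz, hmax hz⟩⟩

theorem IsCoordinate.injOn (h : IsCoordinate L R τ φ) {M : Set X}
    (hMJ : ∀ x ∈ M, τ x ∈ Ioo (0 : ℝ) 1) : InjOn τ M := fun x hx y hy hxy => by
  rw [← h.apply_coord x (hMJ x hx), ← h.apply_coord y (hMJ y hy), hxy]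

variable [T3Space X]

/-- A minimal set `M` lies in the free interval or in `L ∪ R`. Unless `X` is mapped into one of the
ends, the interval is invariant; a point of `M` in `L ∪ R` then has a preimage in `L ∪ R`, so that
one of `L`, `R`, `L ∪ R` is invariant and, by minimality, contains `M`. -/
theorem IsCoordinate.minimal_subset (h : IsCoordinate L R τ φ) (hL : L.Nontrivial)
    (hR : R.Nontrivial) (hLd : IsLocalDendrite L) (hRd : IsLocalDendrite R) {f : X → X}
    (hf : Continuous f) {M : Set X} (hM : IsClosed M) (hm : MinimalSystemOn f M) :
    (∀ x ∈ M, τ x ∈ Ioo (0 : ℝ) 1) ∨ M ⊆ L ∪ R := by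
  obtain ⟨hne, him, hmin⟩ := hm
  by_cases hJ : ∃ x ∈ M, τ x ∈ Ioo (0 : ℝ) 1
  swap
  · right
    intro x hx
    rcases h.cases x with h1 | h1 | h1
    exacts [.inl h1, .inr h1, absurd ⟨x, hx, h1⟩ hJ]
  obtain ⟨z, hzM, hz⟩ := hJ
  rcases h.interval_cases hL hR hf with hfJ | hfJ | hfJ
  · right
    rw [← him]
    rintro _ ⟨x, -, rfl⟩
    exact .inl (hfJ x)
  · right
    rw [← him]
    rintro _ ⟨x, -, rfl⟩
    exact .inr (hfJ x)
  left
  have hinv : ∀ A : Set X, IsClosed A → MapsTo f A A → (M ∩ A).Nonempty → M ⊆ A := by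
    intro A hA hfA hAne
    have := hmin (M ∩ A) inter_subset_left hAne (hM.inter hA) (by
      rintro _ ⟨x, ⟨hxM, hxA⟩, rfl⟩
      exact ⟨him ▸ mem_image_of_mem f hxM, hfA hxA⟩)
    exact this ▸ inter_subset_right
  have hLcl := h.isClosed_left
  have hRcl := h.symm.isClosed_left
  have hA : MapsTo f L L → ∀ x ∈ M, x ∉ L := fun h1 x hx hxL =>
    h.not_mem_left hz (hinv L hLcl h1 ⟨x, hx, hxL⟩ hzM)
  have hB : MapsTo f R R → ∀ x ∈ M, x ∉ R := fun h1 x hx hxR =>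
    h.not_mem_right hz (hinv R hRcl h1 ⟨x, hx, hxR⟩ hzM)
  have hAB : MapsTo f L R → MapsTo f R L → ∀ x ∈ M, x ∉ L ∪ R := by
    intro h1 h2 x hx hxU
    have h3 : MapsTo f (L ∪ R) (L ∪ R) := by
      rintro y (hy | hy)
      exacts [.inr (h1 hy), .inl (h2 hy)]
    rcases hinv _ (hLcl.union hRcl) h3 ⟨x, hx, hxU⟩ hzM with h4 | h4
    exacts [h.not_mem_left hz h4, h.not_mem_right hz h4]
  have hDL : ∀ x ∈ M, x ∈ L → MapsTo f R L ∧ ∃ y ∈ M, y ∈ R := by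
    intro x hx hxL
    obtain ⟨y, hy, rfl⟩ := (him.symm ▸ hx : x ∈ f '' M)
    rcases h.cases y with hy1 | hy1 | hy1
    · exact absurd hxL (hA (h.mapsTo_left hL hR hLd.2.1.isPreconnected hLd.2.2.1 hf hy1 hxL) _ hx)
    · exact ⟨h.mapsTo_left hL hR hRd.2.1.isPreconnected hRd.2.2.1 hf hy1 hxL, y, hy, hy1⟩
    · exact absurd hxL (h.not_mem_left (hfJ y hy1))
  have hDR : ∀ x ∈ M, x ∈ R → MapsTo f L R ∧ ∃ y ∈ M, y ∈ L := by
    intro x hx hxR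
    obtain ⟨y, hy, rfl⟩ := (him.symm ▸ hx : x ∈ f '' M)
    rcases h.cases y with hy1 | hy1 | hy1
    · exact ⟨h.symm.mapsTo_left hR hL hLd.2.1.isPreconnected hLd.2.2.1 hf hy1 hxR, y, hy, hy1⟩
    · exact absurd hxR
        (hB (h.symm.mapsTo_left hR hL hRd.2.1.isPreconnected hRd.2.2.1 hf hy1 hxR) _ hx)
    · exact absurd hxR (h.not_mem_right (hfJ y hy1))
  intro x hx
  rcases h.cases x with h1 | h1 | h1
  · obtain ⟨h2, y, hy, hyR⟩ := hDL x hx h1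
    exact absurd (.inl h1) (hAB (hDR y hy hyR).1 h2 x hx)
  · obtain ⟨h2, y, hy, hyL⟩ := hDR x hx h1
    exact absurd (.inr h1) (hAB h2 (hDL y hy hyL).1 x hx)
  · exact h1

theorem IsCoordinate.minimal_in_interval (h : IsCoordinate L R τ φ) {f : X → X}
    (hf : Continuous f) {M : Set X} (hM : IsCompact M) (hm : MinimalSystemOn f M)
    (hMJ : ∀ x ∈ M, τ x ∈ Ioo (0 : ℝ) 1) : M.Finite ∨ IsCantorSet M := by
  obtain ⟨a, b, ha, hab, hb, hMab⟩ := h.exists_Icc hM hm.1 hMJ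
  have hsub : Icc a b ⊆ Ioo 0 1 := Icc_subset_Ioo ha hb
  have hLP : LocallyPathConnectedSpace (Icc a b) :=
    (isQuotientMap_projIcc (h := hab)).locallyPathConnectedSpace
  have hfin : {C : Set (Icc a b) | IsCircleSet C}.Finite := by
    refine finite_empty.subset fun C hC => ?_
    exact not_isCircleSet_of_injOn continuous_subtype_val Subtype.val_injective.injOn hC
  have he : Continuous fun t : Icc a b => φ t :=
    continuousOn_iff_continuous_domRestrict.1 (h.contOn.mono hsub)
  have hei : Function.Injective fun t : Icc a b => φ t := by
    intro s t hst
    have : τ (φ s) = τ (φ t) := congrArg τ hst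
    rw [h.coord_apply _ (hsub s.2), h.coord_apply _ (hsub t.2)] at this
    exact Subtype.ext this
  have hmaps : ∀ x ∈ M, f x ∈ M := fun x hx => hm.2.1 ▸ mem_image_of_mem f hx
  have := minimal_trichotomy_of_embedding hfin he hei (f := f)
    (F := fun t => projIcc a b hab (τ (f (φ t))))
    (continuous_projIcc.comp (h.cont.comp (hf.comp he))) hM
    (fun x hx => ⟨⟨τ x, hMab x hx⟩, h.apply_coord x (hMJ x hx)⟩) (fun t ht => ?_) hm
  · rcases this with h1 | h1 | ⟨n, C, hn, hC, -, rfl⟩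
    · exact .inl h1
    · exact .inr (h1.isCantorSet_of_injOn h.cont (h.injOn hMJ))
    · exact absurd (hC ⟨0, hn⟩)
        (not_isCircleSet_of_injOn h.cont ((h.injOn hMJ).mono (subset_iUnion C _)))
  · have h1 := hmaps _ ht
    change φ (projIcc a b hab (τ (f (φ t)))) = f (φ t)
    rw [projIcc_of_mem hab (hMab _ h1)]
    exact h.apply_coord _ (hMJ _ h1)

end ClassC

section LocalDendrites

variable {X : Type*} [MetricSpace X] {L R : Set X}

theorem IsLocalDendrite.locallyPathConnectedSpace (hL : IsLocalDendrite L) :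
    LocallyPathConnectedSpace L := by
  have : CompactSpace L := isCompact_iff_compactSpace.1 hL.1
  have : ConnectedSpace L := isConnected_iff_connectedSpace.1 hL.2.1
  have : LocallyConnectedSpace L := hL.2.2.1
  exact locallyPathConnectedSpace_of_peano L

theorem minimal_in_left (hL : IsLocalDendrite L) {f : X → X} (hf : Continuous f)
    (hfL : MapsTo f L L) {M : Set X} (hM : IsCompact M) (hML : M ⊆ L) (hm : MinimalSystemOn f M) :
    M.Finite ∨ IsCantoroid M ∨ FinUnionDisjCircles M := by
  have : CompactSpace L := isCompact_iff_compactSpace.1 hL.1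
  have := hL.locallyPathConnectedSpace
  exact minimal_trichotomy_of_embedding hL.finite_circles continuous_subtype_val
    Subtype.val_injective (F := hfL.restrict f L L) (hf.continuousOn.mapsToRestrict hfL) hM
    (by rwa [Subtype.range_coe]) (fun _ _ => rfl) hm

theorem minimal_in_union (hL : IsLocalDendrite L) (hR : IsLocalDendrite R) (hLR : Disjoint L R)
    {f : X → X} (hf : Continuous f) (hfL : MapsTo f L R) (hfR : MapsTo f R L) {M : Set X}
    (hM : IsCompact M) (hMU : M ⊆ L ∪ R) (hm : MinimalSystemOn f M) :
    M.Finite ∨ IsCantoroid M ∨ FinUnionDisjCircles M := by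
  have : CompactSpace L := isCompact_iff_compactSpace.1 hL.1
  have : CompactSpace R := isCompact_iff_compactSpace.1 hR.1
  have := hL.locallyPathConnectedSpace
  have := hR.locallyPathConnectedSpace
  let e : L ⊕ R → X := Sum.elim (↑) (↑)
  have he : Continuous e := continuous_subtype_val.sumElim continuous_subtype_val
  have hi : e.Injective := Subtype.val_injective.sumElim Subtype.val_injective
    fun x y hxy => disjoint_left.1 hLR x.2 (hxy ▸ y.2)
  have : TopologicalSpace.MetrizableSpace (L ⊕ R) :=
    (he.isClosedEmbedding hi).isEmbedding.metrizableSpace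
  let _ := TopologicalSpace.metrizableSpaceMetric (L ⊕ R)
  have hfin : {C : Set (L ⊕ R) | IsCircleSet C}.Finite := by
    refine Set.Finite.of_injOn (f := fun C => e '' C)
      (t := {C : Set X | C ⊆ L ∧ IsCircleSet C} ∪ {C : Set X | C ⊆ R ∧ IsCircleSet C})
      (fun C hC => ?_) (image_injective.2 hi).injOn (hL.2.2.2.union hR.2.2.2)
    have hC' : IsCircleSet C := hC
    have himg := isCircleSet_image he hi hC'
    rcases Sum.isConnected_iff.1 hC'.isConnected with ⟨t, -, rfl⟩ | ⟨t, -, rfl⟩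
    · refine .inl ⟨?_, himg⟩
      rintro _ ⟨_, ⟨x, -, rfl⟩, rfl⟩
      exact x.2
    · refine .inr ⟨?_, himg⟩
      rintro _ ⟨_, ⟨x, -, rfl⟩, rfl⟩
      exact x.2
  refine minimal_trichotomy_of_embedding hfin he hi (f := f)
    (F := Sum.elim (fun x => .inr (hfL.restrict f L R x)) (fun x => .inl (hfR.restrict f R L x)))
    ?_ hM (fun x hx => ?_) (fun y _ => ?_) hm
  · exact (continuous_inr.comp (hf.continuousOn.mapsToRestrict hfL)).sumElim
      (continuous_inl.comp (hf.continuousOn.mapsToRestrict hfR))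
  · rcases hMU hx with h | h
    exacts [⟨.inl ⟨x, h⟩, rfl⟩, ⟨.inr ⟨x, h⟩, rfl⟩]
  · rcases y with y | y <;> rfl

/-- A minimal set in `L ∪ R` which meets both sets is exchanged between them. -/
theorem IsCoordinate.minimal_in_ends [CompactSpace X] {τ : X → ℝ} {φ : ℝ → X}
    (h : IsCoordinate L R τ φ) (hL : L.Nontrivial) (hR : R.Nontrivial) (hLd : IsLocalDendrite L)
    (hRd : IsLocalDendrite R) {f : X → X} (hf : Continuous f) {M : Set X} (hM : IsCompact M)
    (hMU : M ⊆ L ∪ R) (hm : MinimalSystemOn f M) :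
    ((M ⊆ L ∨ M ⊆ R) ∧ (M.Finite ∨ IsCantoroid M ∨ FinUnionDisjCircles M)) ∨
      ((M ∩ L).Nonempty ∧ (M ∩ R).Nonempty ∧
        Cardinal.mk ↥(M ∩ L) = Cardinal.mk ↥(M ∩ R) ∧
        (M.Finite ∨ IsCantoroid M ∨ FinUnionDisjCircles M)) := by
  have hmaps : ∀ x ∈ M, f x ∈ M := fun x hx => hm.2.1 ▸ mem_image_of_mem f hx
  have hLL : ∀ x ∈ L, f x ∈ L → MapsTo f L L := fun x hx hfx =>
    h.mapsTo_left hL hR hLd.2.1.isPreconnected hLd.2.2.1 hf hx hfx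
  have hRR : ∀ x ∈ R, f x ∈ R → MapsTo f R R := fun x hx hfx =>
    h.symm.mapsTo_left hR hL hRd.2.1.isPreconnected hRd.2.2.1 hf hx hfx
  have hRL : ∀ x ∈ R, f x ∈ L → MapsTo f R L := fun x hx hfx =>
    h.mapsTo_left hL hR hRd.2.1.isPreconnected hRd.2.2.1 hf hx hfx
  have hLR : ∀ x ∈ L, f x ∈ R → MapsTo f L R := fun x hx hfx =>
    h.symm.mapsTo_left hR hL hLd.2.1.isPreconnected hLd.2.2.1 hf hx hfx
  have hinv : ∀ A : Set X, IsClosed A → MapsTo f A A → (M ∩ A).Nonempty → M ⊆ A := by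
    intro A hA hfA hAne
    have := hm.2.2 (M ∩ A) inter_subset_left hAne (hM.isClosed.inter hA) (by
      rintro _ ⟨x, ⟨hxM, hxA⟩, rfl⟩
      exact ⟨hmaps x hxM, hfA hxA⟩)
    exact this ▸ inter_subset_right
  by_cases hML : (M ∩ L).Nonempty
  swap
  · have hMR : M ⊆ R := fun x hx => (hMU hx).resolve_left fun hxL => hML ⟨x, hx, hxL⟩
    obtain ⟨x, hx⟩ := hm.1
    have hfR := hRR x (hMR hx) (hMR (hmaps x hx))
    exact .inl ⟨.inr hMR, minimal_in_left hRd hf hfR hM hMR hm⟩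
  by_cases hMR : (M ∩ R).Nonempty
  swap
  · have hML : M ⊆ L := fun x hx => (hMU hx).resolve_right fun hxR => hMR ⟨x, hx, hxR⟩
    obtain ⟨x, hx⟩ := hm.1
    have hfL := hLL x (hML hx) (hML (hmaps x hx))
    exact .inl ⟨.inl hML, minimal_in_left hLd hf hfL hM hML hm⟩
  obtain ⟨x, hxM, hxL⟩ := hML
  obtain ⟨y, hyM, hyR⟩ := hMR
  have hfL : MapsTo f L R := by
    rcases hMU (hmaps x hxM) with h1 | h1
    · exact absurd hyR (disjoint_left.1 h.disjoint
        (hinv L h.isClosed_left (hLL x hxL h1) ⟨x, hxM, hxL⟩ hyM))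
    · exact hLR x hxL h1
  have hfR : MapsTo f R L := by
    rcases hMU (hmaps y hyM) with h1 | h1
    · exact hRL y hyR h1
    · exact absurd (hinv R h.symm.isClosed_left (hRR y hyR h1) ⟨y, hyM, hyR⟩ hxM)
        (disjoint_left.1 h.disjoint hxL)
  refine .inr ⟨⟨x, hxM, hxL⟩, ⟨y, hyM, hyR⟩, le_antisymm ?_ ?_,
    minimal_in_union hLd hRd h.disjoint hf hfL hfR hM hMU hm⟩
  · refine (Cardinal.mk_le_mk_of_subset (t := f '' (M ∩ R)) ?_).trans Cardinal.mk_image_le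
    rintro z ⟨hzM, hzL⟩
    obtain ⟨w, hw, rfl⟩ := (hm.2.1.symm ▸ hzM : z ∈ f '' M)
    refine ⟨w, ⟨hw, (hMU hw).resolve_left fun hwL => ?_⟩, rfl⟩
    exact disjoint_left.1 h.disjoint hzL (hfL hwL)
  · refine (Cardinal.mk_le_mk_of_subset (t := f '' (M ∩ L)) ?_).trans Cardinal.mk_image_le
    rintro z ⟨hzM, hzR⟩
    obtain ⟨w, hw, rfl⟩ := (hm.2.1.symm ▸ hzM : z ∈ f '' M)
    refine ⟨w, ⟨hw, (hMU hw).resolve_right fun hwR => ?_⟩, rfl⟩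
    exact disjoint_left.1 h.disjoint (hfR hwR) hzR

/-- Every set of one of the admissible kinds contained in `L` is minimal for a selfmap of `X`. -/
theorem IsCoordinate.mem_MSpace_left [CompactSpace X] {τ : X → ℝ} {φ : ℝ → X}
    (h : IsCoordinate L R τ φ) (hL : IsLocalDendrite L) {M : Set X} (hML : M ⊆ L)
    (hM : (M.Finite ∧ M.Nonempty) ∨ IsCantoroid M ∨ FinUnionDisjCircles M) : M ∈ MSpace X := by
  have : CompactSpace L := isCompact_iff_compactSpace.1 hL.1
  have : ConnectedSpace L := isConnected_iff_connectedSpace.1 hL.2.1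
  have : LocallyConnectedSpace L := hL.2.2.1
  obtain ⟨γ, hγ, hγL⟩ := hahn_mazurkiewicz L
  have hγ' : Continuous fun t => (γ t : X) := continuous_subtype_val.comp hγ
  have hMγ : M ⊆ (fun t => (γ t : X)) '' Icc 0 1 := by
    intro x hx
    obtain ⟨t, ht, hxt⟩ := (hγL ▸ mem_univ _ : (⟨x, hML hx⟩ : L) ∈ γ '' Icc 0 1)
    exact ⟨t, ht, congrArg Subtype.val hxt⟩
  rcases hM with ⟨h1, h2⟩ | h1 | h1
  · exact finite_mem_MSpace_of_curve hγ' (hMγ.trans (image_subset_range _ _)) h1 h2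
  · exact cantoroid_mem_MSpace_of_curve hγ' hMγ h1
  · exact circles_mem_MSpace h hL hML h1

theorem IsCoordinate.mem_MSpace_interval [CompactSpace X] {τ : X → ℝ} {φ : ℝ → X}
    (h : IsCoordinate L R τ φ) {M : Set X} (hMJ : ∀ x ∈ M, τ x ∈ Ioo (0 : ℝ) 1)
    (hM : (M.Finite ∧ M.Nonempty) ∨ IsCantorSet M) : M ∈ MSpace X := by
  have hMc : IsCompact M ∧ M.Nonempty := by
    rcases hM with ⟨h1, h2⟩ | h1
    exacts [⟨h1.isCompact, h2⟩, ⟨h1.2.1, h1.1⟩]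
  obtain ⟨a, b, ha, hab, hb, hMab⟩ := h.exists_Icc hMc.1 hMc.2 hMJ
  have hγ : Continuous fun t => φ (max a (min b t)) :=
    h.contOn.comp_continuous (by fun_prop) fun t =>
      ⟨ha.trans_le (le_max_left _ _), max_lt (hab.trans_lt hb) ((min_le_left _ _).trans_lt hb)⟩
  have hMγ : M ⊆ (fun t => φ (max a (min b t))) '' Icc 0 1 := by
    intro x hx
    obtain ⟨h1, h2⟩ := hMab x hx
    refine ⟨τ x, h.range x, ?_⟩
    change φ (max a (min b (τ x))) = x
    rw [min_eq_right h2, max_eq_right h1, h.apply_coord x (hMJ x hx)]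
  rcases hM with ⟨h1, h2⟩ | h1
  · exact finite_mem_MSpace_of_curve hγ (hMγ.trans (image_subset_range _ _)) h1 h2
  · exact cantoroid_mem_MSpace_of_curve hγ hMγ h1.isCantoroid

end LocalDendrites

/-! ### The theorem -/

/-- If `X = L ∪ J ∪ R ∈ 𝒞`, `L, R` nondegenerate disjoint local dendrites,
then (1) every `M ∈ 𝓜(X)` satisfies exactly one of the conditions (a), (b), (c), and
(2) every `M ⊆ X` satisfying (a) or (b) belongs to `𝓜(X)`, where:
(a) `M ⊆ J` and `M` is a nonempty finite set or a Cantor set;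
(b) `M ⊆ L` or `M ⊆ R`, and `M` is a nonempty finite set, a cantoroid, or a union of
finitely many pairwise disjoint circles;
(c) `M ⊆ L ∪ R`, `M` meets both `L` and `R`, `M ∩ L` and `M ∩ R` have the same
cardinality, and `M` is a finite set, a cantoroid, or a union of finitely many pairwise
disjoint circles. -/
theorem stmt9 {X : Type*} [TopologicalSpace X] [CompactSpace X] [ConnectedSpace X]
    [TopologicalSpace.MetrizableSpace X] {L J R : Set X} (hC : ClassC L J R)
    (hL : L.Nontrivial) (hR : R.Nontrivial) (hLR : Disjoint L R)
    (hLd : IsLocalDendrite L) (hRd : IsLocalDendrite R) :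
    (∀ M ∈ MSpace X,
      ((M ⊆ J ∧ ((M.Finite ∧ M.Nonempty) ∨ IsCantorSet M)) ∧
        ¬ ((M ⊆ L ∨ M ⊆ R) ∧
            ((M.Finite ∧ M.Nonempty) ∨ IsCantoroid M ∨ FinUnionDisjCircles M)) ∧
        ¬ (M ⊆ L ∪ R ∧ (M ∩ L).Nonempty ∧ (M ∩ R).Nonempty ∧
            Cardinal.mk ↥(M ∩ L) = Cardinal.mk ↥(M ∩ R) ∧
            (M.Finite ∨ IsCantoroid M ∨ FinUnionDisjCircles M))) ∨
      (((M ⊆ L ∨ M ⊆ R) ∧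
          ((M.Finite ∧ M.Nonempty) ∨ IsCantoroid M ∨ FinUnionDisjCircles M)) ∧
        ¬ (M ⊆ J ∧ ((M.Finite ∧ M.Nonempty) ∨ IsCantorSet M)) ∧
        ¬ (M ⊆ L ∪ R ∧ (M ∩ L).Nonempty ∧ (M ∩ R).Nonempty ∧
            Cardinal.mk ↥(M ∩ L) = Cardinal.mk ↥(M ∩ R) ∧
            (M.Finite ∨ IsCantoroid M ∨ FinUnionDisjCircles M))) ∨
      ((M ⊆ L ∪ R ∧ (M ∩ L).Nonempty ∧ (M ∩ R).Nonempty ∧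
          Cardinal.mk ↥(M ∩ L) = Cardinal.mk ↥(M ∩ R) ∧
          (M.Finite ∨ IsCantoroid M ∨ FinUnionDisjCircles M)) ∧
        ¬ (M ⊆ J ∧ ((M.Finite ∧ M.Nonempty) ∨ IsCantorSet M)) ∧
        ¬ ((M ⊆ L ∨ M ⊆ R) ∧
            ((M.Finite ∧ M.Nonempty) ∨ IsCantoroid M ∨ FinUnionDisjCircles M)))) ∧
    (∀ M : Set X,
      ((M ⊆ J ∧ ((M.Finite ∧ M.Nonempty) ∨ IsCantorSet M)) ∨
       ((M ⊆ L ∨ M ⊆ R) ∧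
          ((M.Finite ∧ M.Nonempty) ∨ IsCantoroid M ∨ FinUnionDisjCircles M))) →
      M ∈ MSpace X) := by
  let _ := TopologicalSpace.metrizableSpaceMetric X
  obtain ⟨τ, φ, h, hJ⟩ := hC.exists_coordinate hLR
  constructor
  · rintro M ⟨hMc, f, hf, hm⟩
    have hne : M.Nonempty := hm.1
    have hab : ¬ (M ⊆ J ∧ (M ⊆ L ∨ M ⊆ R)) := by
      rintro ⟨h1, h2 | h2⟩
      · exact hne.ne_empty (subset_empty_iff.1 (hC.disjLJ h2 h1))
      · exact hne.ne_empty (subset_empty_iff.1 (hC.disjRJ h2 h1))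
    have hac : ¬ (M ⊆ J ∧ (M ∩ L).Nonempty) := by
      rintro ⟨h1, x, hxM, hxL⟩
      exact disjoint_left.1 hC.disjLJ hxL (h1 hxM)
    have hbc : ¬ ((M ⊆ L ∨ M ⊆ R) ∧ (M ∩ L).Nonempty ∧ (M ∩ R).Nonempty) := by
      rintro ⟨h1 | h1, ⟨x, hxM, hxL⟩, y, hyM, hyR⟩
      · exact disjoint_left.1 hLR (h1 hyM) hyR
      · exact disjoint_left.1 hLR hxL (h1 hxM)
    rcases h.minimal_subset hL hR hLd hRd hf hMc.isClosed hm with hMJ | hMU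
    · refine .inl ⟨⟨fun x hx => (hJ x).2 (hMJ x hx), ?_⟩, fun hb => ?_, fun hc => ?_⟩
      · exact (h.minimal_in_interval hf hMc hm hMJ).imp_left fun h1 => ⟨h1, hne⟩
      · exact hab ⟨fun x hx => (hJ x).2 (hMJ x hx), hb.1⟩
      · exact hac ⟨fun x hx => (hJ x).2 (hMJ x hx), hc.2.1⟩
    · rcases h.minimal_in_ends hL hR hLd hRd hf hMc hMU hm with ⟨h1, h2⟩ | ⟨h1, h2, h3⟩
      · exact .inr (.inl ⟨⟨h1, h2.imp_left fun h3 => ⟨h3, hne⟩⟩, fun ha => hab ⟨ha.1, h1⟩,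
          fun hc => hbc ⟨h1, hc.2.1, hc.2.2.1⟩⟩)
      · exact .inr (.inr ⟨⟨hMU, h1, h2, h3⟩, fun ha => hac ⟨ha.1, h1⟩,
          fun hb => hbc ⟨hb.1, h1, h2⟩⟩)
  · rintro M (⟨hMJ, hM⟩ | ⟨hML | hMR, hM⟩)
    · exact h.mem_MSpace_interval (fun x hx => (hJ x).1 (hMJ hx)) hM
    · exact h.mem_MSpace_left hLd hML hM
    · exact h.symm.mem_MSpace_left hRd hMR hM
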